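/- There is no nonzero codeword w ∈ Q with Σ_{ν ∈ P¹(F₃₁)} λ(w(ν)) ≤ 4, where λ(n) = min{⟨x,x⟩ : x ∈ R∨, x ≡ n·u (mod R)} for n ∈ ℤ/35ℤ. -/

import Mathlib

/-!
For `x ∈ R∨` the numbers `s = ⟨x, e₁ + e₂⟩` and `t = ⟨x, e₁ - e₂⟩` are integers with
`⟨x, x⟩ = s² / 14 + t² / 10` and `s ≡ t (mod 2)`, and if `x ≡ m u (mod R)` then `s ≡ m (mod 7)` and
`t ≡ -m (mod 5)`. A codeword of weight at most `4` therefore gives integer vectors `s` and `t` on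
the projective line with `∑ s² / 14 + ∑ t² / 10 ≤ 4`. With the skew-symmetric Paley conference
matrix `C`, the residues of `Q` modulo `7` and (after a sign change at `∞`) modulo `5` are
eigenvectors: `C x ≡ 2 x (mod q)`. So `s` and `t` lie in the lattices `Lam 7` and `Lam 5`
(`code_lam`), and the claim is `pair_zero`: such a pair vanishes.

Since `C` is skew, `q` divides inner products on `Lam q` (`Lam.dvd_sum`), so `∑ s² = 7 A` and
`∑ t² = 5 B` with `A + B ≤ 8`. Both lattices have no nonzero vector of norm at most `3 q` (`min7`,
`min5`). If `A ≤ 3` then `s = 0`, so `t` is even, and half of it is too short; likewise for `B ≤ 3`.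
There remains `A = B = 4`, excluded by `no_pair`.

The facts `min5`, `min7` and `no_pair` rest on an exhaustive search evaluated in the kernel.
The group of signed permutations commuting with `C` is doubly transitive on coordinates, so two
nonzero coordinates may be moved to `∞` and `0` and made positive (`exists_act`). With these two
fixed, a depth-first enumeration (`search`) runs through the Gram–Schmidt coordinates of the
vector; a branch is cut when the sum of squares exceeds its budget, by Bessel's inequality
(`cost_le`). Bases are taken in pairs `A`, `B` such that the first halves of their Gram–Schmidt
systems are orthogonal to each other; the first half of one of the two carries at most half of the
norm (`half`), which shrinks the trees. For `no_pair` the vector `(s, t)` of length 64 is enumerated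
along `10 Lam 7` followed by the glue vectors `5 r ++ 7 b` with `r ≡ b (mod 2)`. All pairings with
these vectors are divisible by `70`, so they determine integers.

The enumeration uses only natural numbers, since these are fast in the kernel: the state is one
number `P` that packs, with signed digits in base `2¹⁶`, the offsets of all later levels. The
Gram–Schmidt vectors need not be trusted: `chk` verifies that each one is the combination of basis
vectors its level claims, and `good` verifies orthogonality and weights.
-/

noncomputable section

/-- The projective line over `F₃₁`: `none` is the point `∞`. -/
abbrev P1 : Type := Option (ZMod 31)

/-- The generator `v_μ` of the generalized quadratic residue code `Q` with
parameters `(a,b,d,s,t,e) = (0,0,1,7,3,2)`: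
`v_μ(μ) = 1`, `v_μ(ν) = 7` if `χ(μ-ν) = 1`, `v_μ(ν) = 3` if `χ(μ-ν) = -1`, `v_μ(∞) = 2`. -/
def vgen (μ : ZMod 31) : P1 → ZMod 35 := fun ν =>
  match ν with
  | none => 2
  | some ν' => if ν' = μ then 1 else if IsSquare (μ - ν') then 7 else 3

/-- The generalized quadratic residue code `Q`, a subgroup of `(ℤ/35ℤ)^{P¹(F₃₁)}`. -/
def Qcode : AddSubgroup (P1 → ZMod 35) := AddSubgroup.closure (Set.range vgen)
/-- The generator `u = (34 e₁ + 6 e₂)/35` of the discriminant group `D_R = R∨/R ≅ ℤ/35ℤ`. -/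
def uvec : Fin 2 → ℚ := ![34/35, 6/35]

/-- The bilinear form `⟨x,y⟩ = xᵀ G y` on `ℚ²`, with `G = [[6,1],[1,6]]`. -/
def B2 (x y : Fin 2 → ℚ) : ℚ :=
  6 * x 0 * y 0 + x 0 * y 1 + x 1 * y 0 + 6 * x 1 * y 1

/-- Membership in the lattice `R = ℤ² ⊆ ℚ²`. -/
def inRlat (x : Fin 2 → ℚ) : Prop := ∀ i, ∃ k : ℤ, x i = (k : ℚ)

/-- The dual lattice `R∨ = {x ∈ ℚ² : ⟨x,v⟩ ∈ ℤ for all v ∈ R}`. -/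
def Rdual : Set (Fin 2 → ℚ) :=
  {x | ∀ v : Fin 2 → ℤ, ∃ k : ℤ, B2 x (fun i => (v i : ℚ)) = (k : ℚ)}

/-- The set of square-norms `⟨x,x⟩` of vectors `x ∈ R∨` with `x ≡ n·u (mod R)`;
its least element is `λ(n)`. -/
def normSet (n : ZMod 35) : Set ℚ :=
  {c | ∃ x : Fin 2 → ℚ, x ∈ Rdual ∧
    (∃ m : ℤ, (m : ZMod 35) = n ∧ inRlat (x - (m : ℚ) • uvec)) ∧ c = B2 x x}

namespace QR31

/-! ### Integer vectors as lists -/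

/-- The pairing `∑ᵢ lᵢ zᵢ` of a finite list of integers with a sequence `z`. -/
def ev (z : ℕ → ℤ) : List ℤ → ℤ
  | [] => 0
  | a :: l => a * z 0 + ev (fun i => z (i + 1)) l

/-- Sum of two lists, the shorter one being padded with zeros. -/
def ladd : List ℤ → List ℤ → List ℤ
  | [], m => m
  | a :: l, [] => a :: l
  | a :: l, b :: m => (a + b) :: ladd l m

/-- Scalar multiple of a list. -/
def lsmul (c : ℤ) (l : List ℤ) : List ℤ := l.map (fun a => c * a)

/-- The `ℓ¹` norm of a list. -/
def l1 : List ℤ → ℕ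
  | [] => 0
  | a :: l => a.natAbs + l1 l

/-- The dot product of two lists. -/
def ldot : List ℤ → List ℤ → ℤ
  | a :: l, b :: m => a * b + ldot l m
  | _, _ => 0

lemma ev_ladd (l m : List ℤ) : ∀ z, ev z (ladd l m) = ev z l + ev z m := by
  induction l generalizing m with
  | nil => intro z; simp [ladd, ev]
  | cons a l ih =>
    intro z
    cases m with
    | nil => simp [ladd, ev]
    | cons b m => simp only [ladd, ev, ih]; ring

lemma ev_lsmul (c : ℤ) (l : List ℤ) : ∀ z, ev z (lsmul c l) = c * ev z l := by
  induction l with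
  | nil => intro z; simp [lsmul, ev]
  | cons a l ih =>
    intro z
    have h := ih (fun i => z (i + 1))
    simp only [lsmul, List.map_cons, ev] at h ⊢
    rw [h]; ring

lemma ev_append (l m : List ℤ) :
    ∀ z, ev z (l ++ m) = ev z l + ev (fun i => z (i + l.length)) m := by
  induction l with
  | nil => intro z; simp [ev]
  | cons a l ih =>
    intro z
    simp only [List.cons_append, ev, ih, List.length_cons]
    rw [add_assoc]
    simp only [add_assoc]

lemma ev_eq_sum (l : List ℤ) : ∀ (z : ℕ → ℤ) (n : ℕ), l.length ≤ n →
    ev z l = ∑ i ∈ Finset.range n, l.getD i 0 * z i := by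
  induction l with
  | nil => intro z n _; simp [ev]
  | cons a l ih =>
    intro z n hn
    obtain ⟨n, rfl⟩ : ∃ k, n = k + 1 := ⟨n - 1, by simp at hn; omega⟩
    rw [Finset.sum_range_succ', ev, ih (fun i => z (i + 1)) n (by simpa using hn)]
    simp [add_comm]

lemma ldot_eq_ev (l m : List ℤ) : ldot l m = ev (fun i => m.getD i 0) l := by
  induction l generalizing m with
  | nil => simp [ldot, ev]
  | cons a l ih =>
    cases m with
    | nil =>
      simp only [ldot, ev, List.getD_nil, mul_zero, zero_add]
      rw [ev_eq_sum l _ l.length le_rfl]; simp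
    | cons b m => simp [ldot, ev, ih]

lemma abs_ev_le (l : List ℤ) : ∀ z : ℕ → ℤ, (∀ i, |z i| ≤ 5) → |ev z l| ≤ 5 * (l1 l : ℤ) := by
  induction l with
  | nil => intro z _; simp [ev, l1]
  | cons a l ih =>
    intro z hz
    have h1 := ih (fun i => z (i + 1)) (fun i => hz _)
    have h2 : |a * z 0| ≤ 5 * |a| := by
      rw [abs_mul, mul_comm]; exact mul_le_mul_of_nonneg_right (hz 0) (abs_nonneg a)
    simp only [ev, l1, Nat.cast_add, Int.natCast_natAbs]
    calc _ ≤ |a * z 0| + |ev (fun i => z (i + 1)) l| := abs_add_le _ _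
      _ ≤ _ := by linarith

/-! ### Bessel's inequality -/

/-- Bessel's inequality for a finite orthogonal family, in coordinates; members of norm `0`
contribute `0` because of `x / 0 = 0`. -/
lemma bessel (n : ℕ) (L : List (ℕ → ℚ))
    (hL : L.Pairwise (fun f g => ∑ i ∈ Finset.range n, f i * g i = 0)) : ∀ z : ℕ → ℚ,
    (L.map (fun f => (∑ i ∈ Finset.range n, f i * z i) ^ 2 /
      ∑ i ∈ Finset.range n, f i * f i)).sum ≤ ∑ i ∈ Finset.range n, z i ^ 2 := by
  induction L with
  | nil => intro z; simpa using Finset.sum_nonneg (fun i _ => sq_nonneg (z i))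
  | cons f L ih =>
    intro z
    rw [List.pairwise_cons] at hL
    set N := ∑ i ∈ Finset.range n, f i * f i with hN
    set p := ∑ i ∈ Finset.range n, f i * z i with hp
    have h := ih hL.2 (fun i => z i - p / N * f i)
    have e1 : ∀ g ∈ L, ∑ i ∈ Finset.range n, g i * (z i - p / N * f i) =
        ∑ i ∈ Finset.range n, g i * z i := by
      intro g hg
      have h0 := hL.1 g hg
      have : ∑ i ∈ Finset.range n, g i * (z i - p / N * f i) =
          ∑ i ∈ Finset.range n, g i * z i - p / N * ∑ i ∈ Finset.range n, f i * g i := by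
        rw [Finset.mul_sum, ← Finset.sum_sub_distrib]
        exact Finset.sum_congr rfl (fun i _ => by ring)
      rw [this, h0]; ring
    have e2 : ∑ i ∈ Finset.range n, (z i - p / N * f i) ^ 2 =
        ∑ i ∈ Finset.range n, z i ^ 2 - 2 * (p / N) * p + (p / N) ^ 2 * N := by
      rw [hp, hN, Finset.mul_sum, Finset.mul_sum, ← Finset.sum_sub_distrib,
        ← Finset.sum_add_distrib]
      exact Finset.sum_congr rfl (fun i _ => by ring)
    have e3 : -(2 * (p / N) * p) + (p / N) ^ 2 * N = -(p ^ 2 / N) := by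
      by_cases h0 : N = 0
      · simp [h0]
      · field_simp; ring
    rw [List.map_cons, List.sum_cons]
    have e4 : (L.map (fun g => (∑ i ∈ Finset.range n, g i * (z i - p / N * f i)) ^ 2 /
        ∑ i ∈ Finset.range n, g i * g i)) = L.map (fun g => (∑ i ∈ Finset.range n, g i * z i) ^ 2 /
        ∑ i ∈ Finset.range n, g i * g i) :=
      List.map_congr_left (fun g hg => by rw [e1 g hg])
    rw [e4, e2] at h
    linarith

/-- `∑ w (u·z / N)²` over a list of weighted vectors `(w, u)`; used when `N ∣ u·z`. -/
def cost (z : ℕ → ℤ) (N : ℕ) (U : List (ℕ × List ℤ)) : ℤ :=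
  (U.map (fun p => (p.1 : ℤ) * (ev z p.2 / (N : ℤ)) ^ 2)).sum

lemma cost_append (z : ℕ → ℤ) (N : ℕ) (U V : List (ℕ × List ℤ)) :
    cost z N (U ++ V) = cost z N U + cost z N V := by
  simp [cost]

lemma cost_cons (z : ℕ → ℤ) (N : ℕ) (p : ℕ × List ℤ) (V : List (ℕ × List ℤ)) :
    cost z N (p :: V) = (p.1 : ℤ) * (ev z p.2 / (N : ℤ)) ^ 2 + cost z N V := by
  simp [cost]

lemma cost_nonneg (z : ℕ → ℤ) (N : ℕ) (U : List (ℕ × List ℤ)) : 0 ≤ cost z N U := by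
  apply List.sum_nonneg
  intro x hx
  obtain ⟨p, -, rfl⟩ := List.mem_map.1 hx
  positivity

/-- The precision to which the weights approximate the true Gram–Schmidt norms. -/
abbrev KK : ℕ := 37580963840

/-- Pairwise orthogonality of a list of weighted vectors. -/
def orth : List (ℕ × List ℤ) → Bool
  | [] => true
  | p :: U => U.all (fun r => ldot p.2 r.2 == 0) && orth U

/-- The vectors are pairwise orthogonal, of length at most `n`, and the weight of `u` is at most
`N² K / (q |u|²)`. -/
def good (n N q : ℕ) (U : List (ℕ × List ℤ)) : Bool :=
  orth U && U.all (fun p => p.2.length ≤ n && (p.1 : ℤ) * ldot p.2 p.2 * q ≤ N ^ 2 * KK)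

lemma orth_pairwise (U : List (ℕ × List ℤ)) (h : orth U = true) :
    U.Pairwise (fun p r => ldot p.2 r.2 = 0) := by
  induction U with
  | nil => exact List.Pairwise.nil
  | cons p U ih =>
    simp only [orth, Bool.and_eq_true, List.all_eq_true, beq_iff_eq] at h
    exact List.pairwise_cons.2 ⟨h.1, ih h.2⟩

/-- Bessel's inequality in the weighted integral form that bounds the search. -/
lemma cost_le (n N q : ℕ) (hN : 0 < N) (U : List (ℕ × List ℤ)) (hU : good n N q U = true)
    (z : ℕ → ℤ) (hz : ∀ p ∈ U, (N : ℤ) ∣ ev z p.2) :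
    q * cost z N U ≤ KK * ∑ i ∈ Finset.range n, z i ^ 2 := by
  simp only [good, Bool.and_eq_true, List.all_eq_true, decide_eq_true_eq] at hU
  obtain ⟨ho, hw⟩ := hU
  set F : ℕ × List ℤ → ℕ → ℚ := fun p i => ((p.2.getD i 0 : ℤ) : ℚ) with hF
  have hdot : ∀ p ∈ U, ∀ r ∈ U, ∑ i ∈ Finset.range n, F p i * F r i = (ldot p.2 r.2 : ℤ) := by
    intro p hp r hr
    rw [ldot_eq_ev, ev_eq_sum _ _ n (hw p hp).1]
    push_cast; rfl
  have hev : ∀ p ∈ U, ∑ i ∈ Finset.range n, F p i * (z i : ℚ) = (ev z p.2 : ℤ) := by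
    intro p hp
    rw [ev_eq_sum _ _ n (hw p hp).1]
    push_cast; rfl
  have hpw : (U.map F).Pairwise (fun f g => ∑ i ∈ Finset.range n, f i * g i = 0) := by
    rw [List.pairwise_map]
    refine List.Pairwise.imp_of_mem ?_ (orth_pairwise U ho)
    intro p r hp hr h
    rw [hdot p hp r hr, h]; simp
  have hb := bessel n (U.map F) hpw (fun i => (z i : ℚ))
  rw [List.map_map] at hb
  have key : (q : ℚ) * ((cost z N U : ℤ) : ℚ) ≤ KK * (U.map ((fun f => (∑ i ∈ Finset.range n,
      f i * (z i : ℚ)) ^ 2 / ∑ i ∈ Finset.range n, f i * f i) ∘ F)).sum := by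
    have hc : ((cost z N U : ℤ) : ℚ) =
        (U.map (fun p => (p.1 : ℚ) * ((ev z p.2 / (N : ℤ) : ℤ) : ℚ) ^ 2)).sum := by
      have : ∀ V : List (ℕ × List ℤ), ((cost z N V : ℤ) : ℚ) =
          (V.map (fun p => (p.1 : ℚ) * ((ev z p.2 / (N : ℤ) : ℤ) : ℚ) ^ 2)).sum := by
        intro V
        induction V with
        | nil => simp [cost]
        | cons p V ih => rw [cost_cons]; push_cast; rw [ih]; simp
      exact this U
    rw [hc, ← List.sum_map_mul_left, ← List.sum_map_mul_left]
    apply List.sum_le_sum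
    intro p hp
    simp only [Function.comp]
    rw [hdot p hp p hp, hev p hp]
    obtain ⟨y, hy⟩ := hz p hp
    have hN' : (N : ℤ) ≠ 0 := by positivity
    rw [hy, Int.mul_ediv_cancel_left _ hN']
    have h1 := (hw p hp).2
    have h1' : (p.1 : ℚ) * (ldot p.2 p.2 : ℤ) * q ≤ (N : ℚ) ^ 2 * KK := by exact_mod_cast h1
    have hnn : (0 : ℚ) ≤ (ldot p.2 p.2 : ℤ) := by
      rw [← hdot p hp p hp]
      exact Finset.sum_nonneg (fun i _ => mul_self_nonneg _)
    rcases hnn.eq_or_lt with h0 | h0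
    · -- a vector of norm zero pairs to zero with everything
      have hz0 : ev z p.2 = 0 := by
        have h2 : ∑ i ∈ Finset.range n, F p i * F p i = 0 := by rw [hdot p hp p hp, ← h0]
        rw [Finset.sum_eq_zero_iff_of_nonneg (fun i _ => mul_self_nonneg _)] at h2
        have h3 := hev p hp
        rw [Finset.sum_eq_zero (fun i hi => by rw [mul_self_eq_zero.1 (h2 i hi)]; ring)] at h3
        exact_mod_cast h3.symm
      have : y = 0 := by
        rw [hz0] at hy
        rcases mul_eq_zero.1 hy.symm with h | h
        · exact absurd h hN'
        · exact h
      simp [this]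
    · rw [← mul_div_assoc, le_div_iff₀ h0]
      generalize (KK : ℚ) = κ at h1' ⊢
      have h2 := mul_le_mul_of_nonneg_left h1' (sq_nonneg (y : ℚ))
      push_cast at h2 ⊢
      linarith
  have : (q : ℚ) * ((cost z N U : ℤ) : ℚ) ≤ KK * ∑ i ∈ Finset.range n, (z i : ℚ) ^ 2 :=
    key.trans (mul_le_mul_of_nonneg_left hb (by positivity))
  exact_mod_cast this

/-! ### A certified lattice enumeration -/

/-- The data of one level of the enumeration. The Gram–Schmidt vector of the level, cleared of
denominators, is `u = lead • b + (combination of the earlier basis vectors)`; `w` is the weight of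
`u` in the cost, `col` packs in base `2¹⁶` (with digits in `[-2¹⁵, 2¹⁵)`) the coefficients of `b` in
the later levels, `ncol` packs their negatives, and `zq * lead` exceeds every admissible offset. -/
structure Lv where
  col : ℕ
  ncol : ℕ
  lead : ℕ
  w : ℕ
  zq : ℕ

/-- Test `f` along the half line `y, y + lead, y + 2 lead, …` as long as `y² ≤ lim`. -/
def up (f : ℕ → ℕ → Bool) (col lead w rem lim : ℕ) (fuel : ℕ) : ℕ → ℕ → Bool :=
  Nat.rec (motive := fun _ => ℕ → ℕ → Bool) (fun _ _ => false) (fun _ ih P y =>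
    Bool.rec (motive := fun _ => Bool) true
      (Bool.rec (motive := fun _ => Bool) false (ih (Nat.add P col) (Nat.add y lead))
        (f P (Nat.sub rem (Nat.mul w (Nat.mul y y))))) (Nat.ble (Nat.mul y y) lim)) fuel

/-- One level: all coefficients of the new basis vector that the remaining budget allows. -/
def step (f : ℕ → ℕ → Bool) (col ncol lead w rem t lim Q : ℕ) : Bool :=
  Bool.rec (motive := fun _ => Bool) false
    (up f ncol lead w rem lim 10
      (Nat.add (Nat.add Q (Nat.mul (Nat.div t lead) ncol)) ncol) (Nat.sub lead (Nat.mod t lead)))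
    (up f col lead w rem lim 10 (Nat.add Q (Nat.mul (Nat.div t lead) ncol)) (Nat.mod t lead))

/-- Depth-first enumeration; `true` means that `leaf` holds at every leaf within the budget. -/
def search (leaf : ℕ → ℕ → Bool) (L : List Lv) : ℕ → ℕ → Bool :=
  List.rec (motive := fun _ => ℕ → ℕ → Bool) (fun P rem => leaf P rem) (fun l _ ih P rem =>
    Lv.rec (motive := fun _ => Bool) (fun col ncol lead w zq =>
      step ih col ncol lead w rem
        (Nat.add (Nat.sub (Nat.mul zq lead) 32768) (Nat.mod (Nat.add P 32768) 65536))
        (Nat.div rem w) (Nat.add (Nat.div (Nat.add P 32768) 65536) (Nat.mul zq col))) l) L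

lemma up_true (f : ℕ → ℕ → Bool) (col lead w rem fuel : ℕ) (hw : 0 < w) :
    ∀ P y, up f col lead w rem (rem / w) fuel P y = true →
      ∀ i : ℕ, w * (y + lead * i) ^ 2 ≤ rem →
        f (P + col * i) (rem - w * (y + lead * i) ^ 2) = true := by
  induction fuel with
  | zero => intro P y h; exact absurd h (by simp [up])
  | succ n ih =>
    intro P y h i hi
    have hle : Nat.ble (Nat.mul y y) (rem / w) = true := by
      rw [Nat.ble_eq, Nat.le_div_iff_mul_le hw]
      refine le_trans ?_ hi
      change y * y * w ≤ _
      have : y * y ≤ (y + lead * i) ^ 2 := by nlinarith [Nat.zero_le (lead * i)]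
      nlinarith
    have hs : Bool.rec (motive := fun _ => Bool) false
        (up f col lead w rem (rem / w) n (P + col) (y + lead))
        (f P (rem - w * (y * y))) = true := by
      have h' : Bool.rec (motive := fun _ => Bool) true
          (Bool.rec (motive := fun _ => Bool) false
            (up f col lead w rem (rem / w) n (P + col) (y + lead))
            (f P (rem - w * (y * y)))) (Nat.ble (Nat.mul y y) (rem / w)) = true := h
      rwa [hle] at h'
    rcases hf : f P (rem - w * (y * y)) with _ | _
    · rw [hf] at hs; exact absurd hs (by simp)
    · rw [hf] at hs
      cases i with
      | zero => simpa [pow_two] using hf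
      | succ i =>
        have e : y + lead * (i + 1) = y + lead + lead * i := by ring
        have e' : P + col * (i + 1) = P + col + col * i := by ring
        rw [e, e']
        exact ih _ _ hs i (by rw [← e]; exact hi)

/-- The lowest signed base-`2¹⁶` digit. -/
def dig (x : ℕ) : ℤ := ((x + 32768) % 65536 : ℕ) - 32768

/-- Removal of the lowest signed base-`2¹⁶` digit. -/
def shf (x : ℕ) : ℕ := (x + 32768) / 65536

lemma dig_add_shf (x : ℕ) : (x : ℤ) = dig x + 65536 * shf x := by
  simp only [dig, shf]; omega

/-- The combination of the earlier basis vectors that enters the current Gram–Schmidt vector. The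
state `S` lists the earlier basis vectors with the packed coefficients still to be used. -/
def off : List (ℕ × List ℤ) → List ℤ
  | [] => []
  | p :: S => ladd (lsmul (dig p.1) p.2) (off S)

/-- The state after a level with basis vector `b` has been processed. -/
def push (col : ℕ) (b : List ℤ) (S : List (ℕ × List ℤ)) : List (ℕ × List ℤ) :=
  (col, b) :: S.map (fun p => (shf p.1, p.2))

/-- The packed partial sum `∑ⱼ Wⱼ (bⱼ·z / N)` over the state. -/
def pv (z : ℕ → ℤ) (N : ℕ) : List (ℕ × List ℤ) → ℤ
  | [] => 0
  | p :: S => p.1 * (ev z p.2 / N) + pv z N S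

/-- A vector packed into a single integer, in base `2⁴⁰` with signed digits. -/
def pk : List ℤ → ℤ
  | [] => 0
  | a :: v => a + 1099511627776 * pk v

/-- The packed form of `off S`. -/
def offp : List (ℕ × List ℤ) → ℤ
  | [] => 0
  | p :: S => dig p.1 * pk p.2 + offp S

/-- All entries of `v` are at most `M` in absolute value. -/
def bd (M : ℤ) (v : List ℤ) : Prop := ∀ a ∈ v, |a| ≤ M

/-- `P` agrees with the packed partial sum in the `n` lowest digits. -/
def Inv (z : ℕ → ℤ) (N n : ℕ) (S : List (ℕ × List ℤ)) (P : ℕ) : Prop :=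
  (∀ p ∈ S, (N : ℤ) ∣ ev z p.2) ∧ (∀ p ∈ S, bd 1000 p.2) ∧ ∃ e : ℤ, (P : ℤ) = pv z N S + 65536 ^ n * e

/-- Correctness of the level data `L` with respect to the basis vectors `nb`, for the claimed
weighted Gram–Schmidt vectors `U`; `n` is the number of levels after these. The vector identity
`u = lead • b + off S` is tested in packed form, the size conditions exclude carries. -/
def chk (N n : ℕ) : List Lv → List (List ℤ) → List (ℕ × List ℤ) → List (ℕ × List ℤ) → Bool
  | [], [], [], _ => true
  | l :: L, b :: nb, u :: U, S =>
    decide (u.1 = l.w) && decide (pk u.2 = l.lead * pk b + offp S) &&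
    decide (5 * l1 (ladd u.2 (lsmul (-l.lead) b)) < N * 32768) &&
    decide (0 < l.lead ∧ l.lead ≤ 32768 ∧ 0 < l.w ∧ 32768 ≤ l.zq * l.lead ∧ S.length ≤ 100 ∧
      l.col + l.ncol = 65536 ^ (n + L.length)) &&
    b.all (fun a => decide (a.natAbs ≤ 1000)) && u.2.all (fun a => decide (a.natAbs ≤ 1000000000)) &&
    chk N n L nb U (push l.col b S)
  | _, _, _, _ => false

/-- The state after all levels of `L`. -/
def after : List Lv → List (List ℤ) → List (ℕ × List ℤ) → List (ℕ × List ℤ)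
  | l :: L, b :: nb, S => after L nb (push l.col b S)
  | _, _, S => S

lemma pk_ladd (v w : List ℤ) : pk (ladd v w) = pk v + pk w := by
  induction v generalizing w with
  | nil => simp [ladd, pk]
  | cons a v ih =>
    cases w with
    | nil => simp [ladd, pk]
    | cons b w => simp only [ladd, pk, ih]; ring

lemma pk_lsmul (c : ℤ) (v : List ℤ) : pk (lsmul c v) = c * pk v := by
  induction v with
  | nil => simp [lsmul, pk]
  | cons a v ih =>
    have h : pk (lsmul c (a :: v)) = c * a + 1099511627776 * pk (lsmul c v) := rfl
    rw [h, ih, pk]; ring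

lemma pk_off (S : List (ℕ × List ℤ)) : pk (off S) = offp S := by
  induction S with
  | nil => rfl
  | cons p S ih => rw [off, pk_ladd, pk_lsmul, ih, offp]

lemma bd_ladd {M M' : ℤ} (hM : 0 ≤ M) (hM' : 0 ≤ M') (v w : List ℤ) (hv : bd M v)
    (hw : bd M' w) : bd (M + M') (ladd v w) := by
  induction v generalizing w with
  | nil => intro a ha; have := hw a ha; linarith
  | cons a v ih =>
    cases w with
    | nil => intro c hc; have := hv c hc; linarith
    | cons b w =>
      intro c hc
      rcases List.mem_cons.1 hc with rfl | hc
      · exact (abs_add_le _ _).trans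
          (add_le_add (hv a List.mem_cons_self) (hw b List.mem_cons_self))
      · exact ih w (fun d hd => hv d (List.mem_cons_of_mem _ hd))
          (fun d hd => hw d (List.mem_cons_of_mem _ hd)) c hc

lemma bd_lsmul {M : ℤ} (c C : ℤ) (hc : |c| ≤ C) (v : List ℤ) (hv : bd M v) :
    bd (C * M) (lsmul c v) := by
  intro a ha
  obtain ⟨b, hb, rfl⟩ := List.mem_map.1 ha
  rw [abs_mul]
  exact mul_le_mul hc (hv b hb) (abs_nonneg _) ((abs_nonneg _).trans hc)

lemma abs_dig_le (x : ℕ) : |dig x| ≤ 32768 := by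
  rw [abs_le]; simp only [dig]; omega

lemma bd_off (S : List (ℕ × List ℤ)) (h : ∀ p ∈ S, bd 1000 p.2) :
    bd (S.length * 32768000) (off S) := by
  induction S with
  | nil => intro a ha; simp [off] at ha
  | cons p S ih =>
    have h1 := bd_lsmul (dig p.1) 32768 (abs_dig_le _) p.2 (h p List.mem_cons_self)
    have h2 := ih (fun q hq => h q (List.mem_cons_of_mem _ hq))
    have h3 := bd_ladd (by norm_num) (by positivity) _ _ h1 h2
    rw [off]
    convert h3 using 1
    push_cast [List.length_cons]; ring

lemma ev_eq_zero_of_pk (v : List ℤ) (h : bd 500000000000 v) (h0 : pk v = 0) :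
    ∀ z, ev z v = 0 := by
  induction v with
  | nil => intro z; rfl
  | cons a v ih =>
    intro z
    rw [pk] at h0
    obtain ⟨h1, h2⟩ := abs_le.1 (h a List.mem_cons_self)
    have ha : a = 0 := by omega
    rw [ev, ih (fun b hb => h b (List.mem_cons_of_mem _ hb)) (by omega), ha]; ring

/-- The packed test implies the identity of vectors, here in the form in which it is used. -/
lemma ev_of_pk (b u : List ℤ) (lead : ℕ) (S : List (ℕ × List ℤ)) (hS : ∀ p ∈ S, bd 1000 p.2)
    (hb : bd 1000 b) (hu : bd 1000000000 u) (hl : lead ≤ 32768) (hlen : S.length ≤ 100)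
    (h : pk u = lead * pk b + offp S) (z : ℕ → ℤ) :
    ev z u = lead * ev z b + ev z (off S) := by
  have h0 : pk (ladd (ladd (lsmul lead b) (off S)) (lsmul (-1) u)) = 0 := by
    rw [pk_ladd, pk_ladd, pk_lsmul, pk_lsmul, pk_off, h]; ring
  have h1 := bd_lsmul (lead : ℤ) 32768 (by rw [Nat.abs_cast]; exact_mod_cast hl) b hb
  have h2 := bd_lsmul (-1) 1 (by norm_num) u hu
  have h3 := bd_ladd (by positivity) (by norm_num) _ _
    (bd_ladd (by norm_num) (by positivity) _ _ h1 (bd_off S hS)) h2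
  have h4 : ((S.length : ℤ)) ≤ 100 := by exact_mod_cast hlen
  have h5 := ev_eq_zero_of_pk _ (fun a ha => (h3 a ha).trans (by linarith)) h0 z
  rw [ev_ladd, ev_ladd, ev_lsmul, ev_lsmul] at h5
  linarith

lemma ev_off (z : ℕ → ℤ) (N : ℕ) (S : List (ℕ × List ℤ)) (h : ∀ p ∈ S, (N : ℤ) ∣ ev z p.2) :
    ∃ a : ℤ, ev z (off S) = N * a ∧
      pv z N S = a + 65536 * pv z N (S.map (fun p => (shf p.1, p.2))) := by
  induction S with
  | nil => exact ⟨0, by simp [off, ev], by simp [pv]⟩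
  | cons p S ih =>
    obtain ⟨a, h1, h2⟩ := ih (fun q hq => h q (List.mem_cons_of_mem _ hq))
    obtain ⟨y, hy⟩ := h p List.mem_cons_self
    refine ⟨dig p.1 * (ev z p.2 / N) + a, ?_, ?_⟩
    · rw [off, ev_ladd, ev_lsmul, h1, hy]
      rcases eq_or_ne (N : ℤ) 0 with h0 | h0
      · simp [h0]
      · rw [Int.mul_ediv_cancel_left _ h0]; ring
    · simp only [List.map_cons, pv]
      rw [h2]
      have := dig_add_shf p.1
      linear_combination (ev z p.2 / (N : ℤ)) * this

/-- If the level data are correct and the true vector `z` stays within the budget, then the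
enumeration visits `z`. -/
lemma search_sound (leaf : ℕ → ℕ → Bool) (z : ℕ → ℤ) (hz : ∀ i, |z i| ≤ 5) (N n : ℕ) (hN : 0 < N)
    (L : List Lv) : ∀ (nb : List (List ℤ)) (U S : List (ℕ × List ℤ)) (P rem : ℕ),
    chk N n L nb U S = true → (∀ b ∈ nb, (N : ℤ) ∣ ev z b) → Inv z N (n + L.length) S P →
    search leaf L P rem = true → cost z N U ≤ rem →
    ∃ P' rem' : ℕ, (rem' : ℤ) = rem - cost z N U ∧ Inv z N n (after L nb S) P' ∧
      leaf P' rem' = true := by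
  have hN' : (N : ℤ) ≠ 0 := by positivity
  induction L with
  | nil =>
    intro nb U S P rem hc hb hI hs hr
    match nb, U, hc with
    | [], [], _ => exact ⟨P, rem, by simp [cost], by simpa [after] using hI, hs⟩
  | cons l L ih =>
    intro nb U S P rem hc hb hI hs hr
    match nb, U, hc with
    | b :: nb, u :: U, hc =>
    simp only [chk, Bool.and_eq_true, decide_eq_true_eq] at hc
    obtain ⟨⟨⟨⟨⟨⟨hu1, hu⟩, hl1⟩, hlead, hlead', hw, hzq, hlen, hcol⟩, hbb⟩, hub⟩, hc⟩ := hc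
    obtain ⟨hS, hSb, e, he⟩ := hI
    have hbb' : bd 1000 b := by
      intro a ha
      have := List.all_eq_true.1 hbb a ha
      rw [decide_eq_true_eq] at this
      rw [Int.abs_eq_natAbs]; exact_mod_cast this
    have hub' : bd 1000000000 u.2 := by
      intro a ha
      have := List.all_eq_true.1 hub a ha
      rw [decide_eq_true_eq] at this
      rw [Int.abs_eq_natAbs]; exact_mod_cast this
    have huv := ev_of_pk b u.2 l.lead S hSb hbb' hub' hlead' hlen hu z
    obtain ⟨a, ha, hpv⟩ := ev_off z N S hS
    obtain ⟨d, hd⟩ := hb b List.mem_cons_self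
    set T := pv z N (S.map (fun p => (shf p.1, p.2))) with hT
    have habs : |a| < 32768 := by
      have h1 := abs_ev_le (ladd u.2 (lsmul (-l.lead) b)) z hz
      rw [ev_ladd, ev_lsmul, huv, ha, show (l.lead : ℤ) * ev z b + N * a + -(l.lead : ℤ) * ev z b =
        N * a by ring, abs_mul, Nat.abs_cast] at h1
      have h2 : (5 * l1 (ladd u.2 (lsmul (-l.lead) b)) : ℤ) < N * 32768 := by exact_mod_cast hl1
      have h3 : (N : ℤ) * |a| < N * 32768 := by linarith
      exact lt_of_mul_lt_mul_left h3 (by positivity)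
    have hP : (P : ℤ) = a + 65536 * (T + 65536 ^ (n + L.length) * e) := by
      rw [he, hpv, List.length_cons, ← add_assoc, pow_succ]; ring
    obtain ⟨ha1, ha2⟩ := abs_lt.1 habs
    set m := T + 65536 ^ (n + L.length) * e with hm
    have hmod : (((P + 32768) % 65536 : ℕ) : ℤ) = a + 32768 := by omega
    have hdiv : (((P + 32768) / 65536 : ℕ) : ℤ) = m := by omega
    -- the offset `a`, shifted into the natural numbers
    obtain ⟨t, ht⟩ : ∃ t, t = l.zq * l.lead - 32768 + (P + 32768) % 65536 := ⟨_, rfl⟩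
    have hta : (t : ℤ) = l.zq * l.lead + a := by
      have : (l.zq * l.lead : ℤ) = ((l.zq * l.lead : ℕ) : ℤ) := by push_cast; ring
      rw [this]; omega
    have hstep : step (search leaf L) l.col l.ncol l.lead l.w rem t (rem / l.w)
        ((P + 32768) / 65536 + l.zq * l.col) = true := by rw [ht]; exact hs
    have hts : (t : ℤ) = (t % l.lead : ℕ) + l.lead * (t / l.lead : ℕ) := by
      exact_mod_cast (Nat.mod_add_div t l.lead).symm
    have hrlt : t % l.lead < l.lead := Nat.mod_lt _ hlead
    set r := t % l.lead with hr'
    set q := t / l.lead with hq'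
    set Q := (P + 32768) / 65536 + l.zq * l.col with hQ
    have hup : up (search leaf L) l.col l.lead l.w rem (rem / l.w) 10 (Q + q * l.ncol) r = true ∧
        up (search leaf L) l.ncol l.lead l.w rem (rem / l.w) 10 (Q + q * l.ncol + l.ncol)
          (l.lead - r) = true := by
      have h' : Bool.rec (motive := fun _ => Bool) false
          (up (search leaf L) l.ncol l.lead l.w rem (rem / l.w) 10 (Q + q * l.ncol + l.ncol)
            (l.lead - r))
          (up (search leaf L) l.col l.lead l.w rem (rem / l.w) 10 (Q + q * l.ncol) r) = true :=
        hstep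
      cases hA : up (search leaf L) l.col l.lead l.w rem (rem / l.w) 10 (Q + q * l.ncol) r
      · rw [hA] at h'; exact absurd h' (by simp)
      · rw [hA] at h'; exact ⟨rfl, h'⟩
    -- the true value of `u·z / N`
    have hy : ev z u.2 / (N : ℤ) = l.lead * d + a := by
      rw [huv, ha, hd, show (l.lead : ℤ) * (N * d) + N * a = N * (l.lead * d + a) by
        ring, Int.mul_ediv_cancel_left _ hN']
    have hcost : cost z N (u :: U) = l.w * (l.lead * d + a) ^ 2 + cost z N U := by
      rw [cost_cons, hy, hu1]
    have hnn := cost_nonneg z N U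
    have hcolz : (l.col : ℤ) + l.ncol = 65536 ^ (n + L.length) := by exact_mod_cast hcol
    -- a child with parameters `(P₁, y₁)` that matches the true coefficient leads to the goal
    have fin : ∀ (P₁ y₁ : ℕ), (y₁ : ℤ) ^ 2 = (l.lead * d + a) ^ 2 →
        (∃ e' : ℤ, (P₁ : ℤ) = m + l.col * d + 65536 ^ (n + L.length) * e') →
        (l.w * y₁ ^ 2 ≤ rem → search leaf L P₁ (rem - l.w * y₁ ^ 2) = true) →
        ∃ P' rem' : ℕ, (rem' : ℤ) = rem - cost z N (u :: U) ∧
          Inv z N n (after (l :: L) (b :: nb) S) P' ∧ leaf P' rem' = true := by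
      intro P₁ y₁ hy₁ ⟨e', he'⟩ hs₁
      have hle : l.w * y₁ ^ 2 ≤ rem := by
        have : ((l.w * y₁ ^ 2 : ℕ) : ℤ) ≤ rem := by push_cast; rw [hy₁]; linarith
        exact_mod_cast this
      have hI' : Inv z N (n + L.length) (push l.col b S) P₁ := by
        refine ⟨?_, ?_, e + e', ?_⟩
        · intro p hp
          rcases List.mem_cons.1 hp with rfl | hp
          · exact ⟨d, hd⟩
          · obtain ⟨p', hp', rfl⟩ := List.mem_map.1 hp
            exact hS p' hp'
        · intro p hp
          rcases List.mem_cons.1 hp with rfl | hp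
          · exact hbb'
          · obtain ⟨p', hp', rfl⟩ := List.mem_map.1 hp
            exact hSb p' hp'
        · rw [push, pv, ← hT]
          simp only
          rw [hd, Int.mul_ediv_cancel_left _ hN', he', hm]; ring
      have hsub : ((rem - l.w * y₁ ^ 2 : ℕ) : ℤ) = rem - l.w * (l.lead * d + a) ^ 2 := by
        rw [Nat.cast_sub hle]; push_cast; rw [hy₁]
      obtain ⟨P', rem', h1, h2, h3⟩ := ih nb U (push l.col b S) P₁ (rem - l.w * y₁ ^ 2) hc
        (fun b' hb' => hb b' (List.mem_cons_of_mem _ hb')) hI' (hs₁ hle) (by rw [hsub]; linarith)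
      exact ⟨P', rem', by rw [h1, hsub, hcost]; ring, h2, h3⟩
    have hQz : (Q : ℤ) = m + l.zq * l.col := by rw [hQ]; push_cast; rw [← hdiv]; push_cast; ring
    have hyr : (l.lead : ℤ) * d + a = r + l.lead * (d + q - l.zq) := by linarith
    rcases le_or_gt 0 (d + q - l.zq) with hj | hj
    · obtain ⟨i, hi⟩ := Int.eq_ofNat_of_zero_le hj
      refine fin (Q + q * l.ncol + l.col * i) (r + l.lead * i) ?_ ⟨q, ?_⟩
        (fun h => up_true _ _ _ _ _ _ hw _ _ hup.1 i h)
      · rw [hyr, hi]; push_cast; ring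
      · push_cast; rw [hQz, ← hcolz, ← hi]; ring
    · obtain ⟨i, hi⟩ := Int.eq_ofNat_of_zero_le (show 0 ≤ -(d + q - l.zq) - 1 by omega)
      refine fin (Q + q * l.ncol + l.ncol + l.ncol * i) (l.lead - r + l.lead * i) ?_
        ⟨l.zq - d, ?_⟩ (fun h => up_true _ _ _ _ _ _ hw _ _ hup.2 i h)
      · rw [hyr]; push_cast [hrlt.le]; rw [← hi]; ring
      · push_cast; rw [hQz, ← hi, ← hcolz]; ring

lemma chk_dvd (z : ℕ → ℤ) (N n : ℕ) (L : List Lv) :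
    ∀ (nb : List (List ℤ)) (U S : List (ℕ × List ℤ)),
    chk N n L nb U S = true → (∀ b ∈ nb, (N : ℤ) ∣ ev z b) → (∀ p ∈ S, (N : ℤ) ∣ ev z p.2) →
    (∀ p ∈ S, bd 1000 p.2) → (∀ u ∈ U, (N : ℤ) ∣ ev z u.2) ∧
      (∀ p ∈ after L nb S, (N : ℤ) ∣ ev z p.2) ∧ ∀ p ∈ after L nb S, bd 1000 p.2 := by
  induction L with
  | nil =>
    intro nb U S hc hb hS hSb
    match nb, U, hc with
    | [], [], _ => exact ⟨by simp, hS, hSb⟩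
  | cons l L ih =>
    intro nb U S hc hb hS hSb
    match nb, U, hc with
    | b :: nb, u :: U, hc =>
    simp only [chk, Bool.and_eq_true, decide_eq_true_eq] at hc
    obtain ⟨⟨⟨⟨⟨⟨hu1, hu⟩, hl1⟩, hlead, hlead', hw, hzq, hlen, hcol⟩, hbb⟩, hub⟩, hc⟩ := hc
    have hbb' : bd 1000 b := by
      intro a ha
      have := List.all_eq_true.1 hbb a ha
      rw [decide_eq_true_eq] at this
      rw [Int.abs_eq_natAbs]; exact_mod_cast this
    have hub' : bd 1000000000 u.2 := by
      intro a ha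
      have := List.all_eq_true.1 hub a ha
      rw [decide_eq_true_eq] at this
      rw [Int.abs_eq_natAbs]; exact_mod_cast this
    have huv := ev_of_pk b u.2 l.lead S hSb hbb' hub' hlead' hlen hu z
    obtain ⟨a, ha, -⟩ := ev_off z N S hS
    have hb0 := hb b List.mem_cons_self
    obtain ⟨h1, h2⟩ := ih nb U (push l.col b S) hc
      (fun b' hb' => hb b' (List.mem_cons_of_mem _ hb'))
      (by
        intro p hp
        rcases List.mem_cons.1 hp with rfl | hp
        · exact hb0
        · obtain ⟨p', hp', rfl⟩ := List.mem_map.1 hp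
          exact hS p' hp')
      (by
        intro p hp
        rcases List.mem_cons.1 hp with rfl | hp
        · exact hbb'
        · obtain ⟨p', hp', rfl⟩ := List.mem_map.1 hp
          exact hSb p' hp')
    refine ⟨?_, h2⟩
    intro v hv
    rcases List.mem_cons.1 hv with rfl | hv
    · rw [huv, ha]; exact dvd_add (Dvd.dvd.mul_left hb0 _) (dvd_mul_right _ _)
    · exact h1 v hv

/-- Two successive blocks of levels; before each block the budget is raised. -/
def two (leaf : ℕ → ℕ → Bool) (L1 L2 : List Lv) (e1 e2 P rem : ℕ) : Bool :=
  search (fun P r => search leaf L2 P (Nat.add r e2)) L1 P (Nat.add rem e1)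

/-- Level data for two blocks of levels, with basis vectors and weighted Gram–Schmidt vectors. -/
structure Blocks where
  L1 : List Lv
  L2 : List Lv
  b1 : List (List ℤ)
  b2 : List (List ℤ)
  U1 : List (ℕ × List ℤ)
  U2 : List (ℕ × List ℤ)

/-- Correctness of two blocks of levels, starting from the state `S` and leaving `n` levels. -/
def Blocks.ok (N n : ℕ) (D : Blocks) (S : List (ℕ × List ℤ)) : Bool :=
  chk N (n + D.L2.length) D.L1 D.b1 D.U1 S && chk N n D.L2 D.b2 D.U2 (after D.L1 D.b1 S)

/-- The state after two blocks of levels. -/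
def Blocks.fin (D : Blocks) (S : List (ℕ × List ℤ)) : List (ℕ × List ℤ) :=
  after D.L2 D.b2 (after D.L1 D.b1 S)

lemma Blocks.dvd (z : ℕ → ℤ) (N n : ℕ) (D : Blocks) (S : List (ℕ × List ℤ))
    (h : D.ok N n S = true) (hb : ∀ b ∈ D.b1 ++ D.b2, (N : ℤ) ∣ ev z b)
    (hS : ∀ p ∈ S, (N : ℤ) ∣ ev z p.2) (hSb : ∀ p ∈ S, bd 1000 p.2) :
    (∀ u ∈ D.U1, (N : ℤ) ∣ ev z u.2) ∧ (∀ u ∈ D.U2, (N : ℤ) ∣ ev z u.2) ∧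
      (∀ p ∈ D.fin S, (N : ℤ) ∣ ev z p.2) ∧ ∀ p ∈ D.fin S, bd 1000 p.2 := by
  rw [Blocks.ok, Bool.and_eq_true] at h
  obtain ⟨h1, h2, h3⟩ := chk_dvd z N _ _ _ _ _ h.1
    (fun b hb' => hb b (List.mem_append_left _ hb')) hS hSb
  obtain ⟨h4, h5, h6⟩ := chk_dvd z N _ _ _ _ _ h.2
    (fun b hb' => hb b (List.mem_append_right _ hb')) h2 h3
  exact ⟨h1, h4, h5, h6⟩

lemma two_sound (leaf : ℕ → ℕ → Bool) (z : ℕ → ℤ) (hz : ∀ i, |z i| ≤ 5) (N n : ℕ) (hN : 0 < N)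
    (D : Blocks) (S : List (ℕ × List ℤ)) (e1 e2 P rem : ℕ) (h : D.ok N n S = true)
    (hb : ∀ b ∈ D.b1 ++ D.b2, (N : ℤ) ∣ ev z b)
    (hI : Inv z N (n + D.L2.length + D.L1.length) S P)
    (hs : two leaf D.L1 D.L2 e1 e2 P rem = true) (h1 : cost z N D.U1 ≤ rem + e1)
    (h2 : cost z N D.U1 + cost z N D.U2 ≤ rem + e1 + e2) :
    ∃ P' rem' : ℕ, Inv z N n (D.fin S) P' ∧ leaf P' rem' = true := by
  rw [Blocks.ok, Bool.and_eq_true] at h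
  obtain ⟨P₁, r₁, hr₁, hI₁, hs₁⟩ := search_sound _ z hz N _ hN D.L1 D.b1 D.U1 S P (rem + e1) h.1
    (fun b hb' => hb b (List.mem_append_left _ hb')) hI hs (by push_cast; exact h1)
  obtain ⟨P₂, r₂, -, hI₂, hs₂⟩ := search_sound _ z hz N _ hN D.L2 D.b2 D.U2 _ P₁ (r₁ + e2) h.2
    (fun b hb' => hb b (List.mem_append_right _ hb')) hI₁ hs₁ (by push_cast at hr₁ ⊢; linarith)
  exact ⟨P₂, r₂, hI₂, hs₂⟩

/-- The state after the two coordinate vectors `N • e₀` and `N • e₁` have been processed. -/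
def st0 (N : ℕ) (W : ℕ × ℕ) : List (ℕ × List ℤ) := [(W.2, [0, N]), (W.1, [N])]

/-- The two coordinate vectors, with their weights. -/
def pre (N q : ℕ) : List (ℕ × List ℤ) := [(KK / q, [N]), (KK / q, [0, N])]

/-- The budget left for a vector `z` with `∑ z² ≤ q R`, `z 0 = c.1` and `z 1 = c.2`. -/
def budget (q R : ℕ) (c : ℕ × ℕ) : ℕ :=
  R * KK - KK / q * c.1 ^ 2 - KK / q * c.2 ^ 2

/-- The enumeration after the first two coordinates have been fixed. The first block gets only half
of the budget. -/
def start (leaf : ℕ → ℕ → Bool) (q R : ℕ) (W : ℕ × ℕ) (L1 L2 : List Lv) (c : ℕ × ℕ) : Bool :=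
  two leaf L1 L2 (budget q R c / 2) (budget q R c - budget q R c / 2)
    (c.1 * W.1 + c.2 * W.2) 0

lemma inv_st0 (z : ℕ → ℤ) (N n : ℕ) (hN : 0 < N) (hN' : N ≤ 1000) (W c : ℕ × ℕ) (h0 : z 0 = c.1)
    (h1 : z 1 = c.2) : Inv z N n (st0 N W) (c.1 * W.1 + c.2 * W.2) := by
  have hN0 : (N : ℤ) ≠ 0 := by positivity
  have e1 : ev z [0, (N : ℤ)] = N * c.2 := by simp [ev, h1]
  have e0 : ev z [(N : ℤ)] = N * c.1 := by simp [ev, h0]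
  refine ⟨?_, ?_, 0, ?_⟩
  · intro p hp
    simp only [st0, List.mem_cons, List.not_mem_nil, or_false] at hp
    rcases hp with rfl | rfl
    · exact ⟨_, e1⟩
    · exact ⟨_, e0⟩
  · intro p hp
    simp only [st0, List.mem_cons, List.not_mem_nil, or_false] at hp
    rcases hp with rfl | rfl <;> intro a ha <;> simp at ha
    · rcases ha with rfl | rfl
      · norm_num
      · rw [Nat.abs_cast]; exact_mod_cast hN'
    · rw [ha, Nat.abs_cast]; exact_mod_cast hN'
  · simp only [st0, pv]
    rw [e0, e1, Int.mul_ediv_cancel_left _ hN0, Int.mul_ediv_cancel_left _ hN0]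
    push_cast; ring

lemma start_sound (leaf : ℕ → ℕ → Bool) (z : ℕ → ℤ) (hz : ∀ i, |z i| ≤ 5) (N n q R : ℕ)
    (hN : 0 < N) (hN' : N ≤ 1000) (W c : ℕ × ℕ) (h0 : z 0 = c.1) (h1 : z 1 = c.2) (D : Blocks)
    (h : D.ok N n (st0 N W) = true) (hb : ∀ b ∈ D.b1 ++ D.b2, (N : ℤ) ∣ ev z b)
    (hs : start leaf q R W D.L1 D.L2 c = true)
    (hc1 : cost z N D.U1 ≤ (budget q R c / 2 : ℕ))
    (hc2 : cost z N D.U1 + cost z N D.U2 ≤ budget q R c) :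
    ∃ P' rem' : ℕ, Inv z N n (D.fin (st0 N W)) P' ∧ leaf P' rem' = true := by
  refine two_sound leaf z hz N n hN D _ _ _ _ 0 h hb (inv_st0 z N _ hN hN' W c h0 h1) hs ?_ ?_
  · push_cast at hc1 ⊢; linarith
  · rw [Nat.cast_sub (Nat.div_le_self _ _)]; push_cast at hc2 ⊢; linarith

/-- Bessel's inequality for an orthogonal family that contains the two coordinate vectors. -/
lemma cost_le_budget (z : ℕ → ℤ) (N q R : ℕ) (hN : 0 < N) (hq : 0 < q) (c : ℕ × ℕ)
    (h0 : z 0 = c.1) (h1 : z 1 = c.2) (hs : ∑ i ∈ Finset.range 32, z i ^ 2 ≤ q * R)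
    (U V : List (ℕ × List ℤ)) (hg : good 32 N q (pre N q ++ (U ++ V)) = true)
    (hU : ∀ u ∈ U, (N : ℤ) ∣ ev z u.2) (hV : ∀ u ∈ V, (N : ℤ) ∣ ev z u.2) :
    cost z N U + cost z N V ≤ budget q R c := by
  have hN0 : (N : ℤ) ≠ 0 := by positivity
  have e1 : ev z [0, (N : ℤ)] = N * c.2 := by simp [ev, h1]
  have e0 : ev z [(N : ℤ)] = N * c.1 := by simp [ev, h0]
  have h := cost_le 32 N q hN _ hg z (by
    intro p hp
    rcases List.mem_append.1 hp with hp | hp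
    · simp only [pre, List.mem_cons, List.not_mem_nil, or_false] at hp
      rcases hp with rfl | rfl
      · exact ⟨_, e0⟩
      · exact ⟨_, e1⟩
    · rcases List.mem_append.1 hp with hp | hp
      · exact hU p hp
      · exact hV p hp)
  have hp : cost z N (pre N q) = (KK / q * c.1 ^ 2 + KK / q * c.2 ^ 2 : ℕ) := by
    simp only [pre, cost, List.map_cons, List.map_nil, List.sum_cons, List.sum_nil, e0, e1,
      Int.mul_ediv_cancel_left _ hN0]
    push_cast; ring
  rw [cost_append, cost_append, hp] at h
  have h2 : (q : ℤ) * (((KK / q * c.1 ^ 2 + KK / q * c.2 ^ 2 : ℕ) : ℤ) +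
      (cost z N U + cost z N V)) ≤ q * ((R * KK : ℕ) : ℤ) := by
    refine h.trans ?_
    have := mul_le_mul_of_nonneg_left hs (show (0 : ℤ) ≤ KK by positivity)
    refine this.trans (le_of_eq ?_)
    push_cast; ring
  have h3 := le_of_mul_le_mul_left h2 (by exact_mod_cast hq)
  have hU0 := cost_nonneg z N U
  have hV0 := cost_nonneg z N V
  unfold budget
  omega

/-- Of two orthogonal parts one has at most half of the cost. -/
lemma half (x y : ℤ) (B : ℕ) (h : x + y ≤ B) : x ≤ (B / 2 : ℕ) ∨ y ≤ (B / 2 : ℕ) := by omega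


/-- If the searches for two systems of blocks with complementary first halves end without a leaf,
then there is no vector satisfying the divisibility conditions and the norm bound. -/
lemma no_short (q N R : ℕ) (hq : 0 < q) (hN : 0 < N) (hN' : N ≤ 1000) (W W' c : ℕ × ℕ)
    (D D' : Blocks) (n : ℕ) (h : D.ok N n (st0 N W) = true) (h' : D'.ok N n (st0 N W') = true)
    (g1 : good 32 N q (pre N q ++ (D.U1 ++ D.U2)) = true)
    (g2 : good 32 N q (pre N q ++ (D'.U1 ++ D'.U2)) = true)
    (g3 : good 32 N q (pre N q ++ (D.U1 ++ D'.U1)) = true)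
    (z : ℕ → ℤ) (hz : ∀ i, |z i| ≤ 5) (h0 : z 0 = c.1) (h1 : z 1 = c.2)
    (hs : ∑ i ∈ Finset.range 32, z i ^ 2 ≤ q * R)
    (hb : ∀ b ∈ D.b1 ++ D.b2, (N : ℤ) ∣ ev z b) (hb' : ∀ b ∈ D'.b1 ++ D'.b2, (N : ℤ) ∣ ev z b)
    (r : start (fun _ _ => false) q R W D.L1 D.L2 c = true)
    (r' : start (fun _ _ => false) q R W' D'.L1 D'.L2 c = true) : False := by
  obtain ⟨d1, d2, -⟩ := D.dvd z N n _ h hb (inv_st0 z N 0 hN hN' W c h0 h1).1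
    (inv_st0 z N 0 hN hN' W c h0 h1).2.1
  obtain ⟨d1', d2', -⟩ := D'.dvd z N n _ h' hb' (inv_st0 z N 0 hN hN' W' c h0 h1).1
    (inv_st0 z N 0 hN hN' W' c h0 h1).2.1
  have k := cost_le_budget z N q R hN hq c h0 h1 hs
  rcases half _ _ _ (k _ _ g3 d1 d1') with hh | hh
  · obtain ⟨P, rem, -, hf⟩ := start_sound _ z hz N n q R hN hN' W c h0 h1 D h hb r hh
      (k _ _ g1 d1 d2)
    exact absurd hf (by simp)
  · obtain ⟨P, rem, -, hf⟩ := start_sound _ z hz N n q R hN hN' W' c h0 h1 D' h' hb' r' hh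
      (k _ _ g2 d1' d2')
    exact absurd hf (by simp)

/-- A vector of the last 32 coordinates, viewed in all 64 coordinates. -/
def ext (v : List ℤ) : List ℤ := List.replicate 32 0 ++ v

/-- `ext` on weighted vectors. -/
def extU (U : List (ℕ × List ℤ)) : List (ℕ × List ℤ) := U.map (fun p => (p.1, ext p.2))

lemma ev_replicate (n : ℕ) : ∀ z, ev z (List.replicate n 0) = 0 := by
  induction n with
  | zero => intro z; rfl
  | succ n ih => intro z; rw [List.replicate_succ, ev, ih]; ring

lemma ev_ext (z : ℕ → ℤ) (v : List ℤ) : ev z (ext v) = ev (fun i => z (i + 32)) v := by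
  rw [ext, ev_append, ev_replicate, List.length_replicate, zero_add]

lemma cost_extU (z : ℕ → ℤ) (N : ℕ) (U : List (ℕ × List ℤ)) :
    cost z N (extU U) = cost (fun i => z (i + 32)) N U := by
  simp only [cost, extU, List.map_map, Function.comp_def, ev_ext]

/-- The enumeration in the last 32 coordinates, with budget `2 K + 2 K`. -/
def tail (E : Blocks) (P r : ℕ) : Bool :=
  two (fun _ _ => false) E.L1 E.L2 (2 * KK) (2 * KK) P r

/-- The version of `no_short` for pairs of vectors in dimension `32 + 32`. In each of the two
dimension ranges one of two systems of blocks applies, which gives four searches. -/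
lemma no_long (W : Bool → Bool → ℕ × ℕ) (D : Bool → Bool → Blocks) (E : Bool → Blocks)
    (X1 X2 V1 V2 : Bool → List (ℕ × List ℤ)) (bS : Bool → List (List ℤ)) (c : ℕ × ℕ)
    (hX1 : ∀ a t, (D a t).U1 = X1 a) (hX2 : ∀ a t, (D a t).U2 = X2 a)
    (hV1 : ∀ t, (E t).U1 = extU (V1 t)) (hV2 : ∀ t, (E t).U2 = extU (V2 t))
    (hbS : ∀ a t, (D a t).b1 ++ (D a t).b2 = bS a)
    (hE : ∀ t, 0 + (E t).L2.length + (E t).L1.length = 32)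
    (h : ∀ a t, (D a t).ok 70 32 (st0 70 (W a t)) = true)
    (h' : ∀ a t, (E t).ok 70 0 ((D a t).fin (st0 70 (W a t))) = true)
    (g : ∀ a, good 32 70 7 (pre 70 7 ++ (X1 a ++ X2 a)) = true)
    (g3 : good 32 70 7 (pre 70 7 ++ (X1 false ++ X1 true)) = true)
    (g' : ∀ t, good 32 70 5 (V1 t ++ V2 t) = true)
    (g3' : good 32 70 5 (V1 false ++ V1 true) = true)
    (z : ℕ → ℤ) (hz : ∀ i, |z i| ≤ 5) (h0 : z 0 = c.1) (h1 : z 1 = c.2)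
    (hs : ∑ i ∈ Finset.range 32, z i ^ 2 ≤ 7 * 4)
    (ht : ∑ i ∈ Finset.range 32, z (i + 32) ^ 2 ≤ 5 * 4)
    (hb : ∀ a, ∀ b ∈ bS a, (70 : ℤ) ∣ ev z b)
    (hb' : ∀ t, ∀ b ∈ (E t).b1 ++ (E t).b2, (70 : ℤ) ∣ ev z b)
    (r : ∀ a t, start (tail (E t)) 7 4 (W a t) (D a t).L1 (D a t).L2 c = true) : False := by
  have hb2 : ∀ a t, ∀ b ∈ (D a t).b1 ++ (D a t).b2, ((70 : ℕ) : ℤ) ∣ ev z b := by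
    intro a t; rw [hbS]; exact hb a
  have dS := fun a t => (D a t).dvd z 70 32 _ (h a t) (hb2 a t)
    (inv_st0 z 70 0 (by norm_num) (by norm_num) (W a t) c h0 h1).1
    (inv_st0 z 70 0 (by norm_num) (by norm_num) (W a t) c h0 h1).2.1
  have dT := fun t => (E t).dvd z 70 0 _ (h' false t) (hb' t) (dS false t).2.2.1
    (dS false t).2.2.2
  have dX1 : ∀ a, ∀ u ∈ X1 a, ((70 : ℕ) : ℤ) ∣ ev z u.2 := fun a => hX1 a false ▸ (dS a false).1
  have dX2 : ∀ a, ∀ u ∈ X2 a, ((70 : ℕ) : ℤ) ∣ ev z u.2 := fun a => hX2 a false ▸ (dS a false).2.1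
  have k := cost_le_budget z 70 7 4 (by norm_num) (by norm_num) c h0 h1 hs
  obtain ⟨a, ha⟩ : ∃ a, cost z 70 (X1 a) ≤ (budget 7 4 c / 2 : ℕ) := by
    rcases half _ _ _ (k _ _ g3 (dX1 false) (dX1 true)) with hh | hh
    exacts [⟨_, hh⟩, ⟨_, hh⟩]
  have hd : ∀ V : List (ℕ × List ℤ), (∀ u ∈ extU V, ((70 : ℕ) : ℤ) ∣ ev z u.2) →
      ∀ u ∈ V, ((70 : ℕ) : ℤ) ∣ ev (fun i => z (i + 32)) u.2 := by
    intro V hV u hu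
    have := hV (u.1, ext u.2) (List.mem_map.2 ⟨u, hu, rfl⟩)
    rwa [ev_ext] at this
  have dV1 := fun t => hd (V1 t) (hV1 t ▸ (dT t).1)
  have dV2 := fun t => hd (V2 t) (hV2 t ▸ (dT t).2.1)
  have kT : ∀ V V' : List (ℕ × List ℤ), good 32 70 5 (V ++ V') = true →
      (∀ u ∈ V, ((70 : ℕ) : ℤ) ∣ ev (fun i => z (i + 32)) u.2) →
      (∀ u ∈ V', ((70 : ℕ) : ℤ) ∣ ev (fun i => z (i + 32)) u.2) →
      cost z 70 (extU V) + cost z 70 (extU V') ≤ (4 * KK : ℕ) := by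
    intro V V' hg hV hV'
    rw [cost_extU, cost_extU, ← cost_append]
    have := cost_le 32 70 5 (by norm_num) _ hg (fun i => z (i + 32)) (by
      intro p hp
      rcases List.mem_append.1 hp with hp | hp
      · exact hV p hp
      · exact hV' p hp)
    simp only [KK] at this ⊢
    push_cast at this ⊢
    linarith
  obtain ⟨t, ht'⟩ : ∃ t, cost z 70 (extU (V1 t)) ≤ (2 * KK : ℕ) := by
    rcases half _ _ _ (kT _ _ g3' (dV1 false) (dV1 true)) with hh | hh
    exacts [⟨_, hh⟩, ⟨_, hh⟩]
  obtain ⟨P, rem, hI, hl⟩ := start_sound _ z hz 70 32 7 4 (by norm_num) (by norm_num) (W a t) c h0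
    h1 (D a t) (h a t) (hb2 a t) (r a t) (by rw [hX1]; exact ha)
    (by rw [hX1, hX2]; exact k _ _ (g a) (dX1 a) (dX2 a))
  have hlen := hE t
  obtain ⟨P', rem', -, hf⟩ := two_sound _ z hz 70 0 (by norm_num) (E t) _ _ _ P rem (h' a t)
    (hb' t) (by rw [hlen]; exact hI) hl (by rw [hV1]; push_cast at ht' ⊢; linarith)
    (by
      have := kT _ _ (g' t) (dV1 t) (dV2 t)
      rw [hV1, hV2]; push_cast at this ⊢; linarith)
  exact absurd hf (by simp)

/-! ### Bases and enumeration data -/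

/-- Together with `7 e_∞` and `7 e₀`, a basis of `Lam 7` (choice `A`). -/
def bSA : List (List ℤ) := [
  [2, 3, 0, 0, 1, 0, 0, 1, 0, 0, 0, 0, 1, 1, 1, 0, 1, 0, 1, 0, 0, 0, 1, 1, 1, 1, 0, 1, 1, 0, 1,
  1], [-1, 3, 0, -1, 1, 0, -1, 1, 0, 2, -1, -1, 1, 0, 0, 0, 0, -1, 0, -1, 0, 0, 1, 0, 1, 0, 0, 0,
  0, -1, 1, 1], [3, -2, 1, 1, 0, 1, 1, 0, 1, 1, 1, 1, 0, 0, 0, 1, 0, 1, 0, 1, 1, 1, 0, 0, 0, 0, 1,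
  0, 0, 1, 0, 0], [3, 1, 1, 0, 0, 0, 1, 0, 1, 0, 1, 1, 1, 0, 0, 0, 0, 1, 0, 0, 1, 0, 0, -2, 1, 1,
  0, 1, 1, 0, 1, 1], [1, 3, 0, 0, 1, 1, 0, 0, 0, 1, 0, 1, -1, 0, 0, -1, -1, 1, 0, -1, 1, 0, 1, -1,
  1, 0, 1, 0, 1, -1, 1, 1], [-3, -1, 0, -1, -1, -1, 0, 0, 0, 0, -1, 0, 0, -1, 0, 0, 2, -1, -1, 0,
  -1, -1, 0, -1, -1, -1, -1, 0, 0, 0, -1, 0], [2, -2, 0, 0, -1, -1, 1, 0, 0, 0, 0, -1, -1, 1, 1,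
  1, 2, 0, 0, 2, 0, 1, 0, 1, -1, 0, 0, 0, 0, 1, 0, 0], [1, -3, 0, 0, -1, 1, 0, -1, 1, 0, 0, -2, 0,
  0, -1, 1, 0, 0, 0, 1, 1, 1, -1, -1, -1, 0, 0, 0, -1, 1, 0, 0], [1, 3, -1, 0, 1, 1, 0, -1, 0, -1,
  -1, 0, 0, 0, -1, 0, -1, 1, -1, -1, 0, -1, 0, -1, 0, 1, 0, 1, -1, -1, -1, 0], [-1, -1, 0, 1, -1,
  0, 1, 1, 0, 1, 2, 0, -2, 0, 0, -1, 0, 0, 0, 1, 0, 1, 1, 1, 0, -1, 2, -1, 1, 0, -1, 0], [1, 3,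
  -1, 0, 1, 1, 0, -1, 1, 0, -1, 1, -1, 0, 1, 0, 1, 1, 0, 1, 0, 0, 1, 0, -1, 1, 0, 0, -1, 0, 1, 1],
  [2, 2, -1, 1, 0, 0, 1, 0, 1, 0, 0, 0, -1, 0, 0, 0, -2, 1, -1, 2, 1, 0, 0, -1, 0, 1, 0, 0, 0, -1,
  0, 1], [3, 3, 0, 1, 1, 2, 1, 2, 0, -1, 0, 0, 0, 1, -1, 0, -1, 1, 0, 0, 1, -1, 1, -1, 1, 1, 0, 1,
  0, 0, 0, 1], [-1, -2, -1, 0, -1, -1, 0, 2, -2, 1, 0, -1, 0, 0, 0, 0, 1, -1, 0, 0, -2, 0, 1, 0,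
  0, -1, -1, 0, 0, 0, 0, -1], [-1, -1, 0, 0, -1, 1, -1, 1, -1, 2, 0, -2, 1, 0, 0, 1, 1, -1, 1, 2,
  0, 0, 1, 0, 0, -1, 0, 0, 1, 0, 0, 1], [-2, -2, 0, -1, 0, 0, -1, 0, 0, 1, -1, 0, 0, -1, 0, 0, 0,
  0, 1, 0, 0, 1, 0, 0, 0, -1, 2, -2, -1, 1, 1, -1], [3, -2, 0, 0, -1, 0, 1, -1, 0, 2, 0, -1, 0,
  -1, -1, 0, 0, -1, -1, 0, -1, 1, 0, 1, -1, -2, 0, 0, 0, 0, -1, 1], [-1, 1, 0, -1, 1, 0, 0, 1, 0,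
  2, -2, -1, 1, -1, 1, 0, 1, -1, 1, 1, 0, 0, 0, 1, 0, -1, 0, 0, 2, 0, 0, -1], [-2, 2, 0, -1, 0,
  -1, 1, 1, -2, 0, 0, 0, -2, -1, 0, -1, -1, 0, 0, 0, 0, 0, 1, 0, 0, -1, -1, 0, 1, 1, 0, 0], [2,
  -2, -1, 0, 0, -1, 1, -1, -1, -1, -1, 1, -1, -1, 0, -2, 0, 0, 0, 1, 1, 0, 0, -2, 0, 0, 0, 0, 0,
  0, 0, 0], [3, 1, 2, 1, -1, 0, 1, 1, -1, 0, 0, 1, 1, -1, 0, 0, 0, 0, 0, 2, -1, 0, 0, -1, 1, 0, 0,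
  0, 0, 2, -1, -1], [-2, 0, 0, 0, 0, 1, 1, 2, -1, 0, 0, 0, 1, 0, -1, 0, 0, 0, 1, 1, 0, 2, 0, 1, 1,
  1, 0, 0, 0, 2, -1, -1], [-3, 3, 1, 0, 2, -1, -1, 0, -2, -1, -1, -1, -1, 1, 0, 1, 1, -1, 0, 0, 0,
  -1, 0, 1, 0, 1, 0, 0, -1, 1, 0, 0], [-3, 3, -1, 0, 0, 0, 0, -1, 1, -1, 0, 0, 1, -1, 0, -2, -1,
  0, 0, 2, 0, 1, 0, -2, 0, -1, 0, 1, 1, 1, 0, 0], [-1, 2, 0, 1, 0, 0, 0, 0, -1, 0, 2, 1, 0, 1, -1,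
  0, -1, 1, -2, 0, 2, 1, 0, 1, 0, 0, 0, 0, 0, 0, -1, -1], [-1, -1, 0, 0, 0, -1, 2, 1, -1, 0, 0, 0,
  0, 2, 0, 0, 1, -1, 0, 2, -1, 0, 0, 1, 0, 0, -1, 0, 1, 2, 0, -1], [1, 3, -1, 1, -1, 1, -2, 0, 0,
  -1, -1, -1, 0, 0, 3, 0, 0, 0, 0, 0, 0, 0, -1, 1, -1, 0, 0, 0, 1, 0, 1, 0], [-2, -1, -1, 0, 0, 0,
  0, 1, 1, 2, -1, 0, 0, 0, 1, 0, -1, 0, 0, 0, 1, 1, 0, 2, 0, 1, 1, 1, 0, 0, 0, 2], [0, -3, -3, 0,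
  1, 1, -1, -1, -1, 0, 1, 0, 0, 0, -1, -1, 0, -1, -1, -1, 0, 0, 0, 1, 0, 1, 0, 2, 0, 0, 0, 0],
  [-1, 2, 1, 1, -1, 2, 2, -1, 0, 0, 0, -1, -2, 0, 0, 1, 0, 0, -1, 0, 0, 0, 0, 0, -1, 0, 1, 1, 1,
  0, 0, 0]]

/-- Weighted Gram–Schmidt vectors of the basis `10 • bSA`, block 1. -/
def uSA1 : List (ℕ × List ℤ) := [
  (357913941, [0, 0, 0, 0, 70, 0, 0, 70, 0, 0, 0, 0, 70, 70, 70, 0, 70, 0, 70, 0, 0, 0, 70, 70,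
  70, 70, 0, 70, 70, 0, 70, 70]), (1619520, [0, 0, 0, -1050, 560, 0, -1050, 560, 0, 2100, -1050,
  -1050, 560, -490, -490, 0, -490, -1050, -490, -1050, 0, 0, 560, -490, 560, -490, 0, -490, -490,
  -1050, 560, 560]), (404880, [0, 0, 2210, 1460, 400, 2210, 1460, 400, 2210, 3710, 1460, 1460,
  400, -350, -350, 2210, -350, 1460, -350, 1460, 2210, 2210, 400, -350, 400, -350, 2210, -350,
  -350, 1460, 400, 400]), (89478485, [0, 0, 80, -70, -50, -70, 80, -50, 80, -70, 80, 80, 100, -50,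
  -50, -70, -50, 80, -50, -70, 80, -70, -50, -350, 100, 100, -70, 100, 100, -70, 100, 100]),
  (447392426, [0, 0, -40, 20, 50, 60, -10, -20, -40, 0, -10, 60, -120, 10, 10, -80, -60, 60, 10,
  -50, 30, -10, 50, 0, 20, -20, 60, -20, 50, -50, 20, 20]), (134217728, [0, 0, 20, -50, -40, -10,
  50, 30, 20, 70, -90, 120, -80, -80, 60, -10, 270, -20, -80, 20, -50, -80, 100, -70, -80, -120,
  -10, 20, 90, 20, -80, 60]), (313174698, [0, 0, -20, -50, -60, -90, 50, -30, -20, 30, -10, -120,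
  -120, 80, 40, 10, 30, 20, -20, 80, 50, 80, 0, -30, -20, 20, 10, -20, 10, -20, 80, 40]),
  (9395240960, [0, 0, -10, 0, 0, 30, -10, -10, 10, -10, -10, -20, 0, 0, -10, 0, 10, 0, 10, 0, 10,
  0, 0, -10, -10, 0, 0, 10, 0, 10, 0, 10]), (782936746, [0, 0, -30, 0, 50, 0, 40, -20, 0, 0, -50,
  0, 0, 30, -10, 50, 0, 50, -70, 0, -10, -20, 20, 0, 0, 60, 10, 50, -60, -40, -50, 0]),
  (195734186, [0, 0, -50, 40, -70, 0, 60, 100, 40, 0, 150, -120, 0, -10, -90, -90, 0, -50, -30,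
  20, -50, 0, 80, 0, 40, 20, 110, 30, 40, -60, -150, 40]), (587202560, [0, 0, -50, 0, 10, 0, -20,
  -20, 80, 0, 30, 40, 0, -50, 30, -50, 0, -10, 10, 60, -50, 0, 40, 0, -40, 60, -10, -50, -80, -20,
  50, 40]), (2348810240, [0, 0, -20, 30, 0, 0, 0, 30, 10, 0, -30, 0, 0, -10, 10, 10, -40, -10,
  -10, 50, 20, -20, -10, 0, 0, -10, -30, 0, 30, -10, -10, 20]), (9395240960, [0, 0, 10, 0, 0, 10,
  10, 30, -10, -10, 0, 0, -10, 10, -10, 0, 0, 0, 0, 0, 0, -10, 10, -10, 0, 0, -10, -10, -20, 10,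
  10, 0]), (587202560, [0, 0, -90, 50, -30, 20, 0, 10, -70, 60, 20, 0, 20, -20, 0, 20, 0, 40, 20,
  10, -70, 40, 30, -60, 0, -10, -40, 50, 10, 10, 40, -60]), (195734186, [0, 0, 90, -50, -50, 60,
  -80, -90, -170, 20, 60, 0, 60, 20, 0, 60, 0, 40, 60, 150, -10, -120, 50, -20, 0, 10, 40, -50,
  -10, -90, -40, 60])]

/-- Weighted Gram–Schmidt vectors of the basis `10 • bSA`, block 2. -/
def uSA2 : List (ℕ × List ℤ) := [
  (9395240960, [0, 0, -10, -10, 0, -10, 0, 10, 0, -10, -20, 0, 10, -10, 0, 0, 0, 10, 10, 10, 0, 0,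
  0, -10, 10, 0, 30, -10, 0, 10, 0, -10]), (19096018, [0, 0, 30, -80, -50, 0, 580, -240, -200,
  -40, -210, 0, 240, -130, -270, -150, -240, 70, 30, 0, -310, 120, 20, 280, -60, -320, 10, 70,
  -40, 180, 170, 540]), (6547206, [0, 0, 360, -550, 630, 410, 810, -10, 60, 340, -60, -410, 10,
  -330, 40, -570, -10, 20, 360, 410, -30, -200, -170, 80, -310, 260, -290, 20, 340, -300, -10,
  -900]), (9256395, [0, 0, 10, -550, 280, -290, -240, -10, -290, -10, 290, -60, -340, -680, 40,
  130, -360, 20, 10, 60, 320, 150, 530, 80, 40, 260, -290, 370, -10, 750, -360, 150]), (3483589,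
  [0, 0, -120, 800, 410, -290, 270, -460, -870, 120, -290, 430, 310, 40, -190, -980, 550, -1110,
  170, 440, 1090, 520, 20, -380, 390, 70, 0, 200, -750, -10, -320, -60]), (6314006, [0, 0, 870,
  400, -260, 320, -330, -230, 30, 60, -610, -250, -310, 20, 370, -490, -190, -90, -380, 220, -850,
  260, 10, -190, 660, 500, 0, 100, 90, 460, -160, -30]), (53382050, [0, 0, -110, -240, -140, 160,
  -30, 110, -70, 20, -70, 210, 30, 60, -170, -30, 70, 50, -20, 20, 10, 300, -130, 70, 60, 220,
  -160, -180, 110, -60, -160, 70]), (142352135, [0, 0, 0, 90, 190, -60, -30, 0, -70, 20, 40, -10,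
  -80, -50, -170, 80, 70, -60, -20, 20, -100, -30, -130, -40, -50, 110, 60, -70, 110, 50, 60,
  70]), (1565873493, [0, 0, 0, -30, 50, 0, -30, 0, 10, -20, 20, 10, 20, 50, -10, -20, -10, 0, -40,
  40, -20, 30, 10, -20, -10, -50, 0, 10, 10, 10, 0, -10]), (4697620480, [0, 0, 0, 10, -10, 0, -10,
  0, -10, 0, 0, -10, 20, -10, -10, -20, 10, 20, -40, 0, 20, -10, 10, 20, -10, 10, 0, -10, 10, 10,
  20, -10]), (4697620480, [0, 0, -20, -10, -10, 0, 10, -20, 10, 20, 0, 10, 0, 30, -10, 0, -10,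
  -20, 0, 0, 0, -30, 10, 0, 10, 10, 0, -10, 10, 30, 0, -10]), (4697620480, [0, 0, -10, -10, 0, 20,
  10, 10, -20, 0, 10, 0, 10, 0, 40, 0, -10, -20, -20, -10, 0, 0, -20, -10, -20, 10, 20, 0, 0, 10,
  0, 10]), (1565873493, [0, 0, 10, -10, -20, -20, -30, 30, 0, 40, -10, 20, -10, 20, -20, -40, -10,
  20, 20, 10, 0, -20, -40, 10, -40, 10, 20, 60, -20, 10, 0, 10]), (3131746986, [0, 0, -10, -20,
  -10, 20, 0, 0, 0, -10, 10, 10, -20, -20, -10, 10, 10, -20, -20, 20, 0, -10, -20, 20, 40, -10,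
  10, 30, -10, -10, 30, -10]), (9395240960, [0, 0, 10, 0, -10, 0, 0, 0, 0, -10, -10, 10, 0, 0,
  -10, 10, -10, -20, 0, 0, 0, 10, 20, 0, -20, 10, 10, 10, 10, -10, 10, -10])]

/-- Together with `5 e_∞` and `5 e₀`, a basis of `Lam 5` (choice `A`). -/
def bFA : List (List ℤ) := [
  [-2, -2, 0, 0, 0, -1, 0, -1, 0, 0, -1, 0, 0, 0, 1, 0, 0, -1, 1, 0, -1, 1, 1, 0, 0, -1, 0, 0, 0,
  0, -1, 1], [2, 2, 0, 0, -1, 0, 1, 0, 0, 0, 0, 0, 0, 0, 1, 0, 0, 1, 0, 0, 1, 1, 0, -1, 1, -1, -1,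
  0, 0, 0, -1, 1], [-2, -2, 0, 0, 0, 1, 0, 1, -1, -1, 0, -1, -1, -1, 0, 0, 1, 0, 0, 0, 0, 0, 0, 1,
  0, 0, 0, -1, 0, -1, 1, 0], [-2, -1, 0, 0, -1, -2, 0, -1, 1, 0, 0, 0, 1, 0, 0, 0, 0, 1, 0, -1, 0,
  0, 0, -1, 0, -1, -1, 0, 1, 0, 0, 1], [0, 2, 0, 0, 0, -1, -1, 0, 0, -1, -1, 0, 0, 0, -1, 0, 1,
  -1, 1, 0, -1, 0, 1, 1, 1, 0, -1, 0, 1, -1, 1, 0], [-2, 0, -1, 0, 0, 1, 0, 2, -1, 0, 0, -1, 0, 1,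
  1, 0, 1, 1, 0, 0, 1, 0, 0, 1, 1, 0, -1, 0, 0, 0, 0, 0], [2, 1, 0, 1, 0, 0, 0, 0, 1, 1, -1, 0, 1,
  1, 1, 0, 0, 0, 1, 0, -1, 0, 0, 1, -1, -1, 1, 0, -1, 0, -1, 0], [-2, -1, 1, 0, 0, 0, -1, 0, 0,
  -1, 0, 1, 1, 0, -1, -1, 0, 0, -1, 0, 0, 0, -1, -1, 0, 1, 0, 1, 0, -1, 1, -1], [1, 2, 0, 0, 0,
  -1, -1, -1, -1, 0, 0, 0, 0, 0, 1, 0, 0, 0, -1, 0, 0, 2, 0, -1, -1, -1, 0, 0, 0, 1, -1, 0], [-2,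
  1, -1, -1, 0, -1, -1, 0, -1, -1, -1, -1, 0, 0, 0, -1, 0, -1, 0, -1, -1, -1, 0, 0, 0, 0, -1, 0,
  0, -1, 0, 0], [-2, -1, 0, -1, -1, 0, -1, -1, -1, -1, 0, 0, 0, -1, 0, -1, 0, -1, -1, -1, 0, 0, 0,
  0, -1, 0, 0, -1, 0, 0, 1, -1], [2, 1, -1, 0, 0, 0, 0, 0, 0, 1, -1, 1, 1, 0, 1, -1, 0, -1, 1, -1,
  -1, 1, 1, 0, 0, 1, 0, 1, 0, 0, 0, 0], [-2, 2, -1, 1, 1, 1, 0, 2, 0, 0, 0, -1, 0, 0, 0, -1, 0, 0,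
  0, 0, -1, -1, 0, 0, 0, 0, 0, 1, -1, -1, 1, -1], [2, 0, 0, 0, 0, 0, 1, -1, 0, 1, 0, 2, 1, 0, 0,
  0, 0, -1, 1, 0, 1, 1, 0, 0, -1, 0, 1, 0, -1, 0, -1, 0], [2, 2, 1, 0, 0, 0, 0, 0, 0, 0, 1, 0, 1,
  0, 1, 0, 0, -1, 1, 0, 1, 0, 0, 0, -1, -1, 0, -1, 0, 1, -1, 0], [-2, 2, -1, 1, 0, 0, 0, 1, 0, 1,
  0, -1, -1, 1, -1, 0, -1, 1, -1, 0, -1, -1, 0, 0, -1, 0, 1, 0, 0, 1, 1, 0], [0, 2, 0, 0, 0, -1,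
  0, 1, 0, 0, 0, -1, -1, 1, -1, 0, 1, 0, 1, 1, 1, -1, 0, 0, 0, -1, -1, -1, 1, -1, 0, 0], [1, -1,
  0, 0, -1, 0, 0, -1, -1, 0, 2, 0, 1, -2, 0, 0, 0, 0, 0, -1, 1, 1, 0, -1, 0, -1, 0, 0, 1, 0, 0,
  0], [0, 2, -1, 0, 0, 0, 0, 0, 0, 0, 1, 0, 1, 0, 0, 1, 0, 1, -1, 1, 1, -1, 1, 0, 1, 1, -1, 1, 1,
  0, 1, 0], [1, 2, 0, 0, 0, 1, -1, 1, -1, 0, 0, 0, 0, 0, 0, -1, 0, 0, 1, 0, -1, -1, -1, 0, -1, 1,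
  0, -1, -1, -1, 1, 0], [1, -1, 0, 1, 0, 0, 0, 0, 2, 1, 0, -1, 0, 1, 0, 1, 0, 2, 1, 0, 0, 1, 0,
  -1, 0, 0, -1, 0, 0, 1, 0, 0], [-2, 1, 0, 1, -1, -1, 0, -1, -1, -1, 0, 0, 1, 0, 0, 0, 0, 0, 0, 1,
  0, 0, 0, -1, 0, -1, 1, 0, -2, 0, 0, 0], [-2, 0, 1, 1, -1, -1, -1, 0, 0, 0, 0, 1, 0, -1, -1, 0,
  0, 0, 0, -1, 0, -1, 0, 1, 0, 0, 0, 0, 0, 0, 1, -2], [0, -2, 1, 0, 0, -1, 0, -1, 0, 0, 0, 0, 0,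
  1, 1, 0, 1, 0, 1, -1, 0, 0, 0, 0, 0, -1, -1, 1, 2, 0, -1, 0], [0, -2, 0, -1, 0, 1, 0, 1, 0, -1,
  1, -1, -1, -1, -1, 1, 0, 1, 0, 1, 1, 1, 0, 0, 0, 0, -1, 0, 0, 0, 0, 1], [2, 0, 0, 1, 0, 1, 0, 0,
  0, 0, -1, 0, -1, -1, 0, 0, 0, -1, 0, 0, -2, 0, -1, 0, 1, -1, -1, 0, 0, -1, 0, 1], [-1, -1, -1,
  -1, 0, -1, -1, 0, 1, 0, 1, 1, 0, 1, 0, 1, 1, 1, -1, 0, 0, 0, 1, 0, 1, -1, -1, 0, 0, 1, 0, 1],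
  [2, 0, 1, 0, 0, -1, 0, 0, 1, 0, 0, -2, 1, 0, 0, -1, 0, 0, 0, 1, 0, -1, -1, -1, 0, 0, -1, 0, -1,
  -1, 0, 0], [2, 0, 1, 0, 1, -1, 0, -1, 0, 0, 0, 1, 0, -1, 0, -1, 0, 1, 0, 0, 0, 1, 0, -2, 0, -1,
  -1, 1, 2, 0, -1, 0], [0, 2, 1, 0, 0, 0, 0, 0, -1, 0, -2, 0, -1, 0, 0, 0, 1, -1, 0, 0, 0, 1, 1,
  -1, 1, 0, 0, 0, -1, -1, 1, 0]]

/-- Weighted Gram–Schmidt vectors of the basis `bFA`, block 1. -/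
def uFA1 : List (ℕ × List ℤ) := [
  (626349397, [0, 0, 0, 0, 0, -5, 0, -5, 0, 0, -5, 0, 0, 0, 5, 0, 0, -5, 5, 0, -5, 5, 5, 0, 0, -5,
  0, 0, 0, 0, -5, 5]), (1043915662, [0, 0, 0, 0, -4, 1, 4, 1, 0, 0, 1, 0, 0, 0, 3, 0, 0, 5, -1, 0,
  5, 3, -1, -4, 4, -3, -4, 0, 0, 0, -3, 3]), (208783132, [0, 0, 0, 0, -1, 7, 1, 7, -9, -9, -2, -9,
  -9, -9, 3, 0, 9, -1, 2, 0, -1, 3, 2, 8, 1, -3, -1, -9, 0, -9, 6, 3]), (86393020, [0, 0, 0, 0,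
  -9, -22, -6, -7, 9, -6, 2, -6, 9, -6, -8, 0, 6, 11, -2, -15, -4, -8, -2, -3, -6, -7, -9, -6, 15,
  -6, 14, 7]), (1062209, [0, 0, 0, 0, -16, -23, -59, 52, 16, -59, -77, 86, 16, 86, -127, 0, 59,
  -61, 77, 70, 9, 18, 77, 43, 231, 52, -161, 86, 75, -59, 41, -52]), (1555761, [0, 0, -122, 0, 45,
  -23, -59, 113, -45, 63, -16, -97, 77, 147, 117, 0, 59, 61, 16, -52, 9, -43, 16, 104, -13, -9,
  -39, 25, 14, 63, -20, 9]), (650009, [0, 0, 95, 198, -117, 95, 50, 67, 216, 54, -119, 52, 121,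
  60, -27, 0, 49, 101, 119, 34, -63, -29, -79, 130, -41, -135, 75, -43, -131, -144, -25, -63]),
  (74739, [0, 0, 299, -10, 59, 7, -442, 91, -356, -454, -227, 136, 513, 112, 373, -584, 145, -11,
  -357, -102, -103, 379, -347, -390, -169, 113, 67, 421, -191, -444, 75, -103]), (407925, [0, 0,
  3, 141, -57, -70, -254, -49, -89, 30, 15, 34, -87, 28, -122, 141, 108, 69, -161, 118, 46, 310,
  -15, 46, -114, -187, -55, -110, 24, 176, -53, -241]), (2926866, [0, 0, -76, -41, -54, -10, -21,
  -7, -28, -11, -59, -41, -43, 4, -48, -41, -61, -36, -23, -29, -24, -78, -48, -24, -1, -42, -69,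
  -31, -73, -36, -84, -65]), (9395240960, [0, 0, 0, -1, -2, 1, 0, -1, 0, 0, 0, 1, 1, 0, 1, -1, 0,
  -1, 0, -1, 1, 0, 1, 1, 0, 0, 0, -1, 0, 1, 1, -1]), (223696213, [0, 0, -12, 5, -2, 2, 3, 5, 0,
  11, -3, 5, -1, -10, -2, -3, 1, 2, 3, -9, -6, 10, 2, -4, -3, 8, -3, 3, 1, -2, 2, -3]), (89478485,
  [0, 0, -5, 12, 5, 2, 3, 5, 7, -3, 11, -9, -1, -3, 5, -10, -6, -5, -4, 5, -6, -4, 16, -11, 4,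
  -20, -3, 10, -6, 5, 16, -10]), (9395240960, [0, 0, -1, 0, 1, -1, 1, 0, -1, 0, 1, 1, 1, 0, -1, 0,
  1, -1, 1, 0, 2, 0, 0, 0, -1, -1, 0, 0, -1, -1, 0, 0]), (10616091, [0, 0, 43, 13, 7, 10, -22, 46,
  9, -2, 32, -12, 24, -27, 9, -7, -7, -37, 49, -8, 2, -6, -16, -23, -17, 6, -38, -27, 29, 23, -38,
  -15]), (14476488, [0, 0, 8, 23, -33, -5, 11, 36, -34, 1, -16, 6, -12, 43, -34, -26, -26, -11, 5,
  4, -1, 3, 8, -18, -21, -3, 19, -16, 15, 18, 19, 37])]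

/-- Weighted Gram–Schmidt vectors of the basis `bFA`, block 2. -/
def uFA2 : List (ℕ × List ℤ) := [
  (427056407, [0, 0, 1, -4, 0, -2, 0, -1, 4, 7, -2, -2, -7, 4, 4, -6, 5, 0, 2, 6, 4, -1, 1, -5,
  -4, 1, 1, -2, 6, -6, 1, -5]), (28470427, [0, 0, -5, 4, -20, 14, -14, -15, -26, 19, 22, -18, 13,
  -6, -10, 0, -7, 0, 12, 0, -2, -3, -3, 3, 18, -15, 29, 20, 28, -20, -13, -5]), (10950164, [0, 0,
  -23, 25, -26, 5, -5, -3, -14, -5, -11, 3, 40, -21, 20, 33, -19, 0, -24, 66, 4, -27, 39, -6, -36,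
  30, -25, -7, 10, -26, -7, 10]), (17207401, [0, 0, -5, -7, 0, 9, -35, -21, -20, 17, 27, 21, -6,
  9, 10, -3, -3, 26, 40, 20, -24, -7, -13, -16, 8, 2, -19, -23, -34, 0, 29, 18]), (268435456, [0,
  0, -1, 0, 0, 6, 0, -7, 3, -5, -3, -14, 3, 6, -5, 5, -2, 1, 8, -3, 5, 7, 3, -6, -4, 6, -1, 1, -4,
  0, 3, -2]), (56940854, [0, 0, -1, 10, -15, -24, 5, 3, -7, -5, -3, -9, 3, -9, 5, 0, 18, 1, 8, 7,
  0, -8, -2, -11, 16, 16, 19, -4, -14, 15, -2, -12]), (28470427, [0, 0, 30, 19, -1, -17, -7, -2,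
  -21, 7, -9, 6, -24, -5, 15, 11, -23, 14, 13, -23, 22, -13, 16, 11, -7, 4, -9, 21, -9, -10, 5,
  -14]), (939524096, [0, 0, 0, 3, -1, 3, 5, -4, -3, -3, 1, 2, -2, 3, 1, 1, 5, 0, 1, -1, -4, -3,
  -2, -1, -3, 0, -3, 3, 3, 2, -1, -2]), (313174698, [0, 0, 0, -10, -8, -1, -2, 5, 3, -4, 3, 0, -3,
  -4, -3, -2, 2, 4, 5, 5, -1, 1, 2, 4, -8, -1, 0, 12, -3, 4, -2, 2]), (939524096, [0, 0, 0, 2, -2,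
  1, -2, -1, 1, 4, -3, -2, -1, -2, 1, 2, 2, -6, -1, 1, 3, -1, -6, 0, 0, -1, -2, 4, -1, 2, 4, 4]),
  (4697620480, [0, 0, 0, 0, -1, 1, -2, 1, 1, 0, 1, 1, -1, 1, 0, 2, 2, -1, -1, -2, 0, -1, 2, -2, 0,
  0, 1, 0, -1, -1, -1, 1]), (1565873493, [0, 0, 4, 0, -1, -1, 2, -1, -1, 4, 3, -3, 1, 1, -2, -2,
  2, -1, -3, 0, -2, 1, 2, 2, 0, 2, -3, 0, -3, -1, -1, 1]), (3131746986, [0, 0, 1, 0, 2, 2, -1, -1,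
  -1, 1, -3, 0, 1, -2, -2, -2, 2, 2, 0, 0, 1, -2, 2, -1, 0, -1, 0, 0, 0, 2, -1, 1]), (9395240960,
  [0, 0, 1, -2, 0, 0, 1, 1, -1, 1, -1, 0, 1, 0, 0, 2, 0, 0, 0, 0, -1, 0, 0, -1, 0, -1, 0, 0, 0, 0,
  1, -1])]

/-- Levels of the enumeration of `Lam 5` along `bFA`, block 1. -/
def lFA1 : List Lv := [
  ⟨47613024478790471478022122142440554416858893030355082642218103320260754444895262610769195616038078992420285844876067292188624613954791014399,
  21078156646421701018362931307710746541347183648993756389638373241621940904383692336061083539130040169846771112192944863499038378099081217,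
  5, 626349397, 6554⟩,
  ⟨77633566866985031255355509466794311311076439326605427686709079255649084762065672493624577924011481836846087724043944207894716219393,
  726761090728739905518068452378537740042330284247991454853803490101383639028635857653697426135839554078925675518542133989326706912395263,
  4, 1043915662, 8192⟩,
  ⟨11088817266115749624507976761883217599686413688835589630571432304602596232014675825718211753785520876693772158924312799422498603014,
  1861510367509813805679974689117214059334612667676670110486017855888999207826666441685870631037435695792684921301487893398028282,
  9, 208783132, 3641⟩,
  ⟨15493262849269495314072109017264530507136931849762106364528296340247916238551647718985200240445849082410955266509990264762,
  169214834747454371836376246747372121665564461907006230030505563293907634640257152883529452672326667071900939323139469735624774,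
  15, 86393020, 2185⟩,
  ⟨591023479569265045157439087240935431243024277219000270667195411878818556829090888459155449752606395177210600317321178,
  2581658854607339324610761732915770938898462768552004512559992161128768803460012103741186197830385225040725961372430172198,
  145, 1062209, 226⟩,
  ⟨39395994000773134066162813237557600218803115746861658298223911598560465710857029314442837309245420337858306459369377,
  6012195621345146116226862586013586276623523603788369724381805685256060640181296971428945639495302948321530937439,
  122, 1555761, 269⟩,
  ⟨55043966790169709974522181901739354713944428658430030210410778160453163015272244744745342992820072333770742,
  601171857223311136629732510596168539653460788091871456870856077934085057266324489281962198243507967903841583114,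
  198, 650009, 166⟩,
  ⟨9171754740577913420269268800945649973820878087276699881230287717075758859107518196039013987605774400880499,
  2239723382372626174014780262697789365381869396424613720067640471932645246421036241060224834728345337997,
  584, 74739, 57⟩,
  ⟨23495498878787438626842255992369618324042655569123334444415192919404227907377892509115299005399081,
  139960550887233975721213300279535397764278800921596472596804903617317587720852681193795728030470045655,
  287, 407925, 115⟩,
  ⟨2135824076524119099039682546244584413933361378110329881293105011948440402562858547896151796154367,
  162959396790983355339159924967700669343144246322888653936595873779323217782002126810290782209,
  107, 2926866, 307⟩,
  ⟨32592078305703338988163190761952319183147527118001405116987868087503663937123782828258951162,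
  497315648438392131940252597731393675967180653574893190379102166436859089604470675406854, 2,
  9395240960, 16384⟩,
  ⟨231582411708449098056701530450267760703500180027751993262228620168277513928695,
  497323236178204230446933150090119309650188390093847537412711983630930876844255861604361, 12,
  223696213, 2731⟩,
  ⟨810528722956748465592496661597254309364066499800203884135083396007600030023681,
  7587739831533797434813555576867773474762537648547619801005757142146587264052822015, 21,
  89478485, 1561⟩,
  ⟨115781488262770191425448554016129752044484327432543450534501028709824545619938,
  10600974546003998122430992558155808785657233097113504956555298088584019998, 2, 9395240960,
  16384⟩, ⟨1766820106065864428526953516206227429646463366103829831977047028376666141,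
  26958712519901056343984536691086181020530771789126144559172915953635, 60, 10616091, 547⟩,
  ⟨26957067078115997647359034665214161741305048480682026462108675538939,
  2879589034642147307980421805468932332095941858546018994934710277, 59, 14476488, 556⟩]

/-- Levels of the enumeration of `Lam 5` along `bFA`, block 2. -/
def lFA2 : List Lv := [
  ⟨411357308120864629832074747659443765071517347671047514938867727,
  18831209436880706667547979893861174166618737347450898284529, 11, 427056407, 2979⟩,
  ⟨6276910176367120404561262261007884805563713131543458611186,
  191559019560359274527162199781610538642312920575901710, 40, 28470427, 820⟩,
  ⟨95778048345445562813739963699461225135337992507031546,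
  2922958672490833656725497433098840833202629443590, 66, 10950164, 497⟩,
  ⟨111502024586010570182155004408316077198934011,
  1461390135306316907633502677711874703578733608965, 52, 17207401, 631⟩,
  ⟨22298022970749036789872754110154888470724602, 2722227781586351662964162493473035255814, 14,
  268435456, 2341⟩, ⟨158451489325251342604655919084, 340282366762486974138123264827112292372, 30,
  56940854, 1093⟩, ⟨5191900721349033766249387561910268, 396137185793862281108767309828, 44,
  28470427, 745⟩, ⟨2417814746867010837020678, 79225744699517470582706929658, 8, 939524096, 4096⟩,
  ⟨36893488134534135813, 1208888926126494640570363, 15, 313174698, 2185⟩, ⟨18445899661664124929,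
  844412045426687, 10, 939524096, 3277⟩, ⟨281457797103620, 17179607036, 4, 4697620480, 8192⟩,
  ⟨4294836226, 131070, 8, 1565873493, 4096⟩, ⟨65534, 2, 6, 3131746986, 5462⟩, ⟨0, 1, 4,
  9395240960, 8192⟩]

/-- Together with `7 e_∞` and `7 e₀`, a basis of `Lam 7` (choice `B`). -/
def bSB : List (List ℤ) := [
  [0, 0, -1, -1, 0, -1, 0, 1, 0, -1, -2, 0, 1, -1, 0, 0, 0, 1, 1, 1, 0, 0, 0, -1, 1, 0, 3, -1, 0,
  1, 0, -1], [0, 0, -2, 1, -1, -1, 0, 0, 0, 0, -1, 1, 1, 1, 0, 0, 1, -1, 1, 0, 2, -1, 0, -1, 1, 0,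
  2, -1, -1, 0, 0, -1], [0, 0, -1, -2, 2, -1, 1, 1, -1, -1, 0, 0, 1, -2, -1, 0, 0, 1, 1, 1, 1, 1,
  0, 0, -1, -1, 1, 0, 0, 0, 0, 0], [0, 0, -1, -1, 0, 1, 2, -1, 0, 1, 1, 1, 1, 2, -1, -1, 0, -1, 0,
  0, 1, 0, 0, 1, -1, -1, -2, 0, 0, -1, 0, 0], [0, 0, 0, -1, 1, 0, 0, 2, 0, -1, 0, -1, 0, -2, 2, 1,
  0, 1, 1, 0, 0, 0, -1, -1, -1, 0, 2, 0, 0, -1, 0, -1], [0, 0, 1, -1, 0, 0, -1, 1, 1, 0, -1, -1,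
  0, 0, 2, -1, -1, 1, 0, 1, -1, -1, 0, -1, 0, 0, 2, 1, 0, 1, 0, -2], [0, 0, 0, 1, 0, -1, 0, -1, 0,
  0, 1, 1, 0, 1, -2, 0, 0, -1, 0, 0, 1, 0, 1, 1, -1, -2, -1, 2, -1, -1, 1, 1], [0, 0, 1, -1, 0, 1,
  1, 0, -1, 1, 1, 0, -1, -1, 1, -1, -1, -1, 0, 0, 0, 0, -1, 1, -1, 0, -1, 3, -1, 0, 0, 1], [0, 0,
  0, 1, 0, 0, 0, -1, 1, 0, -1, 1, 0, 2, -3, 0, 1, -1, 0, 1, -1, 0, 0, 0, 1, 0, 0, -1, 1, -1, 1,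
  -1], [0, 0, -1, 1, 2, 0, 1, 0, 0, -1, 1, 0, 1, 1, 0, 1, 1, -1, 0, 0, 0, 0, -1, -1, -1, -2, 1,
  -1, 0, -2, 1, 0], [0, 0, 0, 0, 2, 0, 2, -1, 0, 0, 0, 0, 1, 1, 0, -1, 0, -2, 1, 1, 1, 0, 1, -1,
  -1, -1, 0, 0, 0, -1, 0, -2], [0, 0, 1, 0, 0, 0, 0, 0, 1, 0, 0, -1, 0, 1, 2, 1, -2, 0, 0, -1, -2,
  -1, 1, -1, -2, 0, 1, 0, 1, 1, 0, 0], [0, 0, 1, 0, 1, 0, 1, 1, -1, -1, -2, 0, 1, -1, 0, -1, 0, 0,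
  1, 1, -1, 2, -1, -1, -1, 0, 2, 0, 0, -1, 0, 0], [0, 0, 1, 3, 0, -1, 0, -1, -1, 1, -1, -1, 0, -1,
  0, -2, 1, 0, 0, 0, 1, -1, 0, 0, 1, 1, 0, 0, -1, 1, 0, 0], [0, 0, 0, 0, 0, -1, 0, 0, 0, -1, -2,
  1, 0, 0, -1, 0, 0, 0, 2, 1, -1, 2, 0, -1, 2, -1, 1, 0, -1, 0, -1, 1], [0, -1, -1, 0, -1, 0, 1,
  0, 0, 0, -2, 0, 2, 1, 1, -2, 0, 1, 0, 0, 0, -1, 0, 0, 1, 0, 2, -1, -1, 0, 0, 1], [-1, 0, 1, 1,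
  -1, 1, 2, 0, 0, 0, -1, -1, 0, 0, 2, 1, -1, 1, 0, -1, -2, 0, -1, 0, 0, 0, 1, 1, 0, 0, 1, 1], [3,
  -2, -1, 0, 2, 0, -1, 1, 0, 0, 2, 0, 0, -1, 1, 1, -1, 0, -2, 0, 1, -1, 1, 0, -2, -1, 0, 1, 0, 0,
  0, 1], [1, -3, -1, 0, 0, -1, 1, 1, -1, 1, -1, 0, 1, -1, 1, -1, 0, 1, 0, 0, 1, 0, -1, 0, 0, 1, 0,
  -1, -1, -1, 0, 0], [2, 0, 1, 0, -1, 0, 1, 1, 1, 0, 0, -1, 0, 0, 1, 2, -1, 0, -1, 0, -2, -1, 0,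
  1, 0, 1, 1, 0, 1, -1, 1, 0], [-3, -3, 1, 0, 1, -2, 0, 1, -2, 0, 0, 0, 0, -2, 0, -1, 0, 0, 2, 1,
  0, -1, 0, 0, -2, 1, 1, 1, 0, -1, 0, -1], [1, -3, 1, 1, 0, 0, 0, -1, 0, 1, 0, 0, 0, -1, -1, -2,
  0, 1, -1, 1, 1, 0, 0, 0, 0, 0, 0, -1, -1, 1, -1, 0], [1, -1, 0, 0, 0, 0, 0, 1, 0, -1, -3, 0, 1,
  -1, 1, 0, 0, 1, 1, 0, 0, -1, -1, 0, 0, -1, 1, -1, 0, -2, 1, 0], [3, 0, 1, 0, 0, 0, 0, 1, 0, -1,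
  0, 0, -1, -1, 1, -1, 0, -1, 1, -1, -1, 1, 0, 0, -1, 1, 0, 1, 1, 1, -1, -1], [-1, 3, 1, -1, -1,
  0, 1, -1, 0, 0, -1, 1, 1, 0, 1, -1, 0, 1, 0, 0, -1, 1, 0, 1, 1, 0, 1, 0, 0, 0, -1, -1], [3, -2,
  -1, 1, 1, 0, -1, -1, 0, -1, 1, 2, 0, 2, -2, -1, 0, 0, 0, 1, 2, 0, 0, 1, 0, 0, -1, -1, 0, -1, 0,
  0], [-2, 1, 0, 0, 1, 0, 1, 1, 0, 2, 0, 1, 0, 1, -1, -1, 1, -1, 1, -1, 2, -2, -1, 1, -1, 0, -1,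
  0, -1, 1, -1, 0], [0, 2, 0, 1, 0, -1, 0, 0, 0, 1, 0, -1, -1, 2, 0, 0, 0, 1, 0, -1, 0, 0, 1, 0,
  -2, 0, -2, 0, 1, -1, -1, 1], [-1, -2, 0, 2, 1, -1, 1, 1, 0, -1, -1, -1, 0, 0, 1, 0, 2, -1, 1, 0,
  1, 0, -1, -1, 1, 1, 0, -1, -2, 0, -1, -1], [3, 3, -2, -1, 1, 1, 0, 1, 0, -1, 2, 0, 1, 0, 0, 0,
  -1, -1, -1, 0, 0, 0, -1, -1, 0, -1, 0, 0, 1, -1, 1, -1]]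

/-- Weighted Gram–Schmidt vectors of the basis `10 • bSB`, block 1. -/
def uSB1 : List (ℕ × List ℤ) := [
  (9395240960, [0, 0, -10, -10, 0, -10, 0, 10, 0, -10, -20, 0, 10, -10, 0, 0, 0, 10, 10, 10, 0, 0,
  0, -10, 10, 0, 30, -10, 0, 10, 0, -10]), (3131746986, [0, 0, -30, 30, -20, -10, 0, -10, 0, 10,
  0, 20, 10, 30, 0, 0, 20, -30, 10, -10, 40, -20, 0, -10, 10, 0, 10, -10, -20, -10, 0, -10]),
  (1565873493, [0, 0, -30, -30, 50, -20, 30, 10, -30, -10, 30, 10, 20, -30, -30, 0, 10, 0, 20, 10,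
  50, 20, 0, 10, -40, -30, -10, 10, -10, -20, 0, 10]), (4697620480, [0, 0, -10, -30, -10, 20, 30,
  -10, 10, 10, -10, 10, 20, 30, -10, -20, -10, 0, 0, 10, -10, 0, 0, 10, 0, -10, -10, -10, 10, 0,
  0, -10]), (4697620480, [0, 0, 0, -10, 0, 20, 10, 20, 10, 0, 10, -10, 0, 0, 40, 10, 0, 0, 10,
  -10, 0, -10, -20, -10, -20, 0, 10, 0, 0, -30, 0, -20]), (1565873493, [0, 0, 20, -10, 20, -20,
  -30, 0, 10, 20, 10, -10, 0, 20, 20, -50, -20, 0, -10, 30, 20, -30, 20, -10, -20, -20, 10, 60,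
  -20, 30, 0, -40]), (3131746986, [0, 0, 10, 10, -20, -10, 0, 0, 20, -20, -10, 10, 0, 10, -20, 20,
  -10, 0, 10, 0, -20, 0, 10, 10, -10, -40, 20, 30, -10, -30, 30, 10]), (4697620480, [0, 0, 0, -10,
  -20, 10, 20, 0, -20, 10, -10, 10, -10, -20, 10, -10, -10, -20, 10, 0, 0, 0, -20, 10, 10, 10, 10,
  30, -20, 10, 0, 20]), (1565873493, [0, 0, 20, 10, 40, 10, 0, 0, 0, 10, -10, 10, -30, 0, -50,
  -10, 30, -40, 10, 40, -20, 0, -40, -10, 10, 30, 10, 10, 20, -30, 20, -40]), (782936746, [0, 0,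
  -10, 40, 70, 10, 30, -30, -30, -20, 20, -20, 30, 30, 40, -10, 0, -40, -50, 10, -50, 0, -40, -40,
  10, -60, 40, -20, -10, 30, 20, 50]), (111848106, [0, 0, 130, 80, 50, -10, 170, -130, -10, -60,
  -100, -60, 10, -70, 80, 10, -80, -160, 130, -10, 10, 80, 240, -80, -10, 20, -40, -20, 10, -30,
  -60, -90]), (36275061, [0, 0, -80, -60, 50, -150, 30, 10, -10, 150, 40, 80, -60, 140, -130, 220,
  -220, -160, 130, -150, -130, -200, 30, -80, -430, 230, 170, -20, 220, 250, 10, 120]), (21160452,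
  [0, 0, 250, 280, -110, -40, -140, 200, -200, 40, -310, 120, 280, 210, -10, -410, 40, 130, 10,
  -40, -10, 440, -140, -120, -460, 160, 70, -30, -40, -180, -170, 180]), (3131746986, [0, 0, 10,
  30, 0, -10, 30, -10, 0, 20, -10, -30, 10, -20, -10, -20, 10, 30, 10, -10, 0, -40, -10, 20, -10,
  0, 0, -10, 0, 0, 20, 0]), (9395240960, [0, 0, 0, 0, 10, -10, 0, 0, 10, 10, 0, 0, -10, 10, 0, 0,
  0, 10, 30, 0, -10, 0, -10, -10, 10, -10, -10, 0, -10, 0, -20, 10])]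

/-- Weighted Gram–Schmidt vectors of the basis `10 • bSB`, block 2. -/
def uSB2 : List (ℕ × List ℤ) := [
  (3022921, [0, 0, -210, -560, 910, 0, -140, 0, 280, -280, -210, 0, 0, 350, 210, -630, 0, 70,
  -210, 0, -70, -840, 980, 280, 420, 1120, 490, 70, -280, -1260, -70, 1260]), (329773, [0, 0,
  -770, 1400, 1610, 0, 2940, 0, -700, 700, -770, 0, 0, 3010, 770, 2870, 0, 3710, -770, 0, 1470,
  2100, 140, -700, 1540, 2380, 70, 3710, 700, 560, 1470, -560]), (1447648, [0, 0, -990, 1500, 570,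
  1100, 180, 1100, 900, 1300, -990, 1100, 0, -1230, -110, 490, -1100, 70, -990, 1100, 90, -500,
  480, -200, -220, -640, -310, 70, 200, -280, -1010, 280]), (1244073, [0, 0, -420, -490, -80,
  -2680, 130, 270, -530, 1070, -420, 270, 0, -200, 740, 190, -1450, -310, -1010, 270, -820, 360,
  -440, -210, 300, 390, -1240, -900, -970, -1120, 1270, -650]), (1174405120, [0, 0, 40, 10, -20,
  -40, 30, 50, 10, 10, 40, -30, 40, 20, 0, 30, 10, -30, -10, 50, 0, 0, 0, 50, 20, 10, 20, 0, 10,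
  0, -50, 10]), (264983, [0, 0, -740, 1430, -1040, -120, -510, -370, -5650, -1490, 1820, 3470,
  640, 120, 1700, -130, 470, 1930, 1870, 2190, -3060, -2840, 1480, 430, 300, -250, -920, 700,
  2230, -1120, -970, -1290]), (807567, [0, 0, 1480, -90, -690, 240, 1020, -2030, 220, 210, 1900,
  1370, -1280, -240, -630, 260, -940, 1680, -970, 1160, 580, 140, -190, -860, -600, 500, 1840,
  -1400, -1690, -530, -830, -190]), (4697620480, [0, 0, 30, -10, 10, 0, -10, -10, -10, -10, -30,
  10, 0, 10, 10, 20, -10, 0, 0, 10, 30, -20, -20, 10, 0, -10, -10, -10, 10, 0, 0, 10]),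
  (4697620480, [0, 0, 0, 10, 10, -20, 20, 10, 20, -30, 0, 30, -20, 0, 10, -20, 0, 0, -10, -20, 0,
  0, -10, 20, 0, 0, 0, 0, 10, 10, -10, -10]), (89478485, [0, 0, 30, -60, 100, -50, -90, -210, 30,
  210, -40, 120, 150, -90, 70, 80, 120, 0, -40, -160, -80, 70, -10, 150, 20, -40, 130, 70, 40,
  -50, -110, -80]), (208783132, [0, 0, -70, 90, 50, 50, -90, -60, 30, -40, 60, -30, 50, 10, 20,
  -20, -180, 0, 110, 40, 20, 70, -60, 150, 20, 60, 30, -30, -10, 0, 40, -30]), (1043915662, [0, 0,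
  40, 0, 40, 40, 0, 60, -30, 10, 0, 30, 10, 20, -20, 20, 0, 0, 10, -40, -20, -10, 30, 30, 10, 0,
  0, -30, -80, 30, 20, -30]), (3131746986, [0, 0, -20, 0, 0, 0, 0, 0, -30, 10, -20, -30, -50, 20,
  0, 0, 0, 0, -10, 0, 0, 10, 10, 30, -10, -20, 20, -10, 0, -10, -20, -10]), (3131746986, [0, 0,
  -20, 0, 0, 0, 0, -20, 10, -30, -20, -10, 10, 0, 0, 20, 20, 0, -10, 20, -20, -10, -10, 10, -30,
  20, -20, 10, -40, 10, -20, -10]), (9395240960, [0, 0, 0, 0, 0, 0, 0, 0, -10, -10, 0, -10, 10, 0,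
  -20, 0, -20, 0, -10, -20, 0, -10, -10, -10, 10, 0, 0, 10, 0, -10, -20, -10])]

/-- Together with `5 e_∞` and `5 e₀`, a basis of `Lam 5` (choice `B`). -/
def bFB : List (List ℤ) := [
  [0, 0, 0, 1, 0, 0, 1, 0, 0, -1, -1, 1, 0, 0, 1, 1, 0, 0, -1, 1, 0, -1, 1, 0, -2, 1, -2, 0, 0, 0,
  0, 0], [0, 0, 0, 0, 0, 1, -2, -1, -1, 2, 1, 0, 0, 0, 0, 0, -1, 0, 1, 0, 0, 0, -1, 0, 1, -1, 0,
  0, 0, -1, 1, 1], [0, 0, 0, -1, 0, 0, -1, 0, 0, 1, 1, 1, -1, 0, 0, -1, 1, 0, 1, 0, -1, 0, -2, 0,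
  1, -1, 0, 0, -1, 1, 1, 1], [0, 0, 1, 0, 0, 0, 0, -1, -1, 2, 1, -2, 1, 0, -1, -1, -1, 0, 0, 0, 0,
  1, 0, 1, 1, 0, 0, 0, 0, -1, 0, 0], [0, 0, 0, 0, 1, 1, -1, -1, -1, 1, -1, -1, 1, -1, -1, -1, -1,
  1, 1, 0, 1, 0, 0, 0, 1, -1, 1, 0, 1, 0, 0, 0], [0, 0, -1, 0, -2, 0, -1, 0, 0, 0, 1, -1, 0, 0, 0,
  1, 1, -1, 1, 0, 0, 0, -1, -1, 1, 0, 2, 1, 0, 0, 0, 0], [0, 0, 1, -2, 0, 0, -1, 1, 1, 1, 1, 0,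
  -1, 0, -1, -1, 0, 0, 0, -1, 0, 1, 0, 1, 0, -1, 0, 1, -1, 0, 0, 1], [0, 0, -1, 0, -1, -1, 0, 1,
  0, -1, 0, 0, 1, 0, 1, 2, -1, 0, 0, 1, 0, 0, 1, -1, 0, 1, 1, -1, 0, -1, 0, -1], [0, 0, 1, 1, -1,
  0, -1, -1, -1, 1, 1, -1, -1, 0, 0, 0, -1, 0, 1, -1, 1, 0, 0, 1, 0, 0, 0, 2, 0, -1, 0, 0], [0, 0,
  1, 1, 0, -1, 2, 0, -1, 0, -1, 0, 0, -1, 0, -1, 1, 0, -1, 0, 0, -1, 0, 1, 0, 0, 0, 1, 1, 1, -1,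
  -1], [0, 0, -1, 1, -1, 0, 0, -1, -1, -1, 1, 1, 0, 0, 1, 0, 0, 1, 1, 2, -1, -1, 0, 0, -1, 1, -1,
  0, 0, 0, 0, 0], [0, 0, -1, 2, 0, 0, 0, -1, 0, -1, 0, 0, 0, 0, 1, 0, -2, 0, 0, 1, 1, 0, 0, 1, -1,
  1, -1, 0, 1, -1, 0, 0], [0, 0, -1, 1, -1, 0, -2, 0, 0, 0, 1, 1, 0, 0, 1, 1, 0, 0, 0, 1, 0, -1,
  1, -1, 0, 1, 0, -1, -1, -1, 0, 1], [0, 0, 0, 0, 0, 0, 0, 0, 1, 0, -1, 1, -2, 0, 1, -1, 1, 0, 0,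
  1, 1, -1, 0, 0, -2, 0, -1, 1, 1, 0, 0, 0], [-1, 1, 1, 1, 1, 0, 0, -1, -1, 2, 0, 0, 0, -1, 0, -1,
  -1, 1, 1, 0, 0, 0, 0, 0, 1, 0, 0, -1, -1, 0, 1, 0], [0, 1, -1, 0, -1, 0, 1, 1, 0, -1, 0, 1, 0,
  -1, 0, 0, 1, 0, -1, 2, -1, -1, 0, 0, -1, 1, 0, 0, -1, 1, 0, 0], [-1, 2, -1, 1, 0, 0, 0, 1, 0, 0,
  0, 1, 0, 0, 1, 1, -1, 0, -1, 0, 0, -1, 0, 1, -1, 0, -1, 0, 1, -1, 1, 0], [-1, -1, 0, 0, 0, 0,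
  -1, 0, 1, 0, 0, 1, 0, 0, -1, -1, 0, 0, 1, -1, 0, 0, -1, 1, 1, -1, 1, 2, 0, 1, 0, 1], [1, 1, 0,
  0, 0, 1, 0, 0, 0, 1, 1, 2, -1, 1, 1, 0, -1, 0, 1, -1, 0, 0, -1, 1, 1, -1, 0, 0, 0, 0, 1, 0],
  [-1, 2, 1, -1, 0, 0, 0, 0, -1, 0, 1, 0, 0, 0, 0, -1, 1, 0, 1, 0, 0, 1, -1, 1, 0, -1, -1, 1, -1,
  0, 0, 1], [-1, -1, -1, 0, 0, 0, 1, 1, 0, 0, -2, 0, 1, 0, 0, 1, 1, 0, 0, 1, 0, 0, 1, 0, 0, 1, 1,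
  -1, 1, 0, -1, -1], [0, -2, 0, 0, 0, 1, -1, 1, -1, 1, 1, 0, -1, 0, -1, 0, -1, 0, 1, -2, -1, 0, 0,
  0, 0, -1, 1, 1, 0, -1, -1, 1], [1, -2, -1, 0, 0, 0, 0, 0, -1, 1, 0, 0, 1, 0, 1, 1, -1, 0, 0, 1,
  1, 0, -1, -1, -1, 0, -1, 0, -1, 0, 1, 0], [0, -1, 0, 1, -1, -1, -1, 0, 1, 1, 1, 0, -1, 0, 0, 0,
  1, 0, 0, -1, 1, 0, -2, 0, 1, -1, 1, 0, 0, 1, 0, 0], [0, -2, 0, 1, 1, 0, 0, 1, 0, 0, -2, -1, 0,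
  1, 0, -1, 0, 0, 0, 0, 0, 0, 1, 0, 1, 0, 0, -1, 1, 1, 0, -1], [1, 2, 0, 1, -1, 1, -1, 0, 0, 1, 0,
  -1, 0, 1, 0, 0, 1, 0, 0, -1, -1, 0, 0, 0, 1, -1, 2, 0, 1, -1, -1, -1], [-1, 0, 1, 0, 1, 1, 1, 1,
  0, 0, -1, 1, 1, 0, 1, 0, 0, 0, -1, 0, 0, 0, -1, 0, -1, 0, -2, 1, -1, 1, 0, 0], [2, 2, 0, 0, 0,
  1, -1, -1, -1, 1, -1, -1, 0, -1, 0, 0, 0, -1, 1, 1, 0, -1, -1, 1, 0, -1, 1, 0, 0, 0, 0, 1], [2,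
  1, 1, 1, 0, -1, 0, 0, -1, 1, 0, 1, -1, 1, 0, 0, -1, 0, 0, 0, 0, 1, 0, 1, 0, 0, 0, -1, 1, -1, 1,
  0], [1, 2, 0, 0, 1, 1, 0, -1, -1, 0, 0, -1, 0, 1, 0, -1, 0, 1, 1, 0, 0, 0, 1, 0, 0, -1, 1, 1, 1,
  0, 1, 0]]

/-- Weighted Gram–Schmidt vectors of the basis `bFB`, block 1. -/
def uFB1 : List (ℕ × List ℤ) := [
  (9395240960, [0, 0, 0, 1, 0, 0, 1, 0, 0, -1, -1, 1, 0, 0, 1, 1, 0, 0, -1, 1, 0, -1, 1, 0, -2, 1,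
  -2, 0, 0, 0, 0, 0]), (3131746986, [0, 0, 0, 1, 0, 2, -3, -2, -2, 3, 1, 1, 0, 0, 1, 1, -2, 0, 1,
  1, 0, -1, -1, 0, 0, -1, -2, 0, 0, -2, 2, 2]), (1565873493, [0, 0, 0, -2, 0, -1, 0, 1, 1, 0, 1,
  4, -3, 0, 1, -2, 4, 0, 1, 1, -3, -1, -4, 0, 0, -1, -2, 0, -3, 4, 2, 2]), (4697620480, [0, 0, 2,
  0, 0, -1, 2, -1, -1, 2, 1, -2, 1, 0, -1, -2, 0, 0, -1, 1, -1, 1, 0, 2, 0, 1, -2, 0, -1, 0, 0,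
  0]), (4697620480, [0, 0, 0, 0, 2, 1, 0, -1, -1, 0, -3, 0, 1, -2, -1, -2, 0, 2, 1, 1, 1, -1, 0,
  0, 0, -1, 0, 0, 1, 2, 0, 0]), (4697620480, [0, 0, -1, 1, -3, 0, 0, -1, -1, 0, 0, -2, 1, -1, 0,
  1, 2, -1, 1, 2, 0, -1, -1, -1, 0, 1, 1, 2, 0, 1, 0, 0]), (313174698, [0, 0, 4, -8, -4, 3, -6, 5,
  5, 2, -1, -2, -3, -4, -5, 0, 0, 0, -1, -1, 5, 1, 6, 4, -8, -3, -2, 12, -3, 0, -2, 6]),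
  (14913080, [0, 0, -7, -41, -13, -34, -12, 35, -5, 4, -2, 6, 29, -23, 10, 15, -30, 25, 13, 48,
  -10, 7, 17, -7, 4, 9, 11, -26, -26, -5, 16, -8]), (6483948, [0, 0, 35, 37, -19, -61, -3, -7,
  -38, -20, 10, 12, -61, -11, 34, -12, -39, 43, 61, -30, 29, -14, -1, 35, 1, 18, 8, 46, -17, 4, 4,
  -44]), (1601916, [0, 0, 51, 2, -29, -58, 39, 91, -81, 99, -15, 97, 11, -87, 41, 18, 24, -53,
  -126, -1, -32, -94, -10, 51, 56, -96, 57, 46, 106, -29, -52, -26]), (4251240, [0, 0, -51, -7,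
  -26, 33, -9, -21, -14, -49, 95, 43, 4, 7, -16, -63, 1, 58, 16, 46, -58, -11, 35, 34, -26, -4,
  13, 9, 54, -26, -73, 6]), (180677710, [0, 0, -10, 5, 0, -5, -1, 2, 10, -4, -1, -1, -1, -5, 4,
  -7, -10, -8, -4, 8, 8, 6, -12, 11, 0, 1, 0, 1, 6, 0, 2, 5]), (469762048, [0, 0, 0, 7, 0, -3, -7,
  0, 2, 2, 1, 1, -1, -3, 0, -5, 4, 0, -4, 0, 4, -4, 6, -1, 4, 5, 2, -5, -6, 0, -4, 5]),
  (427056407, [0, 0, 1, -4, 0, -2, 0, -1, 4, 7, -2, -2, -7, 4, 4, -6, 5, 0, 2, 6, 4, -1, 1, -5,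
  -4, 1, 1, -2, 6, -6, 1, -5])]

/-- Weighted Gram–Schmidt vectors of the basis `bFB`, block 2. -/
def uFB2 : List (ℕ × List ℤ) := [
  (3758096384, [0, 0, 0, 2, 0, 2, 3, 0, 2, 2, 1, 1, -1, -3, 0, 0, -1, 0, 1, 0, -1, 1, 1, -1, -1,
  0, 2, 0, -1, 0, 1, 0]), (8760131, [0, 0, -25, -10, 0, 50, 0, 25, -45, -10, -5, -5, -45, 10, -45,
  -15, -15, 0, -50, 15, 10, -30, -25, 15, -10, 30, 30, -5, -40, -15, 30, -40]), (119259, [0, 0,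
  -415, 224, 0, -106, -39, 415, 189, 224, 112, -278, 228, 49, -45, -15, 258, 390, 67, -375, -107,
  -303, 92, 288, -127, 30, -126, -5, 233, -15, 537, -40]), (381238, [0, 0, 63, 76, 0, -54, 3, -63,
  203, 76, -164, 270, 200, 307, -183, -61, -82, -30, 57, 91, -85, -101, 24, 40, 103, 122, 134,
  249, -49, -61, 83, -28]), (4400581, [0, 0, -12, -29, -61, 80, 43, 12, 2, 32, 8, 27, 20, 49, 61,
  0, 4, -3, 24, 3, 83, -4, 39, 65, 53, 0, -11, -30, -11, 61, -10, -15]), (78951604, [0, 0, 2, 6,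
  9, 3, 8, 12, -12, -10, 1, 6, 13, 0, 5, -7, 18, -3, 10, 3, 13, 10, -3, 2, -3, -7, 3, 5, -11, -23,
  4, 6]), (184220410, [0, 0, -5, 2, 3, 1, -3, 4, -4, 8, -11, 2, -7, 0, -4, 9, 6, -1, 9, 1, -7, 9,
  -1, 12, -1, 9, 1, -4, 2, -2, -10, 2]), (626349397, [0, 0, -2, 1, -1, 0, 3, 7, -3, 2, -2, -3, 0,
  4, 1, -5, -6, -3, 4, -2, -2, -4, -1, -5, -2, 0, -1, 0, -1, 1, -5, 5]), (1565873493, [0, 0, -4,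
  0, 2, -2, 0, -1, -1, 4, 2, 2, 2, 1, 0, 1, 0, 2, -2, -1, 3, 2, -2, -2, -3, 0, 0, 2, -2, 2, -3,
  -2]), (4697620480, [0, 0, 2, 2, -2, 0, 0, 1, 1, 0, 0, 0, 0, 1, -2, 1, 0, 2, 0, 1, 1, 0, -2, 0,
  -1, -2, 0, -2, 0, 0, -1, 0]), (1565873493, [0, 0, 0, 4, 1, 1, -3, 3, -1, 0, 0, -1, -1, 2, 1, -1,
  0, -1, -1, 3, -2, 4, 3, -1, 1, -3, -1, 2, 0, 3, 1, -3]), (4697620480, [0, 0, 0, 0, -1, 1, -1,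
  -1, 1, 0, -2, -1, 1, 0, 3, -1, 0, 1, -1, -1, -2, 0, -1, 1, -1, -1, 1, 0, -2, -1, -1, -1]),
  (4697620480, [0, 0, 2, 0, 1, 2, -1, 2, 1, 0, 1, 0, 1, -1, 1, 0, 0, 1, 0, 0, 0, 0, -2, -1, 1, 3,
  -1, 1, 1, 0, -1, -1]), (1565873493, [0, 0, 2, 0, 5, 0, -1, 0, 1, 0, 3, -2, 1, 1, 1, 2, 0, -3, 2,
  2, 0, -4, 0, 3, -3, -1, 3, -1, -1, 2, -1, -1]), (3131746986, [0, 0, 2, 0, -1, 0, -1, 0, -2, 0,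
  0, 1, 1, 1, 1, -1, 0, 0, -1, -1, 0, 2, 0, 0, -3, 2, 3, -1, 2, 2, 2, 2]), (9395240960, [0, 0, 0,
  0, 1, 0, 1, 0, 0, 0, 0, -1, -1, 1, 1, 1, 0, 2, -1, 1, 0, 0, 0, 0, 1, 0, 1, 1, 0, 0, 0, 2])]

/-- Levels of the enumeration of `Lam 5` along `bFB`, block 1. -/
def lFB1 : List Lv := [
  ⟨8722064685962668951278280121184437265927534716391360041607350302763596243155272836249090850993029328440422371327759649140766918412664833,
  47625380570750930510089206793627080726134312679287685038566134343199612789556491030269007608726216003261692193616932477402982885414477430783,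
  1, 9395240960, 32768⟩,
  ⟨726794359211333174943435486968666844774447310504279430957811665676374233841569337952322910771470760972494499175170705363720853400780799,
  44365084273715605888320919337689579194050183038629323678533504265054271828585373868139942292804588268022431095472569813748227833857,
  2, 3131746986, 16384⟩,
  ⟨2538462665485715455278030558265373755623123217641595119848079360649762146249643257752726338071456913305997964072906856935260161,
  11088140313817773722858378706014069439990125178285624705562070243097835469076252848902144898078486855476258845881541380458961371135,
  3, 1565873493, 10923⟩,
  ⟨18075788540197379905829144021846970841401459237108320632794198404622675793417191170003559503358009630987132889822539087872,
  169212252221763443951784489712367539225230197379618883816237297391843259880702287340078434313063754911352363145516157186801664,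
  2, 4697620480, 16384⟩,
  ⟨197014239359278714128222014004796253589593828706288458702830927434253380344624624264424318268872652747758975769116673,
  2582052863847549310941790949989007078076116199000517224371956525613213368636496570005380928961868958783155412996978376703,
  2, 4697620480, 16384⟩,
  ⟨39400202598256019179724311313528794606451348414932241836617611291039952144087828117226030202871255220476756342210564,
  1803598138460032554728786614819198628390855533204831330682113205769627409382494188236052013660420329871648096252,
  2, 4697620480, 16384⟩,
  ⟨601190206052156151440713523118391593312966226923118428106063258703079404037030020776582456645398018254707818512,
  36695137945154898993509659678685695208505597411458795003230009166106392309740750124486941102769721467535344,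
  8, 313174698, 4096⟩,
  ⟨979877644506869132612831209572847786773768123629869064043049785394083513688109437442336413469603135519,
  9173014586315779177310670749998774915399486188549494625886312307762297420840251122842631876027033143082977,
  40, 14913080, 820⟩,
  ⟨6407863328543904071289707818432601067150651956622666145856138950772929804936380189941046055206852,
  139977638522784219255768852827709334781535692925208973265103462671286219018955122706114902283420237884,
  63, 6483948, 521⟩,
  ⟨2135954443842619555461996220872544930946905624707395629913990339190536675311599261696635630190619,
  32592078290526933025485297007183655798897649257140033051268631683050469041288326326456745957,
  138, 1601916, 238⟩,
  ⟨32588597065816553205146315002227385347571439068566461227265380567475718156002314467803987963,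
  3978555535224175148816012322665229252055230088518782912866622194382640211072831130370053, 85,
  4251240, 386⟩,
  ⟨30354201425125366191398600872129088718297311280929837911808447206595274502546718721,
  497292882208361516789190849545948711011737853486066787602552168445952901738030828814335, 13,
  180677710, 2521⟩,
  ⟨115800923364800300689169971101007574981426143015150509479483903817485213630464,
  7588434559333389382978458903558269721496920288904404854380412741638777378869215232, 8,
  469762048, 4096⟩,
  ⟨115792089183396713471686041670895332756125654216234053298779480653913658753024,
  53919481951884943337792575097144330449406510740678103353999470886912, 8, 427056407, 4096⟩]

/-- Levels of the enumeration of `Lam 5` along `bFB`, block 2. -/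
def lFB2 : List Lv := [
  ⟨1766739224991753389634529691421620656973774949848974793713661200319643593,
  107839786630939948767809321297858853708947026644164407945000972976183, 5, 3758096384, 6554⟩,
  ⟨822714616050190700948300766725385413430541981607647751630225128,
  26959123952534589603966066786252905288223713880558964833351980024088, 110, 8760131, 298⟩,
  ⟨411357308312442648936017687110158632086711384603680808789213124,
  18831017858861602724608529178994158972581804714157047939132, 780, 119259, 43⟩,
  ⟨6277005950030938635684741304638272003951875717745359912915,
  95785355742128151048118569394412150479726718674599981, 404, 381238, 82⟩,
  ⟨1461523936374684422004497634193666264488782397436,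
  95779509780181678962974684699260130309906706354077700, 122, 4400581, 269⟩,
  ⟨1461501635969768258143843072613519414224884858878, 1361134660059841760102763605431047684098,
  28, 78951604, 1171⟩, ⟨680554349327389228693129643490569027579,
  22300064644181295752307025143004870936952837, 17, 184220410, 1928⟩,
  ⟨15576811342606265342795361565147134, 340266790109595857198031812070203064322, 10, 626349397,
  3277⟩, ⟨5192059175256229101031997946658814, 237683278598527498498382561282, 6, 1565873493,
  5462⟩, ⟨3626722119456095620431872, 79224535792144881497923518464, 4, 4697620480, 8192⟩,
  ⟨1208888925563548982050814, 36894051080192655362, 6, 1565873493, 5462⟩, ⟨18446744073709158398,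
  393218, 4, 4697620480, 8192⟩, ⟨262148, 281474976448508, 4, 4697620480, 8192⟩, ⟨4294836226,
  131070, 8, 1565873493, 4096⟩, ⟨65534, 2, 6, 3131746986, 5462⟩, ⟨0, 1, 4, 9395240960, 8192⟩]

/-- The `Lam 7` parts `r` of the glue vectors `5 r ++ 7 b` (choice `A`). -/
def rTA : List (List ℤ) := [
  [3, 2, 1, 1, 0, -1, 0, -1, 1, 1, 1, 2, 2, 1, 1, 0, -2, 0, 2, -3, 2, -1, 1, -1, 1, 0, 0, -2, 2,
  -2, 1, 4], [1, 0, -1, 2, -1, -1, 1, 2, 3, 0, 1, 2, 1, 3, -2, 0, 0, 2, 0, -2, 0, -1, -3, 1, -2,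
  0, -1, 4, 0, -1, 1, 1], [-2, 0, 1, -1, 0, 1, -2, 4, 0, 0, 2, 0, 1, 0, -2, 1, 0, 1, 0, 2, 1, -1,
  -1, 0, 1, 1, 1, -2, 0, 0, 0, 2], [0, -2, -3, 0, 1, -1, -1, -1, -1, 2, 0, 1, -2, 0, 3, 2, 1, 0,
  0, 0, -1, -1, 5, -1, 1, 2, 0, 0, 0, -1, -3, 0], [-1, 0, -1, 1, 2, 0, 1, -2, -1, -1, -2, -1, 1,
  -4, 0, -2, 2, -1, 0, 1, -3, 4, -1, -2, -2, 4, 2, -1, -3, -1, 1, 0], [-2, -2, 2, 0, 0, -1, -4, 3,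
  1, 2, -2, 3, 0, -1, -1, -2, -3, 3, -1, 2, -3, 0, 1, -1, 0, 1, 2, 2, -1, -1, -2, -1], [-2, 1, 2,
  -1, 3, 1, 2, 1, 1, 0, 1, 1, 1, 0, 0, -2, 0, -1, 1, 1, 2, 0, 0, 2, 3, -2, -3, 0, -2, -3, -1, 2],
  [3, 3, 0, 0, -2, -1, 0, -3, 2, -4, -2, 1, -1, 1, -1, -3, -2, 0, 1, -1, 6, 0, 1, 3, -3, 2, -1, 2,
  0, 0, 1, 0], [-1, 0, 0, -1, -4, -1, 1, 2, -1, 2, 0, -3, -1, -1, -1, -1, -2, 0, 2, -1, 2, -2, 0,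
  -4, 0, 1, 1, 1, 1, 0, -1, 2], [2, 3, 1, 0, 0, -1, 4, 0, 1, 0, 1, -1, 0, 1, -1, 1, -5, 0, 1, 0,
  1, 0, 1, -5, 4, 0, 0, 1, -2, 0, 0, -1], [3, 1, -2, 2, -2, -1, -1, 1, -1, 2, -3, 2, -1, 0, -2,
  -3, 0, 2, -1, -2, 0, -2, -5, 0, 1, -2, 0, -1, 1, 0, 3, -1], [0, 1, 0, -1, -2, 3, -1, 0, -1, 1,
  -2, -2, 1, -1, -1, -2, -5, -2, 0, 2, 0, -1, -1, 0, 2, 1, -1, -1, -1, 2, 0, -2], [-1, 2, 1, -1,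
  1, -3, -2, 4, 0, -2, 3, 0, 1, 0, -1, 2, 2, 0, 1, -2, 0, -2, 3, -2, -1, 0, 4, -1, 0, 2, -2, -2],
  [1, 0, 1, 0, 4, 1, 1, 0, -1, -2, -1, -2, 2, 1, -2, -1, 0, -4, 1, 1, -3, 0, 2, 0, -1, 0, -1, -3,
  0, 1, 0, 1], [-1, 1, -2, 1, 2, -3, -2, -2, 1, -3, -1, 0, 0, -1, 2, 2, 4, 0, -2, -2, 1, -1, -2,
  0, 1, 0, 0, -2, 0, 0, -1, 0], [2, 2, 0, 0, -1, -1, -1, 2, 2, 1, 0, 0, 0, 0, -3, -1, -2, 1, 0,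
  -3, -2, 1, 0, -4, -2, 0, 1, 1, 0, 0, 2, -3], [-1, -2, 1, 1, 0, 2, 0, 2, -4, 2, 0, -1, -2, 0, 1,
  -1, -2, -1, 1, -4, -2, 0, 0, -2, 3, 0, -1, -1, 1, 0, 0, 0], [0, 0, -1, 3, -4, 0, -1, 1, 1, -2,
  -1, 1, 0, -2, 4, -1, -2, 0, -1, 1, 0, 0, 3, 0, 2, -1, -1, 0, 1, 1, 1, -2], [2, 1, 0, 1, 1, 1, 1,
  1, 1, -1, -3, -1, 0, 1, 0, 0, -1, 4, 2, -1, 2, 0, -1, 5, -2, -1, -2, 4, 1, 1, 3, 1], [-1, 2, 1,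
  2, 1, 1, -1, 2, 0, -2, 0, 0, -2, -2, -2, -2, -1, -2, -3, -1, 0, 0, -6, -1, -2, 1, 2, -1, 1, 2,
  2, 2], [-2, -2, -1, -1, -2, -2, -1, -2, 0, 2, 1, -1, 1, 0, -1, -1, -1, 0, 0, 0, -2, -1, 2, -4,
  2, 1, 1, -4, -1, 1, -1, -1], [-1, 0, 0, -2, -1, 2, 4, 0, -1, 3, -2, -4, 1, 0, 0, 3, 2, -3, 2, 1,
  1, 2, 1, -1, 0, -2, -1, -2, 2, 0, -2, 2], [1, 1, -2, -1, 1, -1, -3, -2, 0, -3, -2, 3, 2, -2, 1,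
  1, 5, 1, -3, 0, 1, -2, 1, 1, 1, -1, 0, -3, 2, 0, -1, 0], [0, 0, 0, 0, -1, 1, 2, 0, 1, -2, -2, 1,
  -1, 0, 2, -1, 4, -2, 0, 0, 1, 1, 0, 1, -1, -2, 0, -1, 0, 0, -2, 1], [3, 0, -1, -1, 0, -1, 0, -3,
  1, -2, 0, 3, -1, 1, 0, -1, -1, 1, 2, 0, 3, 0, 2, 3, 0, 0, 2, 1, -2, 1, 0, -1], [1, 1, 3, 0, 2,
  1, -1, -2, -1, 0, 0, 2, 2, -3, 1, -1, 0, -3, 2, 0, -2, 1, -1, -3, 2, 0, -1, 0, 1, 1, 0, 1], [2,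
  -1, -2, 0, 0, 1, 0, -4, 0, -1, 1, 0, -2, 1, 0, 0, -1, 2, 4, -1, 3, -2, 1, 0, 2, 3, -2, -3, 0, 0,
  1, -3], [-1, -1, 0, 0, 2, 0, 0, 2, -1, 0, 1, -3, 2, 2, -2, -1, -1, 0, -2, -1, -2, 1, 3, 2, -4,
  1, 1, 0, 0, -1, 0, 0], [1, 0, -1, -1, 1, 3, 0, 0, 0, -3, -2, -4, -1, -1, 0, -3, -2, 1, 2, 0, -1,
  1, -4, 4, 2, -2, -2, 0, 1, 2, 2, -4], [-1, 1, 0, 0, -2, 3, 1, 0, 0, 2, -1, -1, 1, -1, 2, 3, 3,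
  -2, 1, 0, 0, -2, -2, 0, -2, 0, 1, -3, 0, 1, -1, 3], [-2, 0, 0, 1, 1, 3, 3, -3, -1, 1, 2, -5, 2,
  0, -1, 2, -2, 0, 3, 0, 0, -2, -1, 0, 2, -1, 0, -1, 0, 2, 0, -2], [0, 2, -2, 1, -3, -2, 0, -3, 2,
  1, 1, 3, 0, 1, 0, -1, 0, -2, -1, 0, 1, -2, -1, 2, -1, 2, 3, 1, 0, 1, -2, -1]]

/-- The `Lam 5` parts `b` of the glue vectors `5 r ++ 7 b`; they form a basis of `Lam 5`. -/
def bTA : List (List ℤ) := [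
  [-1, 0, -1, -1, 0, 1, 0, 1, 1, 1, 1, 0, 0, -1, -1, 2, 0, 0, 0, -1, 0, -1, -1, 1, 1, 0, 0, 0, 0,
  0, 1, 0], [-1, 0, -1, 0, 1, 1, -1, 0, 1, 0, 1, 0, -1, -1, 0, 2, 0, 0, 0, 0, 0, -1, 1, -1, 0, 0,
  1, 0, 0, -1, 1, 1], [0, 0, 1, 1, 0, -1, 0, 0, -2, 0, 0, 0, 1, 0, 0, -1, 0, 1, 0, 2, -1, 1, -1,
  0, -1, 1, -1, 0, 0, 0, 0, 0], [0, 0, 1, 0, 1, -1, 1, -1, -1, 0, 0, -1, 0, 0, 1, 0, -1, 0, 0, 2,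
  -1, 1, 1, -1, -1, 0, 0, 0, 0, -1, 1, 0], [1, 0, 1, 1, 0, 0, -1, 0, -1, -1, 0, 1, 1, 0, 0, -2, 0,
  -1, 0, 1, -1, 0, -1, 0, 0, 0, 0, 1, -1, 1, -1, 0], [0, 0, 0, 0, 0, 1, 0, -1, -1, 0, 0, 1, 0, -1,
  1, 0, -1, -1, 1, 2, -1, 0, 1, -1, 0, 1, 0, 0, -1, -1, 0, 1], [0, 1, 0, 1, -1, 1, 0, -1, -1, 0,
  -1, 1, 1, 0, 0, -2, 0, 1, 1, 1, 0, 0, 0, 0, -1, 0, -1, 0, 0, 1, -1, 0], [1, 1, 0, 0, 0, -1, 0,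
  -1, 0, 0, 0, -1, -1, 1, 1, -1, 0, 0, -1, 1, 0, 0, 1, -1, -1, -2, 1, 0, 0, 0, 1, 0], [1, 0, 0, 1,
  -2, -1, -1, 0, -1, 0, 0, 1, 1, 1, 1, -1, 0, 0, 0, 1, 0, 0, 0, 0, 0, 1, -1, -1, -1, 0, -1, 0],
  [0, -1, 1, 0, 0, -1, 0, 0, -1, 0, -1, -1, 0, 1, 1, -1, 1, 0, -1, 0, 1, 2, 1, 1, 0, 0, 0, -1, 0,
  0, 0, -1], [-1, 1, 0, 0, 0, 1, -1, 1, 1, 0, 1, 0, 1, 0, 0, 1, 0, 0, -1, 0, 0, 0, -1, 0, 1, -2,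
  0, 1, -1, 0, 1, -1], [0, 1, 0, -1, 0, 1, 1, 0, 1, 1, 0, 0, 1, -1, -1, 0, -1, 0, 0, 0, 0, -1, -1,
  0, 2, -1, -1, 1, -1, 0, 0, 0], [1, 0, -1, 1, -1, -1, 0, 0, 0, 0, -1, 0, -1, 2, 1, 0, 0, 0, 1, 0,
  0, 0, 1, 0, -1, 0, 0, -1, 0, 0, -2, 0], [-1, 0, -1, 0, 0, 1, -1, 0, 1, 0, 1, 0, 0, 1, 0, 1, 0,
  0, -1, -1, 1, 0, 0, 0, 1, 0, 1, -1, 0, -1, 2, -1], [1, -1, 0, -1, 0, -1, 2, 0, 1, 1, -1, 0, 0,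
  1, 0, 0, 0, -2, 0, 0, -1, -1, 0, 0, 1, 0, 0, 0, 0, 0, -1, 0], [0, 0, 0, 0, -1, -1, 1, 0, 0, 1,
  0, 0, 2, 0, 1, -1, 0, -1, 0, 1, 0, 1, 0, 0, 0, -2, -1, 1, 0, 0, 0, -1], [1, 0, -1, 1, 0, 0, 0,
  0, -2, 0, 0, 1, 0, 0, -1, -1, 0, 1, 1, 0, 0, 0, 0, 0, -1, 2, -1, -1, -1, 0, 0, 0], [0, 0, 1, 1,
  0, 0, -1, -1, -1, 0, -1, 1, 0, 2, 0, -1, 0, 0, -1, 1, 0, 0, -1, 0, 0, 1, -1, 0, 1, 1, -1, 0],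
  [0, -1, 0, 1, 1, -1, -1, 1, 1, -1, 1, -1, 0, 1, 0, 0, -1, 0, 0, 1, 0, 0, 1, -1, 0, -1, 0, 0, 1,
  -1, -1, 1], [1, 0, -1, -2, -1, 1, -1, 0, 0, 0, 0, 2, 0, 0, 0, 0, 1, 0, -1, -1, 0, 0, 0, 1, 0, 1,
  0, -1, -1, 0, 0, 0], [2, 0, 1, 1, 0, 0, -1, 0, 0, 0, -1, 1, 1, 0, 1, -1, 1, 0, 0, 0, 0, 1, 0, 0,
  0, 1, 1, 0, -1, -1, -1, 1], [-1, -2, 0, 0, -1, 0, 0, 0, -1, -1, 0, 0, -1, 0, 0, -1, 0, -1, 0,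
  -1, 1, 0, -1, 1, 0, 0, -1, 0, 2, 0, 0, 0], [1, 1, 0, -1, -1, 1, 1, 0, 0, 1, 0, 1, 0, 0, -1, -1,
  -1, 1, 1, 0, 1, 0, -1, 1, 1, 1, 0, 1, 0, 0, 1, 0], [0, 0, 0, 2, -1, -1, 0, 0, -1, 0, 0, 1, 1, 0,
  0, -1, 0, 2, 0, 0, -1, -1, 0, 1, -1, 0, 0, -1, 0, 0, 0, 1], [-1, 0, -1, 1, 0, 1, 0, 1, -1, 0, 0,
  1, 1, -1, 0, -1, -1, -1, 0, 0, -1, 0, 0, 1, 0, 0, -2, 1, 0, 1, -2, 1], [-1, -1, -1, 0, 0, -1, 1,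
  0, 1, 0, 0, 0, 0, -1, 1, 1, 0, 1, -2, 0, 0, -1, 1, -1, 0, 0, 1, 0, -1, -1, 2, -1], [-2, -1, 0,
  0, 2, 1, 0, 0, 0, -1, 1, 0, 0, -1, 0, 0, -1, 0, 0, 1, -1, 0, -1, 0, 0, -1, 2, -1, 0, 0, 1, 1],
  [1, 1, 0, 0, 0, 0, -2, 0, -1, -2, -1, -1, 0, 0, 0, -1, 1, 0, 0, 1, 0, 1, -1, 0, 0, -1, 1, 0, 0,
  -1, -2, 0], [-1, 0, -1, -1, -1, 1, -2, 0, 0, 1, 0, 0, 1, -1, 0, 1, 0, 1, 0, 2, 1, -1, 0, 0, 0,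
  0, 0, 0, -1, 0, -2, 0], [-1, 1, 0, 0, 0, -1, 1, 2, 0, 0, 1, 1, -1, 1, 0, 1, -1, 0, -1, 0, 0, 0,
  0, 0, 0, 0, -1, -1, 0, 1, 1, -1], [0, 0, 0, -1, 1, 1, 1, 1, 1, -1, 0, 1, 0, 0, 1, 0, -2, 0, 1,
  -2, 0, 0, 1, 0, 0, -1, 0, 1, 0, 0, 2, 0], [0, 0, 0, -1, 1, 0, 0, -1, 0, 1, 1, -1, 0, -1, 0, 1,
  0, 0, 1, 0, -1, 0, -1, 0, -1, 0, 1, 1, 2, -1, 0, -1]]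

/-- Weighted Gram–Schmidt vectors of the glue vectors of choice `A`, block 1, in the last 32
coordinates. -/
def uTA1 : List (ℕ × List ℤ) := [
  (9395240960, [-14, 0, -14, -14, 0, 14, 0, 14, 14, 14, 14, 0, 0, -14, -14, 28, 0, 0, 0, -14, 0,
  -14, -14, 14, 14, 0, 0, 0, 0, 0, 14, 0]), (3131746986, [-14, 0, -14, 14, 28, 14, -28, -14, 14,
  -14, 14, 0, -28, -14, 14, 28, 0, 0, 0, 14, 0, -14, 42, -42, -14, 0, 28, 0, 0, -28, 14, 28]),
  (1565873493, [-28, 0, 14, 28, 14, -14, -14, 14, -56, 14, 28, 0, 28, -28, -14, 14, 0, 42, 0, 70,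
  -42, 14, -42, 0, -28, 42, -28, 0, 0, -14, 28, 14]), (4697620480, [0, 0, 14, -28, 14, -14, 42,
  -14, 0, 14, 0, -28, 0, 0, 14, 14, -28, -14, 0, 14, -14, 14, 14, 0, 0, -14, 0, 0, 0, -14, 28,
  -14]), (4697620480, [14, 0, 14, 0, 14, 14, -14, 0, 0, -14, 14, 14, 14, -14, 0, -14, -14, -42, 0,
  14, -28, -14, -14, 0, 14, -14, 14, 28, -28, 14, 0, 0]), (4697620480, [0, 0, -14, -14, -28, 28,
  14, -14, -14, 14, -14, 28, 0, -14, 14, 0, -14, -14, 28, 14, 0, 0, 14, 0, 14, 28, -14, -14, -14,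
  -14, -14, 14]), (1565873493, [-28, 56, -14, 14, 0, 56, 14, -42, 14, 14, -14, 0, 28, -14, -14,
  -28, -14, 42, 28, 14, 0, -28, 14, 0, -42, -56, -14, 14, 14, 42, 14, -14]), (3131746986, [28, 28,
  -28, -14, -42, -14, -14, 0, -14, 28, 14, 0, -28, 14, 14, -14, 14, 0, -28, 28, 0, -14, -14, 0, 0,
  -28, 14, -14, -14, 0, 28, 14]), (9395240960, [0, 0, 0, 14, -14, -14, -14, 0, 14, 0, 14, 0, 28,
  14, 14, 14, -14, 0, 0, 0, 0, -14, 14, 0, 0, 0, -14, -14, -14, 0, 0, -14]), (1565873493, [-42,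
  -28, 14, 0, 14, 42, -42, 0, -28, 14, -14, -14, 14, -14, 28, -14, 42, -14, -28, 14, 28, 42, 42,
  56, 14, -14, 14, -28, -28, 14, 28, -28]), (782936746, [-42, 56, 14, 0, -28, 42, 0, 42, 14, -28,
  -14, 28, 14, 28, 28, 28, 0, 28, -28, 14, 28, 84, -42, -70, 56, -56, -28, 56, -28, -70, -14,
  -28]), (2348810240, [14, 0, 14, 0, 28, -14, 0, -14, 14, 28, -14, -28, 14, -28, -28, -28, 0, 28,
  -28, 14, 28, -28, 14, -14, 56, 0, -28, 0, -28, -14, -14, 28]), (9395240960, [0, 0, -14, 14, 14,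
  0, 0, 14, 0, 14, -14, -14, -14, 14, 0, 14, 0, 0, 14, 14, -14, 0, 0, 14, 0, -14, 0, 0, -14, 0,
  -28, 0]), (9395240960, [0, 0, -14, 14, 14, 14, 0, -14, 0, 0, 0, 0, 0, 28, -14, -14, -14, 0, 0,
  0, 0, 0, -14, 0, 14, 14, 14, -14, 0, -14, 14, -14]), (9395240960, [-14, -14, 0, 0, 0, 0, 14, 0,
  14, 14, -14, 14, 14, 14, 0, 0, 28, -14, -14, 14, -14, -14, 0, -14, 0, 0, 0, 0, 14, 0, 0, 0]),
  (9395240960, [0, -14, -28, 14, 0, -14, 0, 0, 0, 14, 14, 0, 14, -14, 0, -14, 0, -14, 14, 0, 14,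
  14, 0, 0, 0, -14, 0, 14, 14, -14, 0, 0])]

/-- Weighted Gram–Schmidt vectors of the glue vectors of choice `A`, block 2, in the last 32
coordinates. -/
def uTA2 : List (ℕ × List ℤ) := [
  (9395240960, [14, 0, -14, 0, 14, 0, 14, 14, -14, 0, 0, 14, 0, 0, -14, 0, 14, 0, 0, -14, 0, 0,
  14, -14, -14, 0, -14, 0, -28, 0, 14, -14]), (9395240960, [0, 0, 0, 0, 14, 0, -14, -14, -14, 14,
  0, 14, -14, 14, 0, 14, -14, -14, -14, 0, 14, 0, 0, 0, 0, 0, -28, 14, 14, 14, 0, 0]),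
  (9395240960, [0, -14, 0, -14, 0, 14, 0, 28, 0, -14, 14, 0, 0, 14, -14, -14, -14, 0, 0, 14, 0, 0,
  14, 0, 0, -14, -14, -14, 14, 0, 0, 14]), (9395240960, [14, 0, -14, -28, 14, 0, -14, -14, 14, 0,
  0, 14, 14, 0, 0, 0, 0, 14, -14, 0, -14, 14, 0, 14, -14, 0, 0, 0, 0, -14, -14, 0]), (2348810240,
  [56, 14, 42, 28, 14, 28, 0, 28, 14, 42, -14, 14, 28, 14, 14, 14, 0, 0, 14, -14, 14, 14, 0, 14,
  -14, 0, 14, 0, 14, -14, 28, 42]), (782936746, [0, -70, 14, 28, -14, 28, 0, -28, -14, -42, -42,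
  -14, -28, -14, 42, -14, 0, 0, -14, -42, -14, -70, -56, 42, -42, -56, -70, 0, -14, -98, 28, 14]),
  (1565873493, [0, -28, 14, -14, -14, -14, 0, 14, 28, 0, 0, 28, -28, 28, 0, -14, 0, 42, 28, 42,
  28, -28, 28, 42, 0, 28, 14, 84, -14, -14, 28, -28]), (9395240960, [-14, 0, 0, 14, 0, -14, 14, 0,
  -14, 0, 0, 28, 0, 0, 0, 0, -14, 14, -14, -14, -14, 0, 14, 14, 14, -14, 14, 0, 0, 0, 0, 14]),
  (3131746986, [-14, 28, -28, 14, 0, 14, 14, 28, 14, 0, 0, -28, 0, 0, 28, -28, -14, -14, -42, -14,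
  -14, 0, 14, 14, -14, 42, -14, 28, 0, 0, 0, 14]), (1565873493, [28, -56, -28, 14, 0, 14, 14, 28,
  14, 0, -42, 14, 0, -42, 28, 14, -56, 28, -42, 28, 28, 0, -28, -28, -14, 0, 28, -14, 0, 42, 0,
  -28]), (4697620480, [-28, 0, 0, -14, 28, -14, 14, 0, 14, 0, 14, 14, 0, 14, 28, -14, 0, 0, 14, 0,
  28, 0, -28, 0, -14, 0, 0, -14, -28, 14, 0, 28]), (4697620480, [0, 28, -14, -14, 14, -14, 0, 14,
  -28, -28, -28, 0, 28, 0, 0, 14, 0, -14, 0, 14, 28, -28, 0, 14, 0, 0, 14, 0, 14, -14, 0, 0]),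
  (4697620480, [-14, -14, 14, -14, -14, 14, 0, 0, -28, 28, 14, -14, 14, 14, -14, 0, -14, 0, -14,
  -14, 14, -14, 0, -14, -28, 0, 28, 14, -14, -14, -28, 0]), (1565873493, [-14, 42, 42, 14, 14,
  -14, 0, 28, 28, 28, 14, 42, -42, -42, -14, -28, -14, -28, -14, 14, 14, -14, 0, 14, -28, 0, 0,
  -42, 14, -42, -28, -56]), (3131746986, [-14, 0, 0, -28, 14, -14, -42, 28, -14, 28, -28, 0, 0, 0,
  28, -28, -14, 14, 28, -28, -28, -14, 0, -28, 14, 0, 0, 0, 14, 0, 14, -14]), (9395240960, [14, 0,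
  0, 0, 14, 14, 14, 0, -14, 0, 28, 0, 0, 0, 28, 0, 14, 14, 0, 0, 0, -14, 0, 0, 14, 0, 0, 0, 14, 0,
  -14, -14])]

/-- Levels of the enumeration along the glue vectors of choice `A`, block 1. -/
def lTA1 : List Lv := [
  ⟨204574425808772645887330345248344563376951457415557909776349219886766599802811509252754432184377714412732164405596081481236769240604400727593815506942,
  12487184736220988494010803380383636588670462133639566356490619241762472480650427449948585991295409198253352376422956839309293513436338239217467394,
  2, 9395240960, 16384⟩,
  ⟨285800254913361700017750863488092570037691720507313472036853551936891834734545315338913903499168048683402466378667060378911952449112461148162,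
  3121462750061078869681579478929678213178560450944463837387120106073434846985031074804967189159992803111143528655027955835069063726839172845142014,
  4, 3131746986, 8192⟩,
  ⟨47610844328616076567939739705352064383763792773582120691994539038853566360094357765035504104400150587081390489811836287505710131203664642046,
  23258306820816611100745368396200779636447440421955706613202654648810025705288538069752595177058445508742126176423949546413521129225453570,
  6, 1565873493, 5462⟩,
  ⟨133081376109842964470271955192292948981478769304247303526430391354839358795226569647068665048035955840972698226035197863154969083906,
  726705642919497047584853535932812241404659881918013812977963768789284448754602696756543982048715529604921548908040142735671446659530750,
  4, 4697620480, 8192⟩,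
  ⟨11087294200911233959108401389615160594473503287448529864239823104235760659334648485849283010022022098274746098137239437942294970366,
  3384575572025479205255346957174219272245014054736436442095218222724571887854006310614614394536214114818745708374849373601660930,
  4, 4697620480, 8192⟩,
  ⟨169204506378365706167711649111408372920240829159048777557046923784717157286333695471574166517176388535413415659911478946037756,
  25821631937935163978669744981013275830769679807214579823167805530725270162009059674271355390724385569934618494500779851780,
  4, 4697620480, 8192⟩,
  ⟨394011644824022988700787752972473092102671456113053641330992092151024646335844618240354973324276232838146401931231230,
  2581855866442084566667218384250039401237603121373110459189328364448496597370505350011404998306813555203065025570816262146,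
  8, 1565873493, 4096⟩,
  ⟨39399601398877652383120866413583321888705714727200145439036900354030870698632214300586501175130598318830791254081534,
  2404797516826829158173686560291916374024543265301228911393050214851072864996310827765079754317321975836736225282,
  6, 3131746986, 5462⟩,
  ⟨293563903233622444591378100801521220933345728570412403679160825397290907138082296898046073257134133278801920,
  600933337286867683895115654677268757787241386791959474497387327886848219522201679229808897513243653842896551936,
  4, 9395240960, 8192⟩,
  ⟨839908550355930588082490972870893665379178078482120349237850250455498218259720575635042042716419784700,
  9173154555409930115855201090235476869520880778594642374601117507297236006135679511704439170397786326433796,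
  8, 1565873493, 4096⟩,
  ⟨64078633285439010358695732566781180234820675313931830206446919802834501535681517676190965524594684,
  139919967752827324149481446802960986202368022901851664101042871890434157447224377568628652363950850052,
  12, 782936746, 2731⟩,
  ⟨2135400380501049430364380151340624216917130660011353589655163287075566230038001106196592408526850,
  586655419860652030641554828927897685573862345299180291878320746653495742639443826369678409726,
  8, 2348810240, 4096⟩,
  ⟨32583623909338422099047927246249123740852514747122909123091270785762158419799704448574291970,
  8951712013355281247203768300926835970979551532070887086976403907942376413682850360066046, 4,
  9395240960, 8192⟩,
  ⟨497125937111060224902277875518725214991830755067219690761430218467694140257946919108608,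
  197299298726417253104372628095625108625395730128026679033758425465356754586456424448, 4,
  9395240960, 8192⟩,
  ⟨1389490935855598190238339140157054339902745604069219107089636046742608960159742,
  7587160869320898585088909734389213674731998969443350785782802589495852255122685954, 4,
  9395240960, 8192⟩,
  ⟨115777954568639400496985792071845456765019603329756532884694311688145385684992,
  14134668676794926585192936842451088250381335884031154763272319767743954944, 4, 9395240960, 8192⟩]

/-- Levels of the enumeration along the glue vectors of choice `A`, block 2. -/
def lTA2 : List Lv := [
  ⟨377433493986279100182411759469911583084433193697713636939010893021186,
  1766469631284398050483115088983448604244399463681921244484667190399598590, 4, 9395240960, 8192⟩,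
  ⟨2468219172222019241581106411446015322121694074871201239870210048,
  26957478447978417775425433980608184658315022728465701279863740039168, 4, 9395240960, 8192⟩,
  ⟨12554011905907705414050899765840136544054284617688384012288,
  411363585318395602833328244739571786109139912123777277453139968, 4, 9395240960, 8192⟩,
  ⟨6276718611501598095411805517318866058352434300432890986492,
  383123885082668423983905888800357749921144031143526404, 4, 9395240960, 8192⟩,
  ⟨95778048256245304278552838645861891442486001639620616,
  2923047872749368843850551032432533685193496854520, 8, 2348810240, 4096⟩,
  ⟨1461457035159993046242566507731588338623285428228,
  44602170909871961118324984694681032647114748, 16, 782936746, 2048⟩,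
  ⟨4083305325509240961471732400401292722176, 22296661893205113900574246540247960213258240, 12,
  1565873493, 2731⟩, ⟨340261598050421809986983270614984032252,
  20768870516653476391336816784179204, 4, 9395240960, 8192⟩, ⟨475361721419988436311091707900,
  5191821496813407640094185237512196, 8, 3131746986, 4096⟩, ⟨4835629490356304773906428,
  79223326884773981288770043908, 12, 1565873493, 2731⟩, ⟨184464625944378605572,
  1208741354988684796100604, 8, 4697620480, 4096⟩, ⟨1125882726711292, 18445618190982840324, 8,
  4697620480, 4096⟩, ⟨281440617496584, 34359214072, 8, 4697620480, 4096⟩, ⟨4294705156, 262140, 16,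
  1565873493, 2048⟩, ⟨65532, 4, 12, 3131746986, 2731⟩, ⟨0, 1, 8, 9395240960, 4096⟩]

/-- Levels of the enumeration along `10 • bSA`, block 1, when the glue vectors of choice `A`
follow. -/
def lSAA1 : List Lv := [
  ⟨634517474689943871926583598343013942368012164467317394932842684866655496306772292198077570486704162499382056936152849439934750057967323204448839842786356978673653243187393491962036986640613555761622383740825057062567798750025010238118918895151164591051468985833246968414106663819308765342924751,
  4151424361166467803455669828774398773572238872029018347972432713252309091296208853108978470939261849207526053988749038136430098318626766987695132664789075828748572156953924523575084221582600136826690417428998615298060595613668286325514790752209539350809704366994964911448054654401317833998385,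
  7, 357913941, 4682⟩,
  ⟨13234430057215861377961875168779564406895526001685469054998705970121200174631698024704885191806863746522965952606178865572815404611810325127106181295905512431452861452764709387734354241408027492007963562286430511890534188694020136495644024763526318989483743066018912834617466856734195787,
  9732079581342783218975420512706408746469331331593322057812907751242827490591794404440910180690203395478781950278802489317886354460591283721450881115016747907099824838503708320483055301248645620860791629916931948361795063736700854809250719590705439293838255060038258634247211123135179915189,
  105, 1619520, 313⟩,
  ⟨148325047681771291449063526317800967733324408116711828397695754551639132758863653573250271954094626513303913494611404877984677217834193830284781019573612196812685800054416877720551959489490411048937036711522697684490958456216769251340683768955729729953218950982300300648504378794115065,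
  376643166007014830742723497189088279801612049227617507881431379954932957176783781266559495521008545675958884407892427060781306720296740494302038536627265765611283990329109673716681493939362638086882866712446036115816414471018757475026125079136078347985559563114090633872156087353351,
  221, 404880, 149⟩,
  ⟨10836603001912550856648408446034874168202253545555126646756792440587422488367856858261253442383215791475974560606625606175563580158670958435116896984431534784670349174138508471585940941743109548506318547042389323134154911315018967138840347338437742923451470888129256035891019773,
  2258171130881423421430434260850078041071147419396636125574574780001948980649456199454556609253167856275477644504018882588487805019610777448228137773887142296060927246723474824570843273282954364923904563689211634733976057348935652554096967361933806646438189620197905767193731399683,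
  15, 89478485, 2185⟩,
  ⟨34489181799051454198072199945902830325513259563258991419856157258061568175383700298776145808243106784513845791548632237196546110337379339259755737993114631509544732731058883125839307067212744419481266932078255277322228447043758329743882684935082685215350676387208666793836551,
  133128593455503386874740198386001999305918795844268654321875768710532702573820091739263473610394681351535358729466947902687419322188660109495584499432576602723296991499914070242681675229538821369729195794273165932016735150008020372630494222513817307867724050505490665111545,
  7, 447392426, 4682⟩,
  ⟨527149875331076403077143487777981941211355124399790297845054763217371726294070170796150107555527648111369799837717958817750630135149602679988481832200529774415221355469880793473370896745205017556991528639412118471069664877398318013079487539242789671169713689852408561660,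
  1144655804588843275196297138534665307492201636331224282905945809302176262654688678267148332129539783304595155539169861131717424353082857262057146262409802493165328529124290695360620931221423496032704268799069933078363415353243725758909359524246805319824891045329436676,
  14, 134217728, 2341⟩,
  ⟨8059904628010615038090763446918896109720870880044793155269448344859050276006439279706857483374069252806748430896242019175541531403506769237230780630371038606069722629415844949237851048529483771853412090252034311857538540155638492245153255120413655522772397293043711,
  1230185460839526611686884448849961428532898582549406497530247466906489080304791863230039325777974590016629425674617159943508261756376777944679856429186871658345668908817589957881337890597420972275057395231136203802223588739586045227556933526720400224712400830465,
  10, 313174698, 3277⟩,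
  ⟨122533943138456379942519234755941019874819117783628376430824314130060304901082697771583911505505857666296466176925769011360457172901363211737275923146557831711768528118060152497960830533429227815826766807443715116094040932741094951020622291944305929535359221757,
  469212584679828625328212927282644540912751397086689514106389488194650620870794531426457188034291677526242873396445288192232030975332741863423852347830374430322357781669195329122488351154530619623781710123201510818507342167017815861409141984227638625607417859,
  2, 9395240960, 16384⟩,
  ⟨1875647797696621349532057545094096256897293932511918782049891449920012149671976455402363369820059590453909596644944371913267029570803598796194707796241325721566028294711634475041207219107025336583816351633578778857983152130091211581357034225097895728513030,
  1231409504553707960731878783217958430645965875457102119583397770645740982831471584489179825023254758228908151231993741528643095771962019245657430418650568443903435936091169292949868365261016496178590345896877680599432631079942698459119246712003688005626,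
  6, 782936746, 5462⟩,
  ⟨33648394471551750444055196727574886281701772624200426767286723496434659179003055788727590258781627765436401615758592480346883999595633223081299843765492211070330539922190226187448803051787087357793340288789296990087465269547945221152067932712206340,
  28605255524003409453974728736947263604440037399546452102674162978814629346173901103556556675565846747663923107603241127594049976757477743477363726197799087409442543768057021876079352458427191688887246667942955950485843088337189638394206719173762088956,
  12, 195734186, 2731⟩,
  ⟨1286905316932844581830754221281890393122118021684382256529329882448150462988839910169991353977330839782545565113333475544622843384075477607110625108876756166292071981075785709601515301579233461500713776421656536400289211010882666003042175877118,
  435708088556281285124266412735426460600556763389610974943199822069319793954627495529058589362340851158346109055537907370317145661820291232299582277136676521734600175149954672393834783243937410463136737521059807811071795652373174701174673691836418,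
  8, 587202560, 4096⟩,
  ⟨6658552258947231738037846093682599785924605293352265870142175457757652796599552731724975715168200066459110556638450631245039874452619527582969685395794092687898340807450782500915077714625654983984215423135443231246070888267728990620872736767,
  9462173932622536042005697038658011220153028963642290254082354006384441218079339796456485703354224283819353954982609200848927201499837497393670656536737358196816772063232057548000571286159040744749593000443370735619859769747470670291140609,
  4, 2348810240, 8192⟩,
  ⟨124197230626056536922510593645882546163149932570847604265654638623140533320315515086915364679983044744253945554451505044889153649310462521007812943114992362195685299661844965504918402673812951436323046674288230398033770020407743873020,
  101621628466393204237001009162232684915152132085188981503343259725452134701934080107493532036314192534218909973412730508594771516121798013436684997913983854776707476008840574444637267356478622728632112868485114265660479841391281423777796,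
  2, 9395240960, 16384⟩,
  ⟨213206276453050759097073244778110140266278558685469519555172139638252797460266788727237173292302747776087050129495693606872219052231730832408297387024525291857565676897629343864860571456325358881179656949166186862264596228472824,
  1552304886024255884389882415217724445116619738558011141619496865886412699888916619542151171655354175202711643647001577512564707825062582660611878977654156613912597410343952276206400425060142119466381819536767302564030582257587585032,
  8, 587202560, 4096⟩,
  ⟨28556081656032894173400341432622057817374824571845983309117886007497885791150955384075901506845211916502715163443770910056950815019350511601376321530095846397769639597207736602047456688081364275934852443099885077345369063424,
  23660990004475390066473869685155856873714699411217592052870265018442742481127441670514337319145109102513546886538385349057160762260463046818786307928976208157576457899783436574162498527680791390015797923339927287024901439619072,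
  16, 195734186, 2048⟩]

/-- Levels of the enumeration along `10 • bSA`, block 2, when the glue vectors of choice `A`
follow. -/
def lSAA2 : List Lv := [
  ⟨82731838290972034735236405921718298719116466584663732744763774455426727497155020406535608507256349917317147157812047571390763163456818980740800304652944568324098885322385945153638357375966441186957341343630943103483928,
  361391054876360867574750695396270648210254184250417259426730683375969383558736252967545326278882183262357609636622539514428391235668977222315457995021676157054817800824465277488143266921690085107453984671947188943710584808,
  2, 9395240960, 16384⟩,
  ⟨2272328624638014111169841955113770629491722949659360143366625404802459859021801497412779644255146181223504116211691921417826573548726191489704075714533723465583174390838615656101603182192500224180856691414938877954,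
  5513379934477349284617558365475800024978621386135452992753902770811396427565194018631247222299553441652561389435124238895229237617620006128093407425236532890657065441786341307337320413405119077361282736040683753242622,
  48, 19096018, 683⟩,
  ⟨30819541159362520894830443506168050408633132224835178653737099853378976125465698313105575923712589731028420346587501400302249294637069987186523878782234824204124237886441565260153004813664482253759493587468265,
  84131354883614613594961007682575890598396803712945946573318757349246335492627827455505559004517702629900699081352263982008008666708303791822858512451647858775079454500168672005806467121335498994086932534185033751,
  82, 6547206, 400⟩,
  ⟨1283056759729159465997100052188844731704723822250868011183895367239815955876719033537845216051214795053007119648338631215179274289659708612140218660400910078581523790894828637737166095060308455364660479262692,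
  1156106859798909794157243436186680783152106172758419357677118860948730230966714048499153157180822922330519232564253968663360537045321627881220492590271769552075738189264281743220564579418770531651349774364,
  70, 9256395, 469⟩,
  ⟨19577294516701760388657332131352476332028711679023800678700497450845238445966752201033486348405891474728264109966018961170280874250005608827982427005509014430636896519273633075522471773847071168814055389,
  18238725927609359134069474254082086060215451463663166233164751620043019299448781424160886829637364006746248934476723397630423764902689512188458507662095312612608013869874606978545371534508816176054307,
  116, 3483589, 283⟩,
  ⟨298401870471413233130331264017323812006559625611429881603481874560330340711715871539654841634486421526147896300002895069319547477697995184340799944643422373548471968025455019280078458774323184730103,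
  602237845074952718536558333850480261642997839611742006956086292716556646472009662396660368008830529745206100212188008193747474922065520312686467605892655492810754953419304488552784288750240333833,
  93, 6314006, 353⟩,
  ⟨9119774243444799722128078307570585687473122088677562578526281244841808634355164949575671292903857508183469899908430828607982669500516192949740636802892927043772350647348384394222928532733962,
  4553320843378750418919043527392720739205755385159882368000666236654433358574322221556337140024467542270458839673685976482080722051874921805302920682919321261208222323712916565688651263713869814,
  32, 53382050, 1024⟩,
  ⟨139156225215892918727146703934409044260666008812910952085277624980342452756042095354627757670224873707227941496876739836852848788540468846020391834143911022672631062737378411893978300418,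
  69478162769263404240714558705310758877083763117904617285512264457222952945325583064952879739237908057485434252924424641246653998156275174437864210822750226371309221268199281593032690892798,
  22, 142352135, 1490⟩,
  ⟨2107141248241612463990722599969366333868092716008182449402951983452912169012514454454759015019692886725304443449322014949012346069280802889985450479539220257393516403447856394797054,
  1060168844385292584915185690504967888325318142738055663949485324417354207552691971023870245515438878451053354529043680015744146329236133675929054507053635483630269025267338581668659202,
  6, 1565873493, 5462⟩,
  ⟨5688406763870834347014387476007578481339656974174356615007370382400067984876196775587843608375677264562380003037295217034886304552395253498574160037030380490704608088402296832,
  16203356784177507909842078830067590667661028437722844783993029073721712476596796250098267816341248519173710614572356412526696172583774852042934530660720640272092036811448744280064,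
  4, 4697620480, 8192⟩,
  ⟨247281342668098517515657436332851550190096186949361432977332698961917811704526371425054005852863372866730970346775890968853486889188129844544062287386025212388106792427454466,
  49058805006016544845084686795639845035162151850406936730357130979413402005495745262395208379672122866701079240248370497878145118621365423483867715867955528499979721244670,
  4, 4697620480, 8192⟩,
  ⟨345555241223910924462857959902414429569263548761604049326406048238384622962268178128338604184034856649042973070729943843102168632107087723731579114882762286007451644,
  3773616869580317441317091723028366476487351956867678824326879894197385777769186583907998386573474732684819332057693114955927482461292685544837702672317813281363387875332,
  4, 4697620480, 8192⟩,
  ⟨16694316405809407220505374925954201705089943600365160774136229283807212804129433196483634086010758074589989935101557040581543743216892731098041354603064985780222,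
  57569402253747104292754387523454613591827033170664167742915535100147713819790915306887237148043792213444397666173965900536484261767110143288210952960471032359944194,
  8, 1565873493, 4096⟩,
  ⟨877889638158688085101105419539153703550511589563720659339124251174697011744527195526514596476372920277028205798518862245846047705842756662679823672114430476286,
  804462338029958416577882743264628259976128854622433063367071601052515730372779145173037528293262760065722059590687582905566758120973745329651949148296839170,
  6, 3131746986, 5462⟩,
  ⟨15548368132425691322153107269152866190089271622804101716188849062429635194277327589416780404388644672678875174878247724519527240196976992060540098445312,
  13392259561810171408251871890936693261289276548969589276007372594659334394879269649212457517762514783017352983011607803129234355571749592954373108907638784,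
  4, 9395240960, 8192⟩]

/-- Levels of the enumeration along `10 • bSB`, block 1, when the glue vectors of choice `A`
follow. -/
def lSBA1 : List Lv := [
  ⟨10388368226073788507561052138498637737315796168237114694934345396609104173292406694822807230889904656736184320623101999662449407522127552419669481922903604682819241654909068309504259194030332523639834790206955938240854039641038045087617592428044857789937756206090563024754722350748789385330687,
  628280530825036551222478216033289703404268607171109298585880772183298701224776094356363741726753519691853398669518496478408730748763822419016865493528242449819582573689438348176107811668165823374809239368047099739625005305997640479356816093475329272612340933994151370300799996122961293791592449,
  1, 9395240960, 32768⟩,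
  ⟨9657135040978259922436162821041274984056227282951075573636595169742503529089125137567704494810649440816199182508454750157338602177770923499775179735425700618922134005699124130079762542344104693356992067537063452600255134594277359399093655103768855081764017667511688147432951021225929277441,
  88178970421739157917219566833913326819999574643931953231311287470445161677300964897910571071360818409105733722953918026120567687432170546802807560886952800609143694257348899791027113145948954995807525942154926273430463331117515546652708511700110531063721135592589399648877568765984833535,
  2, 3131746986, 16384⟩,
  ⟨146968190959196242734279860806588234124366237796144069990615527083264044698243707208372937445916801972364989850469546216316337585964218467452387607482423497054776606197707377946262483696569377473002715676071414864296670789831849191247306663768256158759963211668598223280507776149684223,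
  1733499888582063545526389008401821888759782369795375914961658848330021017796730146143894003698833086614882528549751088729120938590272103326695450627815965523520477847038609448006157286860396214021203902163728856310104080855938817568403230266609649541241298876816168001868758731784193,
  3, 1565873493, 10923⟩,
  ⟨16549216065351564977318148951243075757229461804625527078479929946622192582766511532692266733117067956816411700923082734630339053690990215571164194739942455465377813760228239112843799321712682454800178067288838007628197516441344928764388306310148162074262605331665136253877026817,
  2252458517817984407309764520344869839482120211137565725142851642495914210555057544780125595962434004110137207363702425460033029546078458191092090476131631375380219782137385093929585414902984792017610704168965186049482014743809326592471419402962096227287378485754369886975745392639,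
  2, 4697620480, 16384⟩,
  ⟨220295715896729628436584168125989774044074965230378146904820064708118406808914248626851439489907815069399927059538083017502325472138742458989220606108153716501535504905470576126785590002688110636505257917586669812570142492834795765014470829167283181218676979517737765306366,
  34402014676610227956510355976162842550775103393872881927273212962063982471148606141888557842363593650795981223218561102081731204187429256910262101886439054395766494217653326619955203152439595130214490869954941773441675039700931554351498708328429219341999723458196419693641730,
  2, 4697620480, 16384⟩,
  ⟨525981013366408912001075051176598515573818425028981715072621664773283663171165730259362341397368815460403368393960128854588707337424918790572270196393703887918099645714301113300035346211830755344034930683363595099966968224261974891491877230232182691064025333800290418687,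
  2313517769256334351264733739918090945028901007139807055339044253390239385559129215054914490288372434271026599296999824293640222077766746678268782069235688990287038284703970868696171464595685708989302224847593304181060068489586847346519668534853785425513247097447579649,
  4, 1565873493, 8192⟩,
  ⟨32964369000925867132838681402584255566038086233041139294296253347036092323652533846259505118493679680945943329643120069008688677045354196134835979394976193059083387187852646612876068955850141465655123875522423582127764718265349583672748863737860000062449402118144,
  8028170444470528697569611649965161815583365692394301422472682338978920672763091537723828017581353547715819116992273516266476350988217791819040624507405249284668984911136809892582856317464231051360032023771743024479212999026112728706708063190202515922934660291756032,
  3, 3131746986, 10923⟩,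
  ⟨16891712373691821345056178013250025452913997134566439400849454159756840999269324032577982606387890045070288691353177100629344034762301857262531551882564800608851413928093930560293248216252767451027557436379983240010591057786953081934710607335066486033219586,
  122986264010762516746502391505210414390278955183580499505529854164095198680954222978977790710933761453777638761630861122452059859841933651743437243942505641341482034485801253896523025636367505667999520960130536643672537683850325813800096723321198501674933420030,
  2, 4697620480, 16384⟩,
  ⟨1873127570656522410804608865418468083282182521747722736646907295786458645615251669023116466153667414755950544010009847183646784473014141437266868036137072416649994749974593329387329976565461615907931355347250666695434667952566515074189464206452414219943934,
  3751636544652646688180558458846132045757376639653147522567551904199245039556257963736083491415430456187960786166518471148888193561419378173497190522903873359936980673132314946827110906824737172063586632224989843147916808604639205626689265357485196574722,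
  4, 1565873493, 8192⟩,
  ⟨28638030221882495114979663815334475452466239327167618204540959112568996754915214876632157348633930911194824511120669570098311608684075860224430713768658573467009802591924879596741164951922075820025859564940110513892354624248167199589481265834594271226,
  873696592466089439120118340363038255499845003034324900490589742067250437689282713126917190697464234534998098330149976085252072997516476014312272906006153503071716054332505525636309556902956219180443291634733583575929358570384025877521271880024070,
  6, 782936746, 5462⟩,
  ⟨436688274163066282092986149034047069752182841944259378577098222450814704151201777009921423973206785675849466488605193312701648928590173355813679529657371452853641545135032008050423355108832431237439052879265226296572129296924216836793426787565556,
  306719710147847613111017922661281241496039467035978622630929500953240266414558429307156743111396322279188132046047533160119576614193354093013372588181825047250701995998450053012943436684212687198398418216238050899955566459840530384289080147980,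
  16, 111848106, 2048⟩,
  ⟨8037751002512819832806831376321379363078747155709371377188505333103424529794143338409890109603568608555313154866331174078432478711425995110370806356479857971355705597503185229235124167849203700112890399818423459484490718217494366288674821,
  6659976681877341454247044959344936417781679575160198789019069306430933813287837928183022310761950722134374597438566909271810369175407939085252985245974350188123801873916511373233843161743964821028852125736068178522206257319258966924875202555,
  28, 36275061, 1171⟩,
  ⟨267028373911560496424330130682120530493494703552969971816162988358035160105859294926988823006861438458611846688227831379909871541019390016932787462635487006898172977208207374245788967596464803583963834146977576654964705600410658734079,
  101478797323107700277499189625196446930821787314206859135792751375717240075148536327653458577987314140504552072278954182259750798230089085940760023394463360132004988331294212035896396791555970876484472081012424919403548905811278508916737,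
  37, 21160452, 886⟩,
  ⟨6088115383261371292686216392747753297167108366933903935718334285927249830483800791657781715390415995459006092216444352581072094825348199941556431484602721713984528923569375051879102058940324743187178510651602482976794036396621825,
  1546429976917447563856293272069754801959718908749762707203333703740123702855893085539220627113256061955028724604914628853590507949289466191502730843556578417490470447097280530498386183572658120082075820683064866267916052817419436031,
  3, 3131746986, 10923⟩,
  ⟨23677979046301240605500137635927560303617148058005927926382046949099323422533993974782865218091887632305991235628872040935854930952216924355077672548675772703481326913241703786323496840696501447419721071677385676308896636993536,
  11567039830182355147132390660918627914926177783510109797335955350916944384598651115548002560066682124058366072957079031362782123265472975310011701830531300492900626138940524441049143672371306872011704105641495793350171688960,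
  2, 9395240960, 16384⟩]

/-- Levels of the enumeration along `10 • bSB`, block 2, when the glue vectors of choice `A`
follow. -/
def lSBA2 : List Lv := [
  ⟨360955324828173685003146649440673977970222862191493043383339228545036675428997199000904588275744943710922594643626745264160919706680808962355011307526511777154470874283147830234715317199495359414858871104014031808523403362,
  518461886478154606339282361518388538750438525508879776136218605388134857236208987047273611644495901352332140153606297838862292151625078941187487799817324468671025426639833198581588079570692133782070909276788078290665374,
  168, 3022921, 196⟩,
  ⟨5497810138970780390328843930070130559494071904784757513966591733033053734339226111702923248259158229853907142128887544304868160057543434140605038316121488172820689430154603717479289583518930673871492818087457445249040,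
  17842124131206908399884277360783236114041204300354838930677663183145153084989708425736753684650357979877751422448386511778904133625298178978073184829578441301959186022576205514132433068380903713970774644641246871536,
  518, 329773, 64⟩,
  ⟨91178506041767040291013386399869525040977608768990271590967221171003549430266744640133000427893089881242687650636014770757614493355325107316073308418395182875238002798220018740949245915108347436357383471759296,
  84070995918732209075564824739682189123764459236401791480381527227928710919323026409178531580013522129750484814048215468637553301509585536702728963022011698416408340735256893552325670880234055128904334644300742720,
  220, 1447648, 149⟩,
  ⟨1284114902976070629968810810892637110708913219761649781874476280344461025912592304229733726307636674312582321835139684504790119017098065303897337811712216126111760893909582144035524794752382817123550819516412,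
  97963612887745822446484732394301778962708661976648667096205756303660195093443356610642900758943662755317045763200679052515809606964936124101341278965722021838635174510775444861864887344408772761009520644,
  236, 1244073, 139⟩,
  ⟨19587460054144656833436944990676114057571307908449072003981174047399884449059337089147399716105839617420932907997398764307423105543722555907811896978582084733936042319965266242273682688568228745453436800,
  8073188484712914354456614930444360517619222038391840952488155065397016206863893310247519129689221314077450903096920260488192471185742432358988534589025009313462213178241440227334456813351239536672896,
  8, 1174405120, 4096⟩,
  ⟨298885487645158886292463593942016191502272823660408259585442618743566095490991925053539371872730422067681401103927207974893948889902140333800173623708869633501840271033355801127358456024473767247956,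
  118620671329299556404228409158100765929799790633364024995342109480801867195956148512130129764829988211701296287875102619346062717920370853312788540445395539442451945518522641272787038599657815980,
  512, 264983, 64⟩,
  ⟨4551789296353687222180621370184714975561460707978651216229839499512866756799406434827042750621566372199659203919582026136232508812612342716770396919882734976368696752957337778134032640083427330,
  10651321268507996460550235515576349331767799269908714349353018386408410409270951678870060695805027578983105654012381174456195908763095281482264399839479211883297921402927171948841552163176446,
  277, 807567, 119⟩,
  ⟨69464353197664654921978202813621638988876212889208108548740595971402944709771253821759898525785326621516928737221614881156683278718409059584247479865739135327355936029664640073076926119938,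
  152965796814642237463502595623528932468216237509419688856946110800350688310371338547608971122806309675733457199686499926823568226406583699637122791155002066625916301272019931849743073278,
  4, 4697620480, 8192⟩,
  ⟨1060249890353397005299053061654345377468730695546509631036376131239059953695914817149934924820560730569990838348914162316112947873325461872799092404199726434179041849927281625969852402,
  2026095280137192080123351450591877190455539907554215362512145161747166025789668328390079709897840767787820623578839714580210801979952606019947553333448269708620691743504812093603854,
  4, 4697620480, 8192⟩,
  ⟨494660802255147790853426391684965748176357115805767114515918238146303523948638034667964625197717147013056795686894484262251331376927174826761696971141685826875151635393347592,
  16208550530139123596398239791151913280394191737581213373493520525865966241057723808839187695324426479291259937779706813259468807556950320121606343123786528966755866267901753229304,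
  28, 89478485, 1171⟩,
  ⟨237754737915672506471508483889170969900188484953745727013283892456810004241052513530907864614679650219836960840992558212509313113039191622702527297001276730113519920611332,
  247092646735188861554031012535758019065231160616258094187049772200440415102290814656785493196628365339377834465175146781138855721193712018344843627804891891186493252228087804,
  20, 208783132, 1639⟩,
  ⟨1612379070976662065129349715421130402451245161678227478762261935541303042034500670653410319259561921216353555669945086235872870011663699577724363276203034961938022403,
  3772350045750564690176425231272847760514469975254762200897444038310082859350114351415473314858399205620252021475093899813534711759913128932983709888156493008687457304573,
  9, 1043915662, 3641⟩,
  ⟨57547434619684222499182310925736211244382495916163539512111151229861349231949299587861073323111106588528872454263940453342635704752372336822885671938215312825122816,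
  38661950468691200792581972644356549149627198100993391578520099570171800645745152222647459018696382990115201845127004234430100757954699196423322376858784520601600,
  6, 3131746986, 5462⟩,
  ⟨737415319396983655481727849186760877080470835284253362442097944397662154868394347998422294924485462916190099427108379036394369242048525308533009291025776642,
  877956685177321059862201574433231570933407247583058839040049224831351865320031580323689211709741697574177737758682441449715220094721681882700942611971701538814,
  6, 3131746986, 5462⟩,
  ⟨13402897775353380377987726929363648626881430624411026420632717152321914962375436215404542732884162298844839365443728468724198092987440476489066175864373248,
  4910154589216721586298068842197500597935196181366957090844291399849067698110761397331565282741128845192492742757582129555789824506093457367473141710848,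
  4, 9395240960, 8192⟩]

/-- The `Lam 7` parts `r` of the glue vectors `5 r ++ 7 b` (choice `B`). -/
def rTB : List (List ℤ) := [
  [-3, 0, 1, 0, -1, 0, 1, 1, 1, 0, 2, 1, -2, 2, 1, 0, 1, -2, -2, -1, 2, -2, -1, 3, 1, -2, -1, 0,
  -2, 0, -3, 3], [2, 1, -1, 0, -2, 2, -1, -1, -1, 1, 2, -4, 0, 3, 1, 0, -2, 2, 2, 0, 2, 0, 0, 4,
  -2, -1, -2, 2, -1, 3, 0, -3], [-1, -1, 1, 0, 1, -2, 2, -3, 3, -2, -1, -1, 2, 3, 0, -1, 0, 0, 1,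
  -1, 4, 0, 3, -1, 1, -1, -1, -1, -1, 0, 0, 1], [0, 1, 0, 0, 1, 0, 0, -2, 0, -1, -1, -2, 0, -2,
  -2, -1, -4, 1, -4, 0, -1, 0, 0, -2, 3, 2, 2, 1, -1, -2, -1, 1], [1, 1, -1, 1, -1, 3, 3, 0, 1,
  -2, -2, -1, 3, -1, 0, -2, 0, -1, -1, -3, -4, 0, 0, -1, 2, 0, 1, -1, 1, -1, 0, 1], [1, 0, -1, 1,
  -2, 1, -2, -1, 1, -2, 1, 5, 0, 0, 5, -3, 3, 0, -2, 0, 1, -1, 1, 3, 1, -1, 1, 0, -1, 2, 0, -1],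
  [-2, -2, -1, 2, 1, 0, 2, -1, -2, -3, -1, 0, 0, 0, 0, 2, 0, 1, 0, 1, -2, 3, 2, -1, 0, 1, 0, -3,
  -2, 0, -3, 2], [0, 0, 2, -1, 0, 2, 1, 0, 0, 2, -2, -2, 2, 1, 0, 0, 1, -2, 0, 2, -3, 3, 2, -1, 2,
  -1, 4, 1, -1, 1, 0, 1], [3, 2, -1, 2, 2, -1, -1, 4, 2, 0, 0, 1, 1, 2, 0, -4, 1, 2, -1, 3, -2, 0,
  0, 2, -2, -1, 2, 3, 0, -1, 0, -2], [-1, -1, 1, -3, 0, -1, 1, 1, 1, 2, -3, -4, -1, 0, -1, 0, -2,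
  -1, 1, 2, 2, 0, 1, -3, 1, 0, -1, 2, -1, -2, 1, -1], [-4, 1, -1, 0, 3, -3, -1, 2, -2, 1, 1, -1,
  -1, 0, 0, 2, 1, 0, 4, -1, 2, 0, 0, 1, -5, 2, 2, 0, 0, 1, -1, -1], [0, -2, -1, 2, 0, -1, 1, 2,
  -1, -1, 3, 0, -1, 0, -1, 1, 1, 2, 3, 2, 1, 0, 2, 3, -4, 2, 1, 0, 0, 1, -1, 0], [-1, 0, 0, -1, 3,
  -1, 0, 0, 2, -4, -1, 0, 2, -1, 1, 0, -1, 1, -2, 0, -1, 2, 0, 0, 0, 0, 0, 4, 3, -1, 2, -2], [0,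
  2, -1, -2, -1, -2, -2, 1, 5, 0, -1, 2, 1, -1, 0, 1, 1, 3, 1, -3, -1, 0, -3, 1, 0, -2, -4, 0, 1,
  2, 2, 0], [4, 1, -2, 0, 0, 0, 0, 1, 0, -1, 0, -1, -1, 0, -1, 0, 4, 2, 1, -1, 0, 0, -4, 0, 0, -2,
  -1, -3, 0, 1, 2, -1], [1, 2, 1, 2, 3, 2, 1, -1, -3, 1, 4, -1, 0, 0, 0, -1, 1, 0, -1, 0, -1, 3,
  0, 1, 1, 0, -1, -3, 1, 1, -2, -1], [0, -2, 3, 1, 2, 1, 0, 0, 1, -1, -2, -2, 0, 0, -2, -2, 0, -3,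
  5, 3, 0, 1, -4, 0, 0, 1, 2, -2, -2, 1, 1, 0], [0, -2, 2, -2, -2, -1, 4, 1, 0, -1, 0, -1, 0, 1,
  -2, 1, -2, -1, 2, 3, 0, -1, 1, -4, -3, 2, -2, 3, 0, 2, 2, 0], [2, 2, 1, 0, 2, 1, 0, 1, 0, 0, 0,
  1, -1, -1, 3, 1, 0, -2, -2, -2, 1, -1, 4, 2, 3, -2, -1, -1, -1, -1, -1, -2], [0, 0, 1, 2, -3, 0,
  4, 1, 0, 1, 0, 0, -2, -3, 2, 0, 1, -1, -4, 0, -1, 0, 5, -1, 1, -3, 2, -1, 0, -1, -1, 1], [-2,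
  -1, -1, -1, 0, 0, -2, 1, -2, 0, 0, 1, -1, -2, 0, 0, 1, -2, 0, -1, -1, 0, 0, 0, -3, 2, 3, 0, 0,
  3, -1, 3], [0, -1, -2, 1, 0, -1, 1, 0, -2, -1, -2, -2, 2, 2, 0, 2, 1, 1, 2, 3, 2, 1, -2, 3, -2,
  -2, -2, 0, -2, -1, 0, 1], [1, 2, 1, -1, -1, -2, -1, -5, 0, -4, 2, 3, 0, -1, 1, 1, 1, 0, -1, 0,
  2, -1, 0, 1, 1, -1, 0, -1, 0, 1, -1, -1], [-1, 0, -2, -1, 0, 0, -1, 2, -1, 0, -1, 0, -1, 3, -1,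
  0, 2, -1, -1, 1, 1, 3, 1, 3, -1, 1, 4, -2, 0, 1, -3, -1], [2, -1, 0, 1, 0, 0, 1, 1, 2, 0, -3,
  -2, -3, 0, 0, 0, 2, 1, 2, 1, 1, -2, -2, -2, -1, -1, 0, 2, 0, -1, 3, -2], [-4, -1, 2, -1, 1, -2,
  2, 0, -1, 2, 1, -1, 0, 0, 1, 0, 1, -1, 3, -1, 0, 1, 6, -4, -1, -1, -1, 2, -2, -4, -1, -1], [-1,
  0, 0, -1, -2, 1, -1, 1, 2, 2, -1, 3, 1, 0, -1, 0, -1, 0, 0, -1, 1, 0, -6, -3, 0, 0, -2, -1, 0,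
  0, 1, -1], [-2, -1, 1, 0, 0, 2, -3, 0, -1, -2, -1, 1, 1, 3, 2, -1, -3, 1, 1, -1, 1, 0, 0, 1, -2,
  -2, -3, -1, 1, 3, 0, -1], [-1, 2, 2, 2, -2, 1, 3, 1, 1, 0, 1, 1, 2, -1, 1, 1, -3, -1, -4, 0, 0,
  0, 2, -2, 1, 0, 4, 1, -1, -1, -4, -2], [-4, 1, 0, -2, 0, 1, 1, -1, 1, 0, 0, 0, -1, 1, 0, 0, 2,
  5, 0, 0, 1, 0, -4, -1, 0, 0, -5, 1, 0, -2, 1, 0], [-6, 0, 0, -1, 0, -2, 0, 2, 0, 2, -1, 0, 0,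
  -1, 3, 2, -1, 2, -2, -2, -1, 1, 4, 1, 2, -2, -1, 1, -1, -2, 0, -1], [-4, -2, -1, -1, 0, -1, 1,
  -1, 1, 1, 1, -1, -1, 1, 0, 2, 1, 3, 2, 2, -1, 1, 0, 0, -3, 2, 0, 3, -1, 1, -2, -1]]

/-- The `Lam 5` parts `b` of the glue vectors `5 r ++ 7 b`; they form a basis of `Lam 5`. -/
def bTB : List (List ℤ) := [
  [1, 0, -1, 0, 1, 0, 1, 1, -1, 0, 0, 1, 0, 0, -1, 0, 1, 0, 0, -1, 0, 0, 1, -1, -1, 0, -1, 0, -2,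
  0, 1, -1], [0, -1, -1, 0, 0, 0, 1, 1, -1, -1, 0, 0, 0, -1, -1, 0, 0, 0, 0, 0, 0, 0, 0, -2, 0,
  -1, 0, -2, -1, 1, 0, -1], [-1, 1, 1, 0, -1, 0, 0, 1, 1, 0, 1, -1, 0, 1, 0, -1, 0, 0, 1, 1, 0, 0,
  1, 1, 1, 1, 1, 1, 1, 0, 0, 1], [2, -1, 0, 0, 1, 0, 0, 0, 0, 1, -1, 2, 0, 0, 0, 1, 0, 1, 0, 0, 1,
  0, 0, 0, -1, 0, 0, 1, -1, 0, 1, -1], [-1, 1, -1, 1, 1, -1, 1, 0, -1, 0, 0, 1, -1, -1, 0, 0, 0,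
  -1, -1, -1, 0, 0, 0, -1, 0, 0, -1, -1, -1, 1, 0, -1], [-1, 0, 1, 1, 0, -1, 0, -1, -1, 0, -1, 1,
  0, 0, 1, 1, -1, 0, 0, 0, 1, -1, -1, 1, 1, -1, 1, 0, 1, 0, 0, 1], [0, 0, -1, 0, 1, 0, 0, 1, -2,
  -1, -1, 0, 0, 0, 0, 0, 0, -1, 0, -1, 0, -1, 0, -1, 0, -1, -2, -1, 0, 0, 1, 0], [0, 0, 0, -1, 0,
  0, -1, 0, 2, 0, 0, 0, 0, 1, 0, 0, -1, 0, 0, 2, 1, 1, 0, 1, 0, 1, 0, 1, 1, 1, 0, 1], [-1, 0, 1,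
  0, 0, -1, -1, 0, 0, 0, 0, 1, -1, 0, 0, 0, -1, 0, 1, 1, 0, 0, 0, 0, 2, -1, 0, -1, 2, 1, 0, 0],
  [1, -1, -1, -1, 0, 1, 1, 1, -1, 0, 1, 0, 1, 0, -1, 0, 0, 1, -1, 0, 0, 0, 1, -1, -1, 0, 1, 0, -1,
  0, -1, -1], [0, 1, -1, 0, 1, -1, 1, 0, 0, -1, -1, 1, 1, 0, 0, 0, 1, 0, 0, -1, 0, 0, 0, 1, -1, 0,
  0, 0, -2, -1, 1, 1], [0, 0, 1, 0, 0, 1, -1, 0, 1, 1, 1, 0, -1, 0, 1, -1, -1, 0, -1, 0, -1, 0, 0,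
  1, 0, 0, -1, 0, 2, -1, -1, 0], [1, 0, 0, -1, 1, 1, 0, 0, 0, 0, 1, 0, 0, 1, -1, 0, 1, -1, 0, 0,
  1, 0, 0, 0, -2, 0, -2, 0, -1, -1, 0, 0], [0, 0, -1, -2, 1, 0, 0, 1, -1, 0, 1, 0, 1, 1, 0, -1, 1,
  1, 1, -1, -1, 0, 1, -1, 0, 0, 0, 0, -1, 0, 0, 0], [0, -1, 0, 0, 0, 0, 0, -1, 0, 1, 0, 1, -1, 0,
  -1, 0, 0, 0, -1, -1, 0, 0, 0, 0, -2, 0, -1, 1, -2, -1, 0, -1], [-1, 0, 1, 0, -1, 0, -1, 1, 1, 1,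
  0, -1, 0, 0, 0, -1, -1, 0, 1, 0, -1, 1, 0, -1, 1, 0, 1, -1, 1, 1, 0, 1], [0, 0, -1, 1, 0, -1, 0,
  0, 1, 1, 0, 0, 0, 0, 0, 0, 0, -1, 1, 1, 2, 1, 0, 0, 0, 1, 0, 2, 0, 1, 1, 0], [-2, 0, 0, 0, 0,
  -1, 0, 1, 0, 1, 0, 1, 0, 1, 0, -1, 0, -1, 0, 1, 0, -1, 1, 0, 1, 0, 0, 1, 2, 0, 0, 0], [0, 0, 1,
  0, 0, -1, 0, 1, 0, 0, -2, 1, -1, -1, 1, 1, 0, 0, 0, 0, 1, -1, 0, 0, -1, 0, -1, 1, -1, 1, 1, 0],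
  [0, 0, 1, 0, -1, 0, 0, -1, 0, -1, 0, 0, 0, -1, 0, 0, -1, 1, 0, 0, 1, 0, -1, -1, 1, 1, 2, -1, 0,
  1, 1, -1], [0, -1, 1, 1, 0, 0, 0, -1, 0, 2, 0, -1, 1, 0, 0, 0, 1, 0, 0, -1, -1, 0, 0, 0, 1, -2,
  -1, 0, 0, -1, -1, 3], [0, 1, 0, 1, 0, -1, 1, 0, 0, 1, 0, 0, 0, 0, 0, 0, 1, -1, 0, -1, 0, -1, 0,
  -1, 0, 0, -2, 2, 0, -1, 0, 1], [-1, 0, 1, 1, -1, 0, 1, 1, 0, 0, 0, 1, 0, 1, 1, 1, 1, 0, 1, 0, 0,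
  1, 0, -1, 1, -1, 0, 1, 0, 1, 1, 1], [1, 0, 0, -1, 0, 0, -1, 0, -1, 0, -1, 0, -1, -1, -1, 0, 0,
  -1, 1, 1, -1, -1, -1, -1, 1, -1, 0, 0, 0, -1, -1, -1], [0, 1, 0, 1, 0, 0, 1, -1, 0, 0, 1, 2, -1,
  0, 0, 0, 2, -1, 0, -1, -1, 0, 0, 0, -1, 1, 0, 0, 0, -1, 1, 2], [-2, 1, 0, 1, 1, 0, -2, 0, 1, 0,
  -1, -1, 0, 0, 1, 0, -1, 1, -1, 1, 0, -1, 0, 0, 1, 1, 1, 0, 0, 0, -1, -1], [1, 0, 0, 1, 0, 1, 1,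
  1, 0, 0, 1, 1, 1, 0, -1, 0, 1, 0, 0, -1, -1, 0, 0, 1, 0, 0, 0, 1, -2, 0, 1, 1], [0, -1, 1, 0, 0,
  0, 1, 0, 1, 0, 1, 1, 1, -1, 0, -1, 1, -1, 1, -1, -1, 0, 0, -1, 0, 0, -1, 1, -1, -1, 0, 1], [1,
  0, 0, 0, 0, -1, -1, 1, 1, 0, -1, -1, 0, -1, -1, -1, 1, 1, 0, 0, 0, 0, 0, 0, 1, 0, 0, -1, 1, 1,
  0, -2], [-2, 1, 0, 0, 0, -1, -1, -1, 1, 0, -2, 0, -1, 1, 0, 0, 0, 1, 0, 0, 1, 0, 0, 1, 2, 0, 1,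
  -1, 0, 0, -1, 0], [0, 0, 0, -1, 0, 0, 0, 0, 0, 0, 1, 0, 0, 1, 1, 0, -1, -2, 0, 0, -1, 1, 0, 1,
  0, 0, -1, 1, 1, -2, 0, 1], [0, 0, 1, -1, 0, 1, 1, -1, 1, 1, -1, -1, 1, -1, 0, 0, 1, -1, 0, 0,
  -1, 1, 0, 0, -1, 0, 0, 1, -1, -1, 0, 1]]

/-- Weighted Gram–Schmidt vectors of the glue vectors of choice `B`, block 1, in the last 32
coordinates. -/
def uTB1 : List (ℕ × List ℤ) := [
  (9395240960, [14, 0, -14, 0, 14, 0, 14, 14, -14, 0, 0, 14, 0, 0, -14, 0, 14, 0, 0, -14, 0, 0,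
  14, -14, -14, 0, -14, 0, -28, 0, 14, -14]), (3131746986, [-14, -28, -14, 0, -14, 0, 14, 14, -14,
  -28, 0, -14, 0, -28, -14, 0, -14, 0, 0, 14, 0, 0, -14, -42, 14, -28, 14, -56, 0, 28, -14, -14]),
  (1565873493, [-28, 28, 14, 0, -28, 0, 28, 70, 14, -14, 42, -28, 0, 28, -28, -42, 14, 0, 42, 28,
  0, 0, 56, 0, 28, 28, 28, 14, 0, 14, 14, 14]), (4697620480, [28, -28, 14, 0, 0, 0, 0, 14, 14, 14,
  -14, 28, 0, 0, 0, 14, -14, 28, 14, 28, 28, 0, 0, 0, 0, 0, 28, 14, 0, 14, 14, -14]), (4697620480,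
  [-28, 28, 0, 28, 14, -28, 14, 0, 0, 14, 0, 28, -28, -14, 14, 0, -14, -14, -14, 0, 14, 0, 0, 0,
  14, 14, 0, 0, 0, 28, 0, -14]), (4697620480, [-14, 0, 14, 14, 0, -14, 14, 0, -42, -14, -14, 14,
  14, 14, 0, 14, 0, 0, 14, -14, 14, -28, 0, 14, 14, -28, 14, 0, 0, -14, 14, 28]), (1565873493,
  [14, 0, -14, -14, 28, 14, -42, 56, -14, -14, -42, -14, -14, 14, 28, -14, -28, -28, 14, 14, 14,
  -28, 0, -14, 14, 0, -70, 0, 56, 14, 42, 0]), (3131746986, [-14, 0, -28, -28, 14, -14, 0, -14,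
  14, -28, 0, 14, 14, 28, -28, 14, -14, -14, -14, 28, 28, 28, 0, 14, -14, 0, -14, 0, -14, 28, 0,
  42]), (1565873493, [0, 0, 28, -28, 14, -28, -42, -28, 0, 14, 28, 56, -28, 14, -42, 0, 14, 14,
  42, 0, -42, 28, 28, 0, 42, -42, -28, -28, 28, 0, 0, -14]), (3131746986, [0, 0, -14, -28, 14, 14,
  0, 14, -42, 14, 28, 14, 14, 14, 0, 0, -28, 14, -42, 0, 0, -14, 28, 0, 0, 0, 14, 14, 28, 0, -42,
  -14]), (9395240960, [0, 14, -14, -14, 14, -14, 0, 14, 14, -14, -14, 14, 14, -14, 14, -14, 0, 14,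
  0, 0, -14, 0, 0, 14, 0, 0, 14, -14, 0, -14, 0, 0]), (9395240960, [0, -14, 14, 14, 0, 14, 14, 14,
  14, 0, 14, 14, -14, 0, 0, -14, -14, 0, -14, 0, 0, 0, 0, 14, -14, -14, -14, -14, 0, -14, 0, 14]),
  (9395240960, [0, 14, 14, -14, 14, 0, 0, 0, 0, 0, 14, 0, 0, 0, 0, 0, 14, -14, 14, 14, 28, -14,
  -14, 0, -14, 0, 0, -14, 0, -14, -14, -14]), (9395240960, [-14, -14, 0, -14, 14, 0, 0, 0, 0, 14,
  14, 0, 0, 14, 28, -14, 0, 14, 14, -14, 0, 0, -14, -14, 0, 0, 0, 0, -14, 14, 0, 14]),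
  (9395240960, [-28, -14, 0, -14, -14, -14, -14, 0, 0, 0, -14, 0, -14, 0, -14, -14, -14, 0, 0, 0,
  0, -14, 0, 0, -14, 0, 0, 14, -14, -14, 0, -14]), (9395240960, [0, 14, 14, 0, 0, 0, -14, 14, 0,
  28, -14, 0, 14, 0, -14, 0, -14, -14, 0, -14, 0, 14, 0, -14, -14, 0, 14, -14, 0, 0, 0, 14])]

/-- Weighted Gram–Schmidt vectors of the glue vectors of choice `B`, block 2, in the last 32
coordinates. -/
def uTB2 : List (ℕ × List ℤ) := [
  (9395240960, [0, -14, -28, 14, 0, -14, 0, 0, 0, 14, 14, 0, 14, -14, 0, -14, 0, -14, 14, 0, 14,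
  14, 0, 0, 0, -14, 0, 14, 14, -14, 0, 0]), (9395240960, [-14, -14, 0, 0, 0, 0, 14, 0, 14, 14,
  -14, 14, 14, 14, 0, 0, 28, -14, -14, 14, -14, -14, 0, -14, 0, 0, 0, 0, 14, 0, 0, 0]),
  (9395240960, [0, 0, 14, -14, -14, -14, 0, 14, 0, 0, 0, 0, 0, -28, 14, 14, 14, 0, 0, 0, 0, 0, 14,
  0, -14, -14, -14, 14, 0, 14, -14, 14]), (9395240960, [0, 0, 14, -14, -14, 0, 0, -14, 0, -14, 14,
  14, 14, -14, 0, -14, 0, 0, -14, -14, 14, 0, 0, -14, 0, 14, 0, 0, 14, 0, 28, 0]), (2348810240,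
  [14, 0, 14, 0, 28, -14, 0, -14, 14, 28, -14, -28, 14, -28, -28, -28, 0, 28, -28, 14, 28, -28,
  14, -14, 56, 0, -28, 0, -28, -14, -14, 28]), (782936746, [42, 56, -14, 0, -28, -42, 56, 14, 42,
  -28, 14, 28, -14, 28, -28, 28, -56, 28, 28, -14, -28, -28, -70, -98, 0, 0, -28, 56, 28, -42,
  -42, 28]), (1565873493, [-42, 28, 14, 0, -14, 42, -14, 28, 0, -14, -14, 14, 14, 14, 28, 14, 14,
  14, -28, 14, 28, 70, -14, -28, 42, -42, -14, 28, -28, -42, 0, -28]), (9395240960, [14, 0, 0,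
  -14, 0, 14, 0, 0, -14, 0, 0, 14, -14, -14, 0, -14, 0, -28, 0, 14, -14, 0, -14, 0, 14, 0, 14, 14,
  -14, 0, 0, 14]), (3131746986, [-14, 0, -28, 14, 0, 14, -28, 0, -14, 0, 0, 14, -42, -14, 0, 14,
  28, 28, 0, 14, 14, 0, 14, -28, -14, 28, 14, -14, 14, -28, 0, 42]), (1565873493, [-14, 0, 14, 56,
  42, 14, -70, 0, 28, -42, 42, 14, 42, -14, 0, 14, -14, -14, 0, 14, -28, -42, 14, -28, -14, -14,
  14, 28, -28, 14, 0, 0]), (4697620480, [-14, 0, -14, 0, -14, 14, -14, 28, 0, 14, 14, 14, 14, -14,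
  -28, 14, 14, 14, 0, -14, 0, -14, -42, 28, 14, 14, -14, 0, 0, 14, 0, 0]), (4697620480, [-14, -28,
  14, 0, 14, 14, 14, 0, 0, -14, -14, 14, 14, -14, 0, 14, -14, -14, 28, -14, 0, 14, 14, 0, 14, 42,
  -14, 0, 0, -14, -28, 0]), (4697620480, [14, -14, 14, 14, 14, -14, -14, 14, 0, -28, -14, 0, -14,
  14, -14, -28, 28, 0, -14, -28, 14, 14, -14, 0, 0, 0, 14, 14, 14, 14, -28, 0]), (1565873493, [14,
  14, -42, -14, -42, 42, -14, -14, 56, 0, -14, 28, -14, 14, 14, 0, 0, -28, 14, -56, 42, -42, 42,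
  0, 28, -28, 14, -14, -14, 14, -28, 0]), (3131746986, [14, -28, 0, -14, 0, -42, -14, 28, 14, 0,
  28, -14, -14, 14, 14, 42, 0, -28, -28, -14, 0, 0, 0, 0, 28, 14, 14, -14, -14, -28, 14, 0]),
  (9395240960, [-14, 0, 0, -14, 28, 14, 14, 0, 14, 0, 0, -14, -14, -14, -14, 14, 0, 0, 0, -14, 0,
  0, 0, 0, 0, -14, 14, 14, 14, 0, 14, 0])]

/-- Levels of the enumeration along the glue vectors of choice `B`, block 1. -/
def lTB1 : List Lv := [
  ⟨412075762938722057039681223523030272421691172828287192843748523845321876519017630743044158799317959324232412649297494807513785698764987446121857022,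
  204174837230570144818784674828201916741118436704863262149861961982163040398773142049461336611569691862606185345323206943268564748419072078386911117314,
  2, 9395240960, 16384⟩,
  ⟨1047963341475914083685984312463047919133654669641511187626589152280080469700142584226566522410495157541055155593979160020865056350477370916866,
  3120700586974516317297911245480703257829464487995329639671530370473091658350065477536079536541081476002285875965812643735427110622937807935373310,
  4, 3131746986, 8192⟩,
  ⟨47596306533748793961421194408471150453865130381968813487895136111887635700469722226979273768930871890098778084301291447246805566821821972482,
  37796101688099217619290665277114709535109832035262910712605581614740685329924076125982930646337142491354531686968789805318085511068123134,
  6, 1565873493, 5462⟩,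
  ⟨726040185946114847485590522541905087894836061840962803464380958108650113430747382130703251036056971816896473560911423749128334656536578,
  798538349492043063733285346099446458805298846355256817109241071989174682650541195487799677706593743866048045354754184406266972078078,
  4, 4697620480, 8192⟩,
  ⟨11081878696129714957563701700422416397294117408659881991682367848406949522575958902841910143377745043306701400025638848437394997246,
  8800080353544480749955036149918416451630892843384308999550474051535708646543589317987481038813269082863443819975438878501634050,
  4, 4697620480, 8192⟩,
  ⟨175594883128857865821565153041577185512860172136160404727133198857541127936821791661307450927776307272462016585524303888380,
  169054733127174783465868753703347809010558738666719831732142958391390341428558882739587130421639336613710888261820455422001156,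
  4, 4697620480, 8192⟩,
  ⟨2580358555333828332777289573560468833672642191344437537953369407173176671351747267430575278978066523677539637563261452286,
  1891322753080256878629598442543040657063601484785974877289949367470950665093927199070074302071307758363534409486041090,
  8, 1565873493, 4096⟩,
  ⟨15632064574601687864851684448310991330076689890885143321376029596428315138610063479452819053724447272852166541312,
  39386374131819877524414188415695302813749662580574561524626917374649293456358600547934813435831191193533775823765504,
  6, 3131746986, 5462⟩,
  ⟨601061766769870578665391028565774830497476804951213687671595459285924015149701736577656791365468206788769873922,
  165134420230727674316004212295448510697927569316199229471029426321495279638024949050152221032581187405479934,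
  8, 1565873493, 4096⟩,
  ⟨9170354831759468617259800394950936622741960585515243691370113839197252260278165803560458118705845840510978,
  3639632200817429183483186257411140444299371157880803580241518350439244075773428719616093734656905707518,
  6, 3131746986, 5462⟩,
  ⟨139932782045365330819691423653541796661473345019558454350069695339058727334761099723410497225038626816,
  51264340747432340148718881985970721129498557607141581179623471178264613998959362894346104436817920,
  4, 9395240960, 8192⟩,
  ⟨1042972367182727232531435989327046012428975623078498617698892619540545078531237670786013724670,
  2134944063553727355162490270180225068590275546733574271329342715202679180702109312352176073211906,
  4, 9395240960, 8192⟩,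
  ⟨32589591666753902091076771455990640319126620069893929647132317582136416083174815041979416576,
  2983954597875289218359558559410257696874228761050363045929607533684713038572256954941440, 4,
  9395240960, 8192⟩,
  ⟨91063530695131997859330956756829508601817538328031061855291399222453714292481851392,
  497232172879091510157522917190064010591854333259019686378608685493937043298240893681664, 4,
  9395240960, 8192⟩,
  ⟨7586697658557355130106189420021270539315183678602931129952888211638414815573049344,
  1852701699399053172958653508100189756718036444488874937004013904180048509796352, 4, 9395240960,
  8192⟩, ⟨3533748055209381464890746525375313943703405663756200035896718667978637312,
  115788555489260986042106094262162532539326281259976807839421687289245151002624, 4, 9395240960,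
  8192⟩]

/-- Levels of the enumeration along the glue vectors of choice `B`, block 2. -/
def lTB2 : List Lv := [
  ⟨269601935116655623361738216426663204474607708993257797740098295562238,
  1766577462843267673959935762526491852623009289166625700323866102997057538, 4, 9395240960, 8192⟩,
  ⟨822789944144441556970120718100872197401174329218528850156322816,
  26959123877206495353110044966301529801439743248211353952253453926400, 4, 9395240960, 8192⟩,
  ⟨50217963307363154466478584142828723873467948696839969964034,
  411325921366994147384275817055194797521810498459698125867188222, 4, 9395240960, 8192⟩,
  ⟨5846229556094990706512501668109409286366856740868,
  6277101729540451207740798716695164747992946158097177772028, 4, 9395240960, 8192⟩,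
  ⟨95763433195257574091213412536613796012176205305872376,
  17538108860479556183276660280527963994989830602760, 8, 2348810240, 4096⟩,
  ⟨178407322769635479010327144158913769942941692,
  1461323230008133282724674505572124105885989601284, 16, 782936746, 2048⟩,
  ⟨22298703473173890255038640923075527865270272, 2041725356732886497077349572833640710144, 12,
  1565873493, 2731⟩, ⟨14507183620100010761781244, 340282366920923956279754507421006430212, 4,
  9395240960, 8192⟩, ⟨158458742695701026675475349500, 5192138399792131927503820853870596, 8,
  3131746986, 4096⟩, ⟨7253665599841075755483132, 79220908848664496517788467204, 12, 1565873493,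
  2731⟩, ⟨73788102211924656128, 1208852031512417250050048, 8, 4697620480, 4096⟩,
  ⟨18445618156622577668, 1125917086973948, 8, 4697620480, 4096⟩, ⟨17180131320, 281457796579336, 8,
  4697620480, 4096⟩, ⟨262148, 4294705148, 16, 1565873493, 2048⟩, ⟨4, 65532, 12, 3131746986, 2731⟩,
  ⟨0, 1, 8, 9395240960, 4096⟩]

/-- Levels of the enumeration along `10 • bSA`, block 1, when the glue vectors of choice `B`
follow. -/
def lSAB1 : List Lv := [
  ⟨6714599725442997933407219182196369488615454263806987187335456995759892938164299358063425264029304468608318444678741398799634775533576317809918671522272377593062496736399018864280233394463004665072047892018623504014138251012652032622363792391263291091966058145683633260340056826508039350452175,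
  631954299325667341796632048989591971652968949075539426093479660584147912459904201693123123693614119879981264545462857079271545380752373653626616303928873676909339318607948397621331837467733151233377026266235432173851721094626026491822069893512110839310312632054558300065214661647202043826470961,
  7, 357913941, 4682⟩,
  ⟨9701446356819346415609603202437498190981852805522514906912320438381623062157886950560642034573710125386071097026785426122844202026744979777683974188919203361100009424539096784330708137139006429858835623684889287875498778022896933605335869285884675017070569298315642793320733921629635084363,
  43867654580652664743779185437690119894374052072492619955586018831325628608539151904973031308300133839233819204623242060614967838458114268894013107393450058431268275417376245540081518351047218493963969794329090998186819902497941340410494329584290595757169504788634753761094668362279026613,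
  105, 1619520, 313⟩,
  ⟨148467978723184506390936682845344717872334467664150283407958405329878933174371643289364168825540941608840778246903915733010023494773461585797096686944731876409508610574874149791576171920774985507406935322315295655635844571033701798934710847567026156757078579594362000666805867856723961,
  233712124593799888869566969645338140791552501789162497618780601715132541668794065152662624074693450139094132115381572035435029781028984981986371165507586168788473469871837602692469062654788179616984255919848064970930299654086209880999046467839651544125930951052390615570667024744455,
  221, 404880, 149⟩,
  ⟨6093613272882882727213387695078503696262805386261128341304938624544078369097129194107302653450588958912960706604474406723329589710378611315420574272469784975793670692267627255905201354252945981096342607635987407017496473737104341653056336880725722366368502630342715841141538813,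
  2262914120610453089559869281601034411543086867555930123880026633817992324768726927118710560042100483108040658358021033787940039010059069795347834096599104045869803925205345705786524012870444528491314539628618036650092715786513567179582751372391518666995272588455692307388480880643,
  15, 89478485, 2185⟩,
  ⟨15320888060637089959681851199069098209517697053430743850106405575610128540309326634175869831461056577483756697550288400993991033554037919206395600399714988864805932705572833669635747771028880755721657500778812764553080961096486477718885694301068663031299420570635196366855,
  34606989504446320494987258293089763226609660662049829330327926621196490749417211063881233412022040409287897393580548896698239538626013961450044926892147493123403223789853224362412352994671254360095274470371749630489692101232669863638794293463295433860187101017143522262581241,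
  7, 447392426, 4682⟩,
  ⟨1725101547816317477575205653207994760946739413561492891879557015938332178554791314255308140319064198790102397341376506444076926733604033246891501301479396243711205599011247451714040035468802320647261383570447744882713205493439055548304788109998038327925124856113332220,
  526569429587848928874764579263308611757900586622560029236081152010735570378170068160161947747338123695884292595915752172438270632769081504003647477161460180664675478399993836717017477640957638732376971524640740659265315087258122683290092110657038438161613456041624666116,
  14, 134217728, 2341⟩,
  ⟨7979828749624109566110446314924263218460879392790514921318367981077595205143567930826811103318745812418532976709972995509385465966907664123084808190736491459345263475571318439760176767882253787492025598966884750908243102302034935834023997551086356694097456802299903,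
  81306063847344998592004016443482852688524385836827640448610611248361559943176140743276419381101414978232083611943640826099573698355481892090652296063734018382804822753344099435555618537827405333661548680380697153097661442343142456356814502854019228899652891574273,
  10, 313174698, 3277⟩,
  ⟨531163603561580279564989941748927826572502287634016744981657919768807425230509286540678102743043776723184470716991408430361240876227889397712595889638476433421552300649925620682543015744828615012143499065831041146805431021381710101775490945043843354900758525,
  122471992119574628288282457741474736589159366893081049199949045698486148096722983016469690590797105567099524579605222891122327963000468064202987179604749729708669333599079422206400775868838929820438405018501085585765742843886731056780255942983489724806065881091,
  2, 9395240960, 16384⟩,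
  ⟨5956958443256202477925939008550275356619340521703610722943993707767454240391628806190857729263963956321253215052761100186095429815749838714193773751076425229673532378845386548923888997408741641145077430995445177875988575891231072679204274244819133267974,
  1870922248757918855014863484868763939971320557865672273446530853982890436414416298180661691915818881255817251581123604554609577236759810976726171452908899864780258198268880257785233198474877611438849864548480211360706596185279923207136949197565080283250682,
  6, 782936746, 5462⟩,
  ⟨31464052995199725674283364140500942090703442718425012347238612947776182534934591022770505457749371668587172602460129199640851048897033544802095402673083159757506165882396135543873859876285161324066625404035183158750044194853763478405223836404285444,
  28607439865479761478744500569534337548631035729452227517094211089363287822817969568322513760366879003760772336616539590874756009708176343155642930638891496460755368142096815966722927401602693614920973382827710064317180509411883820136953563270070009852,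
  12, 195734186, 2731⟩,
  ⟨253389635878895105532534100075444502135399258666737997939950554278183907247832570440984043692813026552646345280300985702059182922840673659926594391788275169494325346630155343867072576641993914257812328027652459905945638213473493028811795660798,
  436741604237335234600564632856632906491543482152628619201789201397489760510368502868787596672625368971576008275370939860159709322281526036246766307853765002731397921784400302759569225968874650010379638969453811887566139225170583874148904072052738,
  8, 587202560, 4096⟩,
  ⟨36730666942917070415251537212999362555608952841940567997256440651654428480504842247610081982524653314278778019403765773637739896002569516880107543503403149893902178765764483297748470092763286042085954760610647259751889784096367304306196479,
  6631283765936937203664600253508258434589149369473967592399001371112382809337127229273822118889029637428651132574029474672251061758116795563483248508827426896201255400748250075165329815819050738686879061375275954721938858253380093986857680897,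
  4, 2348810240, 8192⟩,
  ⟨101194675448719694696716352417243076379416195127190709455985795509442726244981415676684624201660102040519703127360827774061182328860892886601310888680830636629196681657859212930360627012920518166371836919003314814679960240962146067021820,
  551150248299566077207167338635491081899086890569119651623118854632548990272979945895823199334073538443460791606354239578478340910215589356381922176268210509706479650643206479781558746231917513696598996156087681378553370449543100628996,
  2, 9395240960, 16384⟩,
  ⟨7367541737650386777758723643862218859748058655531987079367517789245411259009929641864619934336288885146029930675558006175151957702511786077275474252321420751423757520176655824565782159822817897828383819946645121788135634456543224,
  1545150550563058548371220764818640336397137958461164624059684520236805541427366956689013788894310189065341700766455515199996428086412302605367011800788859718453031218500673249725699503471775626927434615373769823629104711219359514632,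
  8, 587202560, 4096⟩,
  ⟨23675448448474763661436977346795455257876450646285391602790861978990872122895465166860071047146506711129193466835767117480325196858261321857318009504146386142629023178384582304044967068766148194954894896837211319998389376253952,
  14097637656659299210292679793023673655623589504046433388520925459368244023127459038342173505447603300856134866062002486892516217221075473069674746359917861345204360996062006719578915602724559336837878945815852103857432428544,
  16, 195734186, 2048⟩]

/-- Levels of the enumeration along `10 • bSA`, block 2, when the glue vectors of choice `B`
follow. -/
def lSAB2 : List Lv := [
  ⟨1202426670203122002766443068699956862469942668513892178008195259369481048125684511030887974540064748526079689739061806260946813246683752011489642811924603618438726605124254701816342296871192348220944854322504137566584856,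
  360271360044448717606719488733492409646503358048488030981467251891055329238107723476920973912849374863748847094041289755738835185585750289284709152514404498004703173104663408731480562982194859200419997158968315749247483880,
  2, 9395240960, 16384⟩,
  ⟨10520422064643788114974254559663876456800455995042818355369399306276336596312093953428883982869493673850498336254040437247359374784773100793253523583948682916769836146352379989240567581285863681872333935413785722882,
  5505131841037343510613753952871249919151312653090069534541899996909922550827903726175231117960939094159934395215081890379399704816383959218789857977367117931205878780030827543004181449006025713903591258796684906397694,
  48, 19096018, 683⟩,
  ⟨84141627136488928609963201430703364722987171508598500319869213842393886063554128365247663640142126053585595733979179406464707597066445936423875135368456295125645133827548031358102615688198923547763435568886841321,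
  20547288285047505892636695378693925818265336572281432103280606705828405199164788571000940299289166046131767719672076943603318936494925386169900961973798473638444910507082212964004437950239928577256458885660695,
  82, 6547206, 400⟩,
  ⟨1282899942837309127068189482904801300499001746757408754853988098674427627968508380652578262232546438333902792501100811711711322304957018458218126997437658659481241625831418394402371376536645330597728620773348,
  1312923751649248723067812720230111988874181666217675687584387426337058139177366933766106975849179641434846379802073472131312521748011781803312155553523188652357903252674525078015283103081895298583208263708,
  70, 9256395, 469⟩,
  ⟨19593440163681244323621956105433110044257821276971361286843258840018969825052062954648821533707318431929274586444653896310677998797352313507740928238209072197184246342754373661711643148078877570984509405,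
  2093078948125424169445500173448373831105853516102558090403362446311640214138027808825701528210406805735772455841788257233299217555984832429957274962037546065258190389134020789373997302702414005600291,
  116, 3483589, 283⟩,
  ⟨298045984090481995445105288320234378677137282768965403157395623379409767414349865915889536557098089693208324229618872276320825304865585182608646355118497232355297168756216104540811104744038727090167,
  958124226006190403762534030939913591065340682076220453042337473637129943838015286161965445397162362684778170596210801192469647754475522044840057130817796685985554222658219227820138319034697973769,
  93, 6314006, 353⟩,
  ⟨14410960316634020578782483031164500436906054319628005107510917913550364950406429893407894830248294485957996764395120720752100118415009586944636698760943432317359639462843289683434817852669962,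
  4548029657305561198062389122669126824456322452928931925471681599985724802258270956612504916487123105292684312809199286589936604602960428411308024620961270755934635034897421660399439374393933814,
  32, 53382050, 1024⟩,
  ⟨263447880935496031205638195471771672850373798598760959753805759373023918201408045300017813153133396900990764833820910090542346070612020435504109796687753531255101891510093296586664706050,
  69353871113543801128236067213773396248494055328118767277843736322830271479880217115007489683754999534291671429587480470992964500874203622848380492860206383862726750439426566708340004487166,
  22, 142352135, 1490⟩,
  ⟨1248111073098153147970635723294931216369961714743932080864537142252987482161348188073155030196724247598851617054650788575873944873028107786191527180910901848161719834517589542699006,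
  1061027874560436044231205777381642323442816273739319914318023739258554132239543137290251849500261847090179807355438351242117284730432386371032848430352263802039500821836268848520757250,
  6, 1565873493, 5462⟩,
  ⟨29185357247136396705240196383276334437996712472088147403901233899017307430353834705947944242341142285169140361735189839189114837181611896140041110606875088909180337156079353856,
  16179859833694242347483853021160321911704371382224930993204135210205095237151318612167907715707283054153103854213658517904541944051145635400293063710150795563673561082381067223040,
  4, 4697620480, 8192⟩,
  ⟨192474444797786366806160406175296192849617402039564004741971004336648492708181569644673218501063207378566066851188023224166133900411972069718964637303781016834756071784450,
  247137927028306747693696360613471893842281731699172275909321085088560576613823685600671727842741981782219105359164951316127198900406339237897827190464589386899772016076914686,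
  4, 4697620480, 8192⟩,
  ⟨3773847247355592860469807530232659594586455525512161856078522877549035275534471496649489026200022996353619093058693156659947570688403384026983772976121227604680521940988,
  115177465948491771747050755609296330465694904278572297683422696588886857677355436637698977635771187849281972070688239823013941521408605577661275311468438968873385988,
  4, 4697620480, 8192⟩,
  ⟨57550948537945789249775979312326001971321414716447312224138127617405386878752022490423127151100253810313868458122137385072386828791702593113750389990629561602277374,
  35148032207124450198913586054565822210708397817220679551543712026134153843022249660593631029549161205119197986930072504678976718624442905558604324444535743447042,
  8, 1565873493, 4096⟩,
  ⟨875221435481494655360402904740337266940948376946837536648866509288749147877335200185402669453222083890165374919743333051786137276875390785196179010384056680446,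
  3472665015223388157280397542081064869539341471505555753624813487000379597564774486284964551444099146928552938366216776965477187088339622813296610878670635010,
  6, 3131746986, 5462⟩,
  ⟨35598491251826367150305759645384764494923537806080975407283436265701198634376368884324738133400270304939662353609302181012111715540258377536062525276162,
  13372209438690770732423719238560461362984442282786312402316278007456062831439170607917549560033503157385092195832876748672741771096406311568897586480807934,
  4, 9395240960, 8192⟩]

/-- Levels of the enumeration along `10 • bSB`, block 1, when the glue vectors of choice `B`
follow. -/
def lSBB1 : List Lv := [
  ⟨632353868056715039232932650091178308587065130562313204245782510954151137147902635939170804103897968783733602091963618758601104333722404537023433828283641901952577320136926336267903145866427034926825385248883413986743732852363883938260604898127919911418078969801675844781241236888827450105921535,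
  6315030994395300497106618080610032554519272777033209035032606625756668250165865112015744853745455564855980898177979719470075822563545434413101147167504152549824495207421080217708924995769120971623688909370641691122126493274794586183828787775454218984199720398566088544313481584882633071001601,
  1, 9395240960, 32768⟩,
  ⟨36581024394458201420411467645864155146147687805606077812469745118173492576241580960318087603067810761199325149411946660213202879537463219804976512759986253240031098550091986822840307157036273310090016536440606068615192974361655218178994959144546523176410187892296204368544137819241512961,
  9708732987005540878932970920229324155730079169789401449055436712094775198190184521505296978278942448464105591081996721523245966985665630826773010783552667166291246601406381043047949348333017375042709576942777772805070404951033219727567368656324419089651328615211981342713284452172672598015,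
  2, 3131746986, 16384⟩,
  ⟨1286542377526881531576561757941590554038436053618009061675732008533292360050700019971814814478114276083152756245726707099920767638636986407333601393731919815482766915070851391793578277073194749848270160610706764979824991588691203725430777276253753538792819227928165504734210545352703,
  147415148470251424748229688057048465459087584112321436843901453923060773355989737334545016635137520782896719622773570597945537756915853584371749456716507542762814317129675136002475062706356578937175649417624436955626949879099096805090279116758612054762411691317486225777642324336115713,
  3, 1565873493, 10923⟩,
  ⟨2254223896923770719733473876640229536093177095678987503940083598564818660221118097576954148085588647695547138565644505670465420523768675914624128409454624852582009022421195245047657139576682561668737915140988438978744551182741299448286986610144465196122529754010713668393900113921,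
  14783836959565252553608792655883379146172577263203748281247973877717742916705958735863714609962424371406480498981002524197948076000772492039126261416948978263588573476418087994772074648014912803672967095265585078365661077509372072948821099127779193239111337075321354835722305535,
  2, 4697620480, 16384⟩,
  ⟨111471976079210724518540496204930540108410691923298323524140469832835089671121025414582573615776745150818685185272205019940637467463222718922025544904135702792561716667399018846207635797745859272851027855587909209141176972404853933818645371631832670136694440420149249048574,
  34510838416427746860428399648083901784710767667179961750653892556939265788286399365100826708237724720714562465092826980079292892192104776650329296947643072409475468005891398177235781106644537381578145100016940534045104005221361496182694533785964669853081705997294008209899522,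
  2, 4697620480, 16384⟩,
  ⟨526593612131141500751771328284564104109051125525641900270448394814234742196879413932079705607663983313241116505418009873530038644060004359563181027896229020848408292067899813783371220064646253286135624338823191373975230777586137312161908733418754743177414195826458034175,
  1700919004523745600568456631952502409796200510479621857512314212439160359845445542337550279993204581433278487839118805352308915442681177687357950566710556059978391931105270385360297611780187766888608569387997030172797515165424426676488165348281733312124385071279964161,
  4, 1565873493, 8192⟩,
  ⟨8056337628460980665231536163951358904311078116901184289431454510327931541361391077512965984197493913991629480251521873223542206892048487569636504415807737171519985284326997818079012449760260023254649838266042938251375628255890005010346198452545740516891913782951936,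
  4797185010473899470914167416387166838325661726158272335524081998025223725352994057121538502353313405135580070394763111942832773214658445538956070992488306208083013997664721116719936659821169571037309381222509809965135488488073280034613601394635406105195910922240,
  3, 3131746986, 10923⟩,
  ⟨294673902015969298284907015131121381751588283005204737246200539473812487574706678796947080145596786169514796376114282220694485626284727983219051121370483460288840933848102904433063116052277924003370859882676231081763505593139244537530081449068076593129324546,
  122708481821120239269562540668092543033980280897709861207684503078781143034378785624213421613394552557653194253946100017331994718250411225617480724373017722681802044965881244922650255768531480511447177657684240395830784769314973522344501352479465491567837315070,
  2, 4697620480, 16384⟩,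
  ⟨15207448086415170398581405870126626564827327710183728255701940684333518925895247673535873153004863776935613562514408384725330448091419476345331676687266064885702922632177574010701644910637614765764597691831112962636941728951063528331019745195503908421630,
  1861671759114759887094208018007187588763112570677192155913772907006324371728912679313316676492077981435202891233661957270070342218484141339095033549972710225124228808015548070323455442561648738314230344287644543575945643032220090751485133726614395508097026,
  4, 1565873493, 8192⟩,
  ⟨28423899847462340429524401096994461079344384170186242812362379349183920739797351661695131110148515053183141156266466201560107337165675636304147749724148915664799947843456558065983101778001848648161915742458161950737722455237499614838707291768665800698,
  215004071012620774894382836680377411377355001984409717079070353127143265555552497650153155676113322246218352952533518514289523591397740396297276317415663955712926464522654036283699483477130128083124265773583296738208098369237968776651495337808494598,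
  6, 782936746, 5462⟩,
  ⟨313393524213888277022627371575303318153870012292749934230225282446465145027936093170046920168619681759234288013321391549124246926184044982077280618670019135653560257341622039883564871352876173033426193787587020590731900797762451577176536776692,
  436681600349000241429074539585133047675525011399002607265498926669321479272588399346058533796149562316369420332637919454312644258278182664924615621626883258765238686873688836063552733674163767751604025103693877326881352962586294915600539330936844,
  16, 111848106, 2048⟩,
  ⟨41004122041031728031744013318211218152602737445357859086138960031754696461180957196433155308528719258486825292543510834989677968261763366318984568669482926933652648463292273763177172884457491280153635864826452612151736535815902003111985157,
  6627010310838822546048107777403046578992155584870550301310118851732282541356451114324999045563025571484443085300889729610899123685857601714044371483661347119161504931050722284699901113027356533448811380271060149369539011501660559288051892219,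
  28, 36275061, 1171⟩,
  ⟨57444140736037819686827198921198162759218919547572158154433994522924589525231104575411074610115480837500906852403150534945529350036002881775666701664558382773553312893899634313505747631353991524602086141942044068549394058384418734079,
  101688381556283222954236692556957369298556063098212256949454480369552350645729164518005036326384060098125663012114778863104715140421072473075917144155434288756129607995608519775828680011521081688543833829017460451989964217353304748916737,
  37, 21160452, 886⟩,
  ⟨497513363848320203966124727500826020993314000538238319101660434056077296451131120406276691284084712486243989561357159898900830407333031675625807989788996203594770444078662448156160792173603912911176363201721682287692533195341825,
  1552020578936860614945013363735001729235892703116158372819950377591994875389925755210472132137362393238001486707569716046272679213707481359768661467051392143000860205576771243102109124839424840912351822830514747068605154320620716031,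
  3, 3131746986, 10923⟩,
  ⟨23671110785106728048897907363516514345072259284485500094328472277879854133313724374745133938672779224762018076795833248267503080839173849887859937979066278495875122515866543420854057430711213727735083653097948296813740015222784,
  18435301024694911749362663071964586459814951303937941850910626570386233604868251153279281979175089668031524905995871699714632236308547442527746271440025508099105023514100889910488553657659026556649122685078875288506793459712,
  2, 9395240960, 16384⟩]

/-- Levels of the enumeration along `10 • bSB`, block 2, when the glue vectors of choice `B`
follow. -/
def lSBB2 : List Lv := [
  ⟨1130720076615394073157567391087387166782738133780276953433579553517295650097296343691202425710654314501373237711099660064949809342615635931977736651412555972829613707385089401054529675231826283417653725130067070972067938,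
  360343066638036445536328364411104979342190562583221646206041867596907514636136111644260659461678785297773553546069251901934832189489818405364221058674916545650312286002402574032242375603834225265223288288160752815842000798,
  168, 3022921, 196⟩,
  ⟨1599069756448838347066118953574833007538943231873954485913948388932099393440760102223759011762523420038709632779987396721100895694458724830824473508113930250653349014084042297272530540116124761528114179042079014928,
  5514053193345538460381662088477338962600574165853238398411355447827266788030775060026436242932046064413746183918555943419925963295474273594752287027442952683871995267163095880696149486047195452823935478553056613105648,
  518, 329773, 64⟩,
  ⟨84119795223808668199429756317191641050073150456722498970903779409303647324572240920966358689089325610527325327008105610841421269623428012444949855242559231498464207201184057446359815745205879408253578532700028864,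
  42379200965307916426081808890417598732286388448282781068715039796067144181052232852305891352089609104402174690745872566889646379512849365095181087870862100819371536871056124706804380943284068087113495072473152,
  220, 1447648, 149⟩,
  ⟨1283350648773469554499517574602159175493475676847663653407200080422962170790135976836714732683436846092496737949135897428939596546062728262540702200676603123103103831560834054208388535785023054800433525293052,
  862217815488821291739721022872236994400251575962777134372405677802515317549770749629636524958771882840900931766987754903038280642301977480736952314578725030495697523258865271998123854704171095878303744004,
  236, 1244073, 139⟩,
  ⟨19541711846092916893160830621351570264450835722917425052996090791588332775377552200581490438661171844909754188363998220819587548382037871866480950523465553706114908975853782681764017738000720122218217344,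
  53821396536452854630570984254988153638091407570038791937571410876948689888648781876156796574356993825256170536497463748323749632870426473689934989705556037134595557289725000736999407380859862771892352,
  8, 1174405120, 4096⟩,
  ⟨298680170507177720071789490252504943849018324757572471743600959426360706743071386479088185531804434529344618866483085436185496387458936537452913223301353616473785242735778795006324181724391907786836,
  323937809310465777078332098669348419184298693469151866837001426686190615116494722963316470690817526548483533731997641327798565161124167200573188947961412567497480243095528762307061338681517277100,
  512, 264983, 64⟩,
  ⟨1670809281822567299423246753816479314208498651600684668112051964394658340025449901502347617782506339267176599256092836514257042505951882034721074996550363923635525601433646820746197958066178,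
  4560769808340372651341748358946474845579020008596959245911080465934880508868651936604410463699588893439375132974338314474174447678869486116217940244725663824328359148758831303262127994288537598,
  277, 807567, 119⟩,
  ⟨33993058484466237318861654076144803333267753957865031962847103305880059501209150935322508649316378064354479590360801608544756092292888601194725334991850632328618367262230724018003574786,
  69583325935994830922122843755169023118011161372759663205634694978897415338580416009372184988258816553128307714830940579474962090852522754682689877321902286761653233963674429280908665618430,
  4, 4697620480, 8192⟩,
  ⟨1058369558004406102828749138060985183213815820792691873104772530890585918745523938156506870160102189279936509939187541326866850928765891209859479462262937933688646144153700732996026354,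
  3906427629128094550427275043952071445370414661371973294115745510221200976180547321818134370356382057842149033305460703826307746539523268959560495270236770199016397517085705067429902,
  4, 4697620480, 8192⟩,
  ⟨40068008142055027044060491863412876575431534213743167411594043098685109583523457481172232960185635286693748441400955310264050439544677928678566441749431780583104241078462644232,
  16168977182799323717145032725680185369566936560483275973196442401005427434998148989392683426989438561151579246133992752433467008448782569367754538379008238871999637178458683932664,
  28, 89478485, 1171⟩,
  ⟨247036030215489412012917800300078288071186871906681585589777556027745968368887740259770916605346859332004659391358447953381744172179490055826502169365626939191725267435651076,
  294371257615122047584720719568901963944477194530254324285500065151256737644126910545484455896185657593012034657691385969620862127261154141043985736266228724881504713048060,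
  20, 208783132, 1639⟩,
  ⟨3769931327761812101415314810417308186442703647298400050898008485613073235323686983609128841251839745696727679798428261946715414369434273448308521887547824384604943220739,
  4031097059729250826239770570960704474217573118040377478197814632550927068461868476997883925819021844740695232335582953055170260490519184252912363884871659044452106237,
  9, 1043915662, 3641⟩,
  ⟨76447177861371380693015874927825848034946397322273590782592310336960963474778200397836842749295592131807191760600926965288471602600367926132793119481316088348672,
  57509649392291542319281877023452741945497176716942259312907079019094560069120266539685883939380507379387180464348466530611777333907726668093176201195592781257375744,
  6, 3131746986, 5462⟩,
  ⟨2373214125902312155002132192635984128610625083685482534324887981112609064905926234874128654082829460379231724886263458252789984061125176159244615898456129538,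
  876320886370815731362681170089782347681877093334657609868166434794636918409994048436813505350583353576714696133223286370498824479902605231850231005364271185918,
  6, 3131746986, 5462⟩,
  ⟨68741952040059847202508411859732373362367604706923253970884590294995302834521874680415350264087562102302612769676202143090438901933985753293555951992832,
  13339065977902537252371516586346113754116998215885470123752676853426768727239025102121458947902815865587729245416809848710663443910012584193140093054091264,
  4, 9395240960, 8192⟩]

/-- Packed coefficients of `5 e_∞` and `5 e₀` in the later levels along `bFA`. -/
def wFA : ℕ × ℕ := (
  3120319538866093628550342407872777528144090695263200538913489680729633578707994491026591569008547707206936720954303470731261907177636976387817474,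
  3120129006816617499295303516852137020614719647083771843109865942281916995286919950855402262120390131016531426555934630584025540433173833427320834)
/-- Packed coefficients of `70 e_∞` and `70 e₀` in the later levels of the chain `(A, A)`. -/
def wSAA : ℕ × ℕ := (
  183934031152080973591713909474960844661006365347513808348004179808415798044254182669455187766210185171238756059859779220500677596957186373350167628510124972364907876823692526935020951573646268191900314712377252484845494944021524208637974734220365172295911576247804831135848731471443649269279293438,
  41756812507038131013255699850180665634784591990959739924017211964397563601715101496990710952473585488541187792701183270878462079840699424494383292872675633809488765222081517182024398859244445172300737608804243278026658075505629011118562814053501443831626388963027994711929054928819462954202058719229)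
/-- Packed coefficients of `70 e_∞` and `70 e₀` in the later levels of the chain `(A, B)`. -/
def wSAB : ℕ × ℕ := (
  230562191641475768219822385791128936943596933383991135365562178724774958863404678761625864566935569168505015322776149610500082715108088602908725303637607640827890573330065994073332543886965478819924980527257670761458765487336022146193450403411069748679774679827236048138903763647795959073714536446,
  41590754324619605643388519272701969083590337194364874580989020266462950393439271631744797897536811155602113153555021026694422691561945469552542626428317585269239858397575719227224632160593898368770498490436714790008393512175397496456321177101300210890670964238485694719276495124518323288679257735165)
/-- Packed coefficients of `5 e_∞` and `5 e₀` in the later levels along `bFB`. -/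
def wFB : ℕ × ℕ := (
  3121748547408659515895178125714402822749042874291384840956826089968329023610419058305523555609421035669580632710133328607642391615442810879082496,
  47631922119264006353204416150163213455981570346085554167753269921006121231624917066752618789522105282280269006795435192583610765559252123648)
/-- Packed coefficients of `70 e_∞` and `70 e₀` in the later levels of the chain `(B, A)`. -/
def wSBA : ℕ × ℕ := (
  13412056622859392982859840836962822835988591500650446400072214674979870567593365008257898204138443147049831456071243982354531095805295755723645898557228505786677498925564371995117999128569549078466881191996725072669897749843677526715376444476523183762815292958880729907098707393128734860152668160,
  41831536173754777727639214200589994663440536712795783598653977446811206287362361594952244974143159744096306065228001279194131852640248081098308263848736553456578017618098064756882825965548770411762341708796123226973379984374036558348125566025951955214961451356657755103107913095176670030640923541504)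
/-- Packed coefficients of `70 e_∞` and `70 e₀` in the later levels of the chain `(B, B)`. -/
def wSBB : ℕ × ℕ := (
  47262005321947935769997878985689865669710664860156782982445696571816703711778078988045196624555840981899003791606925049910333886137885015957746360498183306030033155088988818059421386189162003971684283426327853438025968764399489073181801026692792368542457807965180824238047367843994329765854052352,
  41721682940049578721808736865471644018398627610477115701787767792400476589591200377078515539456658194563026780947810734340624517415790704901565055374680098654688859516546942085147400579453168650846397731170552182367177391105503871224879517519428502389383507785128497435215682911265287987083368988672)

/-! ### The four lattice bases and their searches -/

/-- The vectors `5 r ++ 7 b`, for `r` and `b` running through two lists. -/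
def tbasis (r b : List (List ℤ)) : List (List ℤ) :=
  List.zipWith (fun x y => lsmul 5 x ++ lsmul 7 y) r b

/-- The basis of `Lam 7` for the choice `a`, without `7 e_∞` and `7 e₀`, scaled by `10`. -/
def bS (a : Bool) : List (List ℤ) := ((if a then bSB else bSA).map (lsmul 10))

/-- The Gram–Schmidt vectors of the first block of the basis `bS a`. -/
def uS1 (a : Bool) : List (ℕ × List ℤ) := if a then uSB1 else uSA1

/-- The Gram–Schmidt vectors of the second block of the basis `bS a`. -/
def uS2 (a : Bool) : List (ℕ × List ℤ) := if a then uSB2 else uSA2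

/-- The weights of the two coordinate vectors in the chain `(a, t)`. -/
def wS : Bool → Bool → ℕ × ℕ
  | false, false => wSAA
  | false, true => wSAB
  | true, false => wSBA
  | true, true => wSBB

/-- The levels in the coordinates of `s`, for the chain `(a, t)`. -/
def DS (a t : Bool) : Blocks where
  L1 := match a, t with
    | false, false => lSAA1
    | false, true => lSAB1
    | true, false => lSBA1
    | true, true => lSBB1
  L2 := match a, t with
    | false, false => lSAA2
    | false, true => lSAB2
    | true, false => lSBA2
    | true, true => lSBB2
  b1 := (bS a).take 15
  b2 := (bS a).drop 15
  U1 := uS1 a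
  U2 := uS2 a

/-- The Gram–Schmidt vectors of the first block in the coordinates of `t`. -/
def uT1 (t : Bool) : List (ℕ × List ℤ) := if t then uTB1 else uTA1

/-- The Gram–Schmidt vectors of the second block in the coordinates of `t`. -/
def uT2 (t : Bool) : List (ℕ × List ℤ) := if t then uTB2 else uTA2

/-- The glue basis for the choice `t`. -/
def bT (t : Bool) : List (List ℤ) := if t then tbasis rTB bTB else tbasis rTA bTA

/-- The levels in the coordinates of `t`. -/
def ET (t : Bool) : Blocks where
  L1 := if t then lTB1 else lTA1
  L2 := if t then lTB2 else lTA2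
  b1 := (bT t).take 16
  b2 := (bT t).drop 16
  U1 := extU (uT1 t)
  U2 := extU (uT2 t)

/-- The levels for `Lam 5`. -/
def DF (a : Bool) : Blocks where
  L1 := if a then lFB1 else lFA1
  L2 := if a then lFB2 else lFA2
  b1 := if a then bFB.take 14 else bFA.take 16
  b2 := if a then bFB.drop 14 else bFA.drop 16
  U1 := if a then uFB1 else uFA1
  U2 := if a then uFB2 else uFA2

/-- The weights of the two coordinate vectors for `Lam 5`. -/
def wF (a : Bool) : ℕ × ℕ := if a then wFB else wFA

lemma okS : ∀ a t, (DS a t).ok 70 32 (st0 70 (wS a t)) = true := by decide +kernel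

lemma okT : ∀ a t, (ET t).ok 70 0 ((DS a t).fin (st0 70 (wS a t))) = true := by decide +kernel

lemma okF : ∀ a, (DF a).ok 5 0 (st0 5 (wF a)) = true := by decide +kernel

lemma goodS : ∀ a, good 32 70 7 (pre 70 7 ++ (uS1 a ++ uS2 a)) = true := by decide +kernel

lemma goodS' : good 32 70 7 (pre 70 7 ++ (uS1 false ++ uS1 true)) = true := by decide +kernel

lemma goodT : ∀ t, good 32 70 5 (uT1 t ++ uT2 t) = true := by decide +kernel

lemma goodT' : good 32 70 5 (uT1 false ++ uT1 true) = true := by decide +kernel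

lemma goodF : ∀ a, good 32 5 5 (pre 5 5 ++ ((DF a).U1 ++ (DF a).U2)) = true := by decide +kernel

lemma goodF' : good 32 5 5 (pre 5 5 ++ ((DF false).U1 ++ (DF true).U1)) = true := by
  decide +kernel

/-- The pairs `(i, j)` with `1 ≤ i, j ≤ 5` and `m ≤ i + j`, `i² + j² ≤ B`. -/
def pairs (m B : ℕ) : List (ℕ × ℕ) :=
  (List.product [1, 2, 3, 4, 5] [1, 2, 3, 4, 5]).filter
    (fun c => m ≤ c.1 + c.2 && c.1 ^ 2 + c.2 ^ 2 ≤ B)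

lemma runF : ∀ a, (pairs 2 15).all (fun c =>
    start (fun _ _ => false) 5 3 (wF a) (DF a).L1 (DF a).L2 c) = true := by decide +kernel

lemma runS : ∀ a, (pairs 2 21).all (fun c =>
    start (fun _ _ => false) 7 3 (wS a false) (DS a false).L1 (DS a false).L2 c) = true := by
  decide +kernel

lemma runT : ∀ a t, (pairs 4 28).all (fun c =>
    start (tail (ET t)) 7 4 (wS a t) (DS a t).L1 (DS a t).L2 c) = true := by decide +kernel

/-! ### The Paley matrix and the lattices `Lam q` -/

/-- The values of the Legendre character of `F₃₁`. -/
def chiL : List ℤ := [0, 1, 1, -1, 1, 1, -1, 1, 1, 1, 1, -1, -1, -1, 1, -1, 1, -1, 1, 1, 1, -1, -1, -1,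
  -1, 1, -1, -1, 1, -1, -1]

/-- The Legendre character of `F₃₁`, extended by `χ(0) = 0`. -/
def chi (x : ZMod 31) : ℤ := chiL.getD x.val 0

lemma chi_spec : ∀ x : ZMod 31, chi x = if x = 0 then 0 else if IsSquare x then 1 else -1 := by
  decide +kernel

/-- The skew-symmetric Paley conference matrix on `P¹(F₃₁)`. -/
def C : P1 → P1 → ℤ
  | none, none => 0
  | none, some _ => 1
  | some _, none => -1
  | some m, some n => chi (m - n)

lemma C_skew : ∀ μ ν, C ν μ = -C μ ν := by decide +kernel

/-- The lattice of integer vectors `x` on `P¹(F₃₁)` with `C x ≡ 2 x (mod q)`. -/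
def Lam (q : ℤ) (x : P1 → ℤ) : Prop := ∀ μ, q ∣ ∑ ν, C μ ν * x ν - 2 * x μ

/-- For odd `q`, inner products on `Lam q` are divisible by `q`: since `C` is skew-symmetric,
`4 (x, b) = -(C x - 2 x, b) - (x, C b - 2 b)`. -/
lemma Lam.dvd_sum {q : ℤ} (hq : IsCoprime q 4) {x b : P1 → ℤ} (hx : Lam q x) (hb : Lam q b) :
    q ∣ ∑ ν, b ν * x ν := by
  have h1 : q ∣ ∑ μ, b μ * (∑ ν, C μ ν * x ν - 2 * x μ) :=
    Finset.dvd_sum (fun μ _ => Dvd.dvd.mul_left (hx μ) _)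
  have h2 : q ∣ ∑ μ, x μ * (∑ ν, C μ ν * b ν - 2 * b μ) :=
    Finset.dvd_sum (fun μ _ => Dvd.dvd.mul_left (hb μ) _)
  have h3 : ∑ μ, x μ * (∑ ν, C μ ν * b ν) = -∑ μ, b μ * (∑ ν, C μ ν * x ν) := by
    simp only [Finset.mul_sum]
    rw [Finset.sum_comm, ← Finset.sum_neg_distrib]
    refine Finset.sum_congr rfl (fun μ _ => ?_)
    rw [← Finset.sum_neg_distrib]
    exact Finset.sum_congr rfl (fun ν _ => by rw [C_skew μ ν]; ring)
  have h4 : 4 * ∑ ν, b ν * x ν = -(∑ μ, b μ * (∑ ν, C μ ν * x ν - 2 * x μ) +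
      ∑ μ, x μ * (∑ ν, C μ ν * b ν - 2 * b μ)) := by
    simp only [mul_sub, Finset.sum_sub_distrib]
    rw [h3]
    have e1 : ∑ μ, b μ * (2 * x μ) = 2 * ∑ ν, b ν * x ν := by
      rw [Finset.mul_sum]; exact Finset.sum_congr rfl (fun ν _ => by ring)
    have e2 : ∑ μ, x μ * (2 * b μ) = 2 * ∑ ν, b ν * x ν := by
      rw [Finset.mul_sum]; exact Finset.sum_congr rfl (fun ν _ => by ring)
    rw [e1, e2]; ring
  exact hq.dvd_of_dvd_mul_left (h4 ▸ (dvd_neg.2 (dvd_add h1 h2)))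

/-! ### Coordinates on the projective line -/

/-- The enumeration `∞, 0, 1, 2, …` of the projective line. -/
def pt : ℕ → P1
  | 0 => none
  | i + 1 => some (i : ZMod 31)

/-- The position of a point in the enumeration `pt`. -/
def idx : P1 → ℕ
  | none => 0
  | some a => a.val + 1

/-- A list of coefficients, as a vector on the projective line. -/
def vec (b : List ℤ) (ν : P1) : ℤ := b.getD (idx ν) 0

lemma pt_idx : ∀ ν, pt (idx ν) = ν := by decide +kernel

lemma idx_pt : ∀ i < 32, idx (pt i) = i := by decide +kernel

lemma idx_lt : ∀ ν, idx ν < 32 := by decide +kernel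

lemma sum_pt (f : P1 → ℤ) : ∑ i ∈ Finset.range 32, f (pt i) = ∑ ν, f ν :=
  Finset.sum_bij' (fun i _ => pt i) (fun ν _ => idx ν) (fun _ _ => Finset.mem_univ _)
    (fun ν _ => Finset.mem_range.2 (idx_lt ν)) (fun i hi => idx_pt i (Finset.mem_range.1 hi))
    (fun ν _ => pt_idx ν) (fun _ _ => rfl)

/-- The sequence of coordinates of a pair of vectors on the projective line. -/
def zz (s t : P1 → ℤ) (i : ℕ) : ℤ :=
  if i < 32 then s (pt i) else if i < 64 then t (pt (i - 32)) else 0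

lemma zz_shift (s t : P1 → ℤ) (i : ℕ) (hi : i < 32) : zz s t (i + 32) = t (pt i) := by
  simp [zz, hi]

lemma ev_zz (s t : P1 → ℤ) (b : List ℤ) (hb : b.length ≤ 32) :
    ev (zz s t) b = ∑ ν, vec b ν * s ν := by
  rw [ev_eq_sum b _ 32 hb, ← sum_pt]
  refine Finset.sum_congr rfl (fun i hi => ?_)
  rw [Finset.mem_range] at hi
  simp [zz, hi, vec, idx_pt i hi]

lemma ev_zz_shift (s t : P1 → ℤ) (b : List ℤ) (hb : b.length ≤ 32) :
    ev (fun i => zz s t (i + 32)) b = ∑ ν, vec b ν * t ν := by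
  rw [ev_eq_sum b _ 32 hb, ← sum_pt]
  refine Finset.sum_congr rfl (fun i hi => ?_)
  rw [Finset.mem_range] at hi
  simp only [zz_shift _ _ _ hi, vec, idx_pt i hi]

lemma sum_zz (s t : P1 → ℤ) : ∑ i ∈ Finset.range 32, zz s t i ^ 2 = ∑ ν, s ν ^ 2 := by
  rw [← sum_pt]
  exact Finset.sum_congr rfl (fun i hi => by simp [zz, Finset.mem_range.1 hi])

lemma sum_zz_shift (s t : P1 → ℤ) :
    ∑ i ∈ Finset.range 32, zz s t (i + 32) ^ 2 = ∑ ν, t ν ^ 2 := by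
  rw [← sum_pt]
  exact Finset.sum_congr rfl (fun i hi => by rw [zz_shift _ _ _ (Finset.mem_range.1 hi)])

/-! ### The bases consist of lattice vectors -/

/-- The rows of the matrix `C - 2`. -/
def row : ℕ → List ℤ
  | 0 => -2 :: List.replicate 31 1
  | m + 1 => -1 :: ((-2 :: lsmul (-1) chiL.tail).drop (31 - m) ++
      (-2 :: lsmul (-1) chiL.tail).take (31 - m))

lemma row_spec : ∀ μ ν, (row (idx μ)).getD (idx ν) 0 = C μ ν - if ν = μ then 2 else 0 := by
  decide +kernel

lemma row_length : ∀ μ, (row (idx μ)).length ≤ 32 := by decide +kernel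

/-- The test whether a list of length `32` lies in `Lam q`. -/
def mem (q : ℤ) (b : List ℤ) : Bool :=
  b.length == 32 && (List.range 32).all (fun i => ldot (row i) b % q == 0)

lemma mem_length {q : ℤ} {b : List ℤ} (h : mem q b = true) : b.length = 32 := by
  simp only [mem, Bool.and_eq_true, beq_iff_eq] at h; exact h.1

lemma mem_lam {q : ℤ} {b : List ℤ} (h : mem q b = true) : Lam q (vec b) := by
  simp only [mem, Bool.and_eq_true, beq_iff_eq, List.all_eq_true, List.mem_range] at h
  intro μ
  have h1 := Int.dvd_of_emod_eq_zero (h.2 (idx μ) (idx_lt μ))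
  have h2 : ldot (row (idx μ)) b = ∑ ν, (C μ ν - if ν = μ then 2 else 0) * vec b ν := by
    rw [ldot_eq_ev, ev_eq_sum _ _ 32 (row_length μ), ← sum_pt]
    refine Finset.sum_congr rfl (fun i hi => ?_)
    rw [← row_spec, vec, idx_pt i (Finset.mem_range.1 hi)]
  rw [h2] at h1
  convert h1 using 1
  simp only [sub_mul, Finset.sum_sub_distrib, ite_mul, zero_mul, Finset.sum_ite_eq',
    Finset.mem_univ, if_true]

/-- The test for glue vectors: `r ∈ Lam 7`, `b ∈ Lam 5` and `r ≡ b (mod 2)`. -/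
def glue (r b : List ℤ) : Bool :=
  mem 7 r && mem 5 b && (List.range 32).all (fun i => (r.getD i 0 - b.getD i 0) % 2 == 0)

lemma memS : (bSA ++ bSB).all (mem 7) = true := by decide +kernel

lemma memF : (bFA ++ bFB).all (mem 5) = true := by decide +kernel

lemma memT : (List.zip (rTA ++ rTB) (bTA ++ bTB)).all (fun p => glue p.1 p.2) = true := by
  decide +kernel

lemma bS_dvd {s t : P1 → ℤ} (hs : Lam 7 s) (a : Bool) : ∀ b ∈ bS a, (70 : ℤ) ∣ ev (zz s t) b := by
  intro b hb
  obtain ⟨b, hb', rfl⟩ := List.mem_map.1 hb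
  have hm : mem 7 b = true := List.all_eq_true.1 memS b (by
    rw [List.mem_append]; cases a
    exacts [Or.inl hb', Or.inr hb'])
  rw [ev_lsmul, ev_zz s t b (mem_length hm).le]
  exact mul_dvd_mul (a := (10 : ℤ)) (b := 10) dvd_rfl
    (Lam.dvd_sum (by norm_num) hs (mem_lam hm))

lemma DF_dvd {s t : P1 → ℤ} (hs : Lam 5 s) (a : Bool) :
    ∀ b ∈ (DF a).b1 ++ (DF a).b2, (5 : ℤ) ∣ ev (zz s t) b := by
  intro b hb
  have hm : mem 5 b = true := List.all_eq_true.1 memF b (by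
    rw [List.mem_append]
    cases a
    · left; simpa only [DF, Bool.false_eq_true, if_false, List.take_append_drop] using hb
    · right; simpa only [DF, if_true, List.take_append_drop] using hb)
  rw [ev_zz s t b (mem_length hm).le]
  exact Lam.dvd_sum (by norm_num) hs (mem_lam hm)

lemma bT_dvd {s t : P1 → ℤ} (hs : Lam 7 s) (ht : Lam 5 t) (hst : ∀ ν, 2 ∣ s ν - t ν) (a : Bool) :
    ∀ b ∈ bT a, (70 : ℤ) ∣ ev (zz s t) b := by
  intro b hb
  obtain ⟨r, b, hp, rfl⟩ : ∃ r b', (r, b') ∈ List.zip (rTA ++ rTB) (bTA ++ bTB) ∧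
      b = lsmul 5 r ++ lsmul 7 b' := by
    rw [List.zip_append (by decide +kernel)]
    cases a
    · simp only [bT, tbasis, ← List.map_uncurry_zip_eq_zipWith, Bool.false_eq_true, if_false] at hb
      obtain ⟨p, hp, rfl⟩ := List.mem_map.1 hb
      exact ⟨p.1, p.2, List.mem_append_left _ hp, rfl⟩
    · simp only [bT, tbasis, ← List.map_uncurry_zip_eq_zipWith, if_true] at hb
      obtain ⟨p, hp, rfl⟩ := List.mem_map.1 hb
      exact ⟨p.1, p.2, List.mem_append_right _ hp, rfl⟩
  have hg := List.all_eq_true.1 memT _ hp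
  simp only [glue, Bool.and_eq_true, List.all_eq_true, List.mem_range, beq_iff_eq] at hg
  obtain ⟨⟨hr, hb'⟩, hpar⟩ := hg
  have hl : (lsmul 5 r).length = 32 := by rw [lsmul, List.length_map, mem_length hr]
  rw [ev_append, hl, ev_lsmul, ev_lsmul, ev_zz s t r (mem_length hr).le,
    ev_zz_shift s t b (mem_length hb').le]
  obtain ⟨x, hx⟩ := Lam.dvd_sum (by norm_num) hs (mem_lam hr)
  obtain ⟨y, hy⟩ := Lam.dvd_sum (by norm_num) ht (mem_lam hb')
  obtain ⟨w, hw⟩ : (2 : ℤ) ∣ ∑ ν, vec r ν * s ν - ∑ ν, vec b ν * t ν := by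
    rw [← Finset.sum_sub_distrib]
    refine Finset.dvd_sum (fun ν _ => ?_)
    have h1 : (2 : ℤ) ∣ vec r ν - vec b ν := Int.dvd_of_emod_eq_zero (hpar (idx ν) (idx_lt ν))
    have e : vec r ν * s ν - vec b ν * t ν =
        (vec r ν - vec b ν) * s ν + vec b ν * (s ν - t ν) := by ring
    rw [e]
    exact dvd_add (Dvd.dvd.mul_right h1 _) (Dvd.dvd.mul_left (hst ν) _)
  rw [hx, hy] at hw ⊢
  omega

/-! ### Symmetries -/

/-- A signed permutation of the coordinates that commutes with `C`. -/
def Adm (σ : Equiv.Perm P1) (ε : P1 → ℤ) : Prop :=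
  (∀ ν, ε ν ^ 2 = 1) ∧ ∀ μ ν, C μ ν = ε μ * ε ν * C (σ μ) (σ ν)

/-- The action of a signed permutation on vectors. -/
def act (σ : Equiv.Perm P1) (ε x : P1 → ℤ) (ν : P1) : ℤ := ε ν * x (σ ν)

lemma act_lam {σ : Equiv.Perm P1} {ε : P1 → ℤ} (h : Adm σ ε) {q : ℤ} {x : P1 → ℤ} (hx : Lam q x) :
    Lam q (act σ ε x) := by
  intro μ
  have e : ∑ ν, C μ ν * act σ ε x ν - 2 * act σ ε x μ =
      ε μ * (∑ ν, C (σ μ) ν * x ν - 2 * x (σ μ)) := by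
    rw [← Equiv.sum_comp σ (fun ν => C (σ μ) ν * x ν), mul_sub, Finset.mul_sum]
    congr 1
    · refine Finset.sum_congr rfl (fun ν _ => ?_)
      rw [h.2 μ ν, act]
      linear_combination ε μ * C (σ μ) (σ ν) * x (σ ν) * h.1 ν
    · rw [act]; ring
  rw [e]
  exact Dvd.dvd.mul_left (hx _) _

lemma act_sq {σ : Equiv.Perm P1} {ε : P1 → ℤ} (h : Adm σ ε) (x : P1 → ℤ) :
    ∑ ν, act σ ε x ν ^ 2 = ∑ ν, x ν ^ 2 := by
  rw [← Equiv.sum_comp σ (fun ν => x ν ^ 2)]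
  exact Finset.sum_congr rfl (fun ν _ => by rw [act, mul_pow, h.1, one_mul])

lemma Adm.comp {σ τ : Equiv.Perm P1} {ε δ : P1 → ℤ} (h : Adm σ ε) (h' : Adm τ δ) :
    Adm (τ.trans σ) (fun ν => δ ν * ε (τ ν)) := by
  refine ⟨fun ν => by rw [mul_pow, h'.1, h.1, one_mul], fun μ ν => ?_⟩
  rw [h'.2 μ ν, h.2 (τ μ) (τ ν)]
  simp only [Equiv.trans_apply]
  ring

lemma Adm.abs {σ : Equiv.Perm P1} {ε : P1 → ℤ} (h : Adm σ ε) (ν : P1) : |ε ν| = 1 :=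
  by
  rcases sq_eq_one_iff.1 (h.1 ν) with e | e <;> rw [e] <;> rfl

lemma Adm.neg {σ : Equiv.Perm P1} {ε : P1 → ℤ} (h : Adm σ ε) : Adm σ (fun ν => -ε ν) :=
  ⟨fun ν => by rw [neg_pow, h.1]; norm_num, fun μ ν => by rw [h.2 μ ν]; ring⟩

/-- The translation by `c`. -/
def shift (c : ZMod 31) : Equiv.Perm P1 := Equiv.optionCongr (Equiv.addRight c)

lemma shift_adm (c : ZMod 31) : Adm (shift c) (fun _ => 1) := by
  refine ⟨fun _ => by norm_num, fun μ ν => ?_⟩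
  rcases μ with _ | μ <;> rcases ν with _ | ν <;> simp [shift, C]

/-- The map `a ↦ -1/a`. -/
def invFun : P1 → P1
  | none => some 0
  | some a => if a = 0 then none else some (-a ^ 29)

lemma invFun_invol : ∀ ν, invFun (invFun ν) = ν := by decide +kernel

/-- The permutation `a ↦ -1/a`. -/
def inv : Equiv.Perm P1 := ⟨invFun, invFun, invFun_invol, invFun_invol⟩

/-- The signs that go with `inv`. -/
def invSign : P1 → ℤ
  | none => 1
  | some a => if a = 0 then -1 else chi a

lemma inv_adm : Adm inv invSign := by
  constructor
  · decide +kernel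
  · have : ∀ μ ν, C μ ν = invSign μ * invSign ν * C (invFun μ) (invFun ν) := by decide +kernel
    exact this

/-- The admissible signed permutations act doubly transitively. -/
lemma exists_adm (ν₀ ν₁ : P1) (h : ν₀ ≠ ν₁) :
    ∃ σ ε, Adm σ ε ∧ σ none = ν₀ ∧ σ (some 0) = ν₁ := by
  rcases ν₀ with _ | a
  · obtain ⟨b, rfl⟩ := Option.ne_none_iff_exists'.1 h.symm
    exact ⟨_, _, shift_adm b, by simp [shift], by simp [shift]⟩
  · obtain ⟨c, hc⟩ : ∃ c, inv ((shift a).symm ν₁) = some c := by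
      rw [← Option.ne_none_iff_exists']
      intro hn
      have h1 : (shift a).symm ν₁ = some 0 := by
        have := congrArg invFun hn
        change invFun (invFun _) = _ at this
        rwa [invFun_invol] at this
      rw [Equiv.symm_apply_eq] at h1
      apply h
      rw [h1]; simp [shift]
    refine ⟨_, _, ((shift_adm a).comp inv_adm).comp (shift_adm c), ?_, ?_⟩
    · change shift a (invFun (shift c none)) = _
      simp [shift, invFun]
    · change shift a (invFun (shift c (some 0))) = _
      have h1 : shift c (some 0) = some c := by simp [shift]
      rw [h1, ← hc]
      change shift a (invFun (invFun _)) = _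
      rw [invFun_invol, Equiv.apply_symm_apply]

/-- Any two nonzero entries can be moved to the positions `∞` and `0` with positive signs. -/
lemma exists_act (x : P1 → ℤ) (ν₀ ν₁ : P1) (h : ν₀ ≠ ν₁) (h0 : x ν₀ ≠ 0) (h1 : x ν₁ ≠ 0) :
    ∃ σ ε, Adm σ ε ∧ 0 < act σ ε x none ∧ 0 < act σ ε x (some 0) ∧
      act σ ε x none + act σ ε x (some 0) = |x ν₀| + |x ν₁| := by
  obtain ⟨σ, ε, hA, e0, e1⟩ := exists_adm ν₀ ν₁ h
  obtain ⟨y0, hy0⟩ : ∃ y, act σ ε x none = y := ⟨_, rfl⟩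
  obtain ⟨y1, hy1⟩ : ∃ y, act σ ε x (some 0) = y := ⟨_, rfl⟩
  have k0 : |y0| = |x ν₀| := by
    rw [← hy0, act, e0, abs_mul, hA.abs, one_mul]
  have k1 : |y1| = |x ν₁| := by
    rw [← hy1, act, e1, abs_mul, hA.abs, one_mul]
  have p0 := abs_pos.2 h0
  have p1 := abs_pos.2 h1
  rw [← k0] at p0
  rw [← k1] at p1
  rw [← k0, ← k1]
  have hN := hA.neg
  have hB := hA.comp inv_adm
  have hneg : ∀ (τ : Equiv.Perm P1) (δ : P1 → ℤ) (ν : P1),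
      act τ (fun ν => -δ ν) x ν = -act τ δ x ν := fun τ δ ν => neg_mul _ _
  have b0 : act (inv.trans σ) (fun ν => invSign ν * ε (inv ν)) x none = y1 := by
    rw [← hy1]; change 1 * ε (some 0) * x (σ (some 0)) = _; rw [one_mul]; rfl
  have b1 : act (inv.trans σ) (fun ν => invSign ν * ε (inv ν)) x (some 0) = -y0 := by
    rw [← hy0]; change -1 * ε none * x (σ none) = _; rw [act]; ring
  rcases lt_or_gt_of_ne (abs_pos.1 p0) with s0 | s0 <;>
    rcases lt_or_gt_of_ne (abs_pos.1 p1) with s1 | s1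
  · refine ⟨_, _, hN, ?_⟩
    rw [hneg, hneg, hy0, hy1, abs_of_neg s0, abs_of_neg s1]; omega
  · refine ⟨_, _, hB, ?_⟩
    rw [b0, b1, abs_of_neg s0, abs_of_pos s1]; omega
  · refine ⟨_, _, hB.neg, ?_⟩
    rw [hneg, hneg, b0, b1, abs_of_pos s0, abs_of_neg s1]; omega
  · refine ⟨_, _, hA, ?_⟩
    rw [hy0, hy1, abs_of_pos s0, abs_of_pos s1]; omega

/-! ### Minimal norms -/

lemma mem_pairs (m B : ℕ) (i j : ℕ) (hi : 0 < i) (hj : 0 < j) (hi' : i ≤ 5) (hj' : j ≤ 5)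
    (h : m ≤ i + j) (h' : i ^ 2 + j ^ 2 ≤ B) : (i, j) ∈ pairs m B := by
  simp only [pairs, List.mem_filter, Bool.and_eq_true, decide_eq_true_eq]
  refine ⟨List.pair_mem_product.2 ⟨?_, ?_⟩, h, h'⟩
  · simp only [List.mem_cons, List.not_mem_nil, or_false]; omega
  · simp only [List.mem_cons, List.not_mem_nil, or_false]; omega

lemma sq_le_sum (x : P1 → ℤ) (ν : P1) : x ν ^ 2 ≤ ∑ ν, x ν ^ 2 :=
  Finset.single_le_sum (f := fun ν => x ν ^ 2) (fun _ _ => sq_nonneg _) (Finset.mem_univ ν)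

lemma sq_add_sq_le_sum (x : P1 → ℤ) {ν₀ ν₁ : P1} (h : ν₀ ≠ ν₁) :
    x ν₀ ^ 2 + x ν₁ ^ 2 ≤ ∑ ν, x ν ^ 2 := by
  rw [← Finset.sum_pair (f := fun ν => x ν ^ 2) h]
  exact Finset.sum_le_sum_of_subset_of_nonneg (Finset.subset_univ _) (fun ν _ _ => sq_nonneg _)

lemma zz_abs {s t : P1 → ℤ} (hs : ∑ ν, s ν ^ 2 ≤ 28) (ht : ∑ ν, t ν ^ 2 ≤ 28) (i : ℕ) :
    |zz s t i| ≤ 5 := by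
  have key : ∀ y : ℤ, y ^ 2 ≤ 28 → |y| ≤ 5 := by
    intro y hy
    rw [abs_le]
    constructor <;> nlinarith
  unfold zz
  split_ifs
  · exact key _ ((sq_le_sum s _).trans hs)
  · exact key _ ((sq_le_sum t _).trans ht)
  · simp

/-- Values at the first two points, as a pair of natural numbers in the range of the searches. -/
lemma exists_pair {s : P1 → ℤ} {m B : ℕ} (hB : B ≤ 28) (hs : ∑ ν, s ν ^ 2 ≤ B)
    (h0 : 0 < s none) (h1 : 0 < s (some 0)) (hm : (m : ℤ) ≤ s none + s (some 0)) :
    ∃ c ∈ pairs m B, ∀ t, zz s t 0 = c.1 ∧ zz s t 1 = c.2 := by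
  have h := (sq_add_sq_le_sum s (show (none : P1) ≠ some 0 by simp)).trans hs
  obtain ⟨i, hi⟩ := Int.eq_ofNat_of_zero_le h0.le
  obtain ⟨j, hj⟩ := Int.eq_ofNat_of_zero_le h1.le
  rw [hi] at h0
  rw [hj] at h1
  rw [hi, hj] at h hm
  have h' : i ^ 2 + j ^ 2 ≤ B := by exact_mod_cast h
  refine ⟨(i, j), mem_pairs m B i j (by omega) (by omega) (by nlinarith) (by nlinarith)
    (by omega) h', fun t => ⟨?_, ?_⟩⟩
  · simpa [zz, pt] using hi
  · simpa [zz, pt] using hj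

/-- A nonzero vector of norm at most `3 q` in `Lam q` can be moved to one whose first two
coordinates are positive: it has at least two nonzero coordinates, since a single one would be a
multiple of `q`. -/
lemma exists_normal {q : ℕ} (hq : 3 < q) (hq2 : IsCoprime (q : ℤ) 2) {x : P1 → ℤ} (hx : Lam q x)
    (hn : ∑ ν, x ν ^ 2 ≤ q * 3) (h0 : x ≠ 0) :
    ∃ y, Lam q y ∧ ∑ ν, y ν ^ 2 ≤ q * 3 ∧ 0 < y none ∧ 0 < y (some 0) := by
  obtain ⟨ν₀, h0⟩ := Function.ne_iff.1 h0
  obtain ⟨ν₁, h01, h1⟩ : ∃ ν₁, ν₀ ≠ ν₁ ∧ x ν₁ ≠ 0 := by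
    by_contra! hc
    have h2 := hx ν₀
    rw [Finset.sum_eq_zero, zero_sub, dvd_neg] at h2
    · obtain ⟨k, hk⟩ := hq2.dvd_of_dvd_mul_left h2
      have h3 := (sq_le_sum x ν₀).trans hn
      have hk0 : k ≠ 0 := by
        rintro rfl
        rw [mul_zero] at hk
        exact h0 hk
      have hk1 : 1 ≤ k ^ 2 := by have := sq_pos_of_ne_zero hk0; omega
      rw [hk, mul_pow] at h3
      have hq' : (3 : ℤ) < q := by exact_mod_cast hq
      nlinarith
    · intro ν _
      by_cases e : ν₀ = ν
      · subst e
        have : C ν₀ ν₀ = 0 := by have := C_skew ν₀ ν₀; omega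
        rw [this, zero_mul]
      · rw [hc ν e, mul_zero]
  obtain ⟨σ, ε, hA, p0, p1, -⟩ := exists_act x ν₀ ν₁ h01 h0 h1
  exact ⟨_, act_lam hA hx, by rw [act_sq hA]; exact hn, p0, p1⟩

lemma min5 {x : P1 → ℤ} (hx : Lam 5 x) (hn : ∑ ν, x ν ^ 2 ≤ 15) : x = 0 := by
  by_contra h0
  obtain ⟨y, hy, hn, p0, p1⟩ := exists_normal (q := 5) (by norm_num) (by norm_num) hx
    (by push_cast; exact hn) h0
  push_cast at hn
  obtain ⟨c, hc, hz⟩ := exists_pair (m := 2) (B := 15) (by norm_num) hn p0 p1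
    (by push_cast; linarith)
  have hd := fun a => DF_dvd (t := 0) hy a
  exact no_short 5 5 3 (by norm_num) (by norm_num) (by norm_num) (wF false) (wF true) c
    (DF false) (DF true) 0 (okF false) (okF true) (goodF false) (goodF true) goodF' (zz y 0)
    (zz_abs (hn.trans (by norm_num)) (by simp)) (hz 0).1 (hz 0).2 (by rw [sum_zz]; exact hn)
    (hd false) (hd true) (List.all_eq_true.1 (runF false) c hc) (List.all_eq_true.1 (runF true) c hc)

lemma min7 {x : P1 → ℤ} (hx : Lam 7 x) (hn : ∑ ν, x ν ^ 2 ≤ 21) : x = 0 := by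
  by_contra h0
  obtain ⟨y, hy, hn, p0, p1⟩ := exists_normal (q := 7) (by norm_num) (by norm_num) hx
    (by push_cast; exact hn) h0
  push_cast at hn
  obtain ⟨c, hc, hz⟩ := exists_pair (m := 2) (B := 21) (by norm_num) hn p0 p1
    (by push_cast; linarith)
  have hd : ∀ a, ∀ b ∈ (DS a false).b1 ++ (DS a false).b2, (70 : ℤ) ∣ ev (zz y 0) b := by
    intro a
    have e : (DS a false).b1 ++ (DS a false).b2 = bS a := List.take_append_drop _ _
    rw [e]
    exact bS_dvd hy a
  exact no_short 7 70 3 (by norm_num) (by norm_num) (by norm_num) (wS false false) (wS true false) c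
    (DS false false) (DS true false) 32 (okS false false) (okS true false) (goodS false)
    (goodS true) goodS' (zz y 0) (zz_abs (hn.trans (by norm_num)) (by simp)) (hz 0).1 (hz 0).2
    (by rw [sum_zz]; exact hn) (hd false) (hd true) (List.all_eq_true.1 (runS false) c hc)
    (List.all_eq_true.1 (runS true) c hc)

/-! ### Pairs of norm `(28, 20)` -/

/-- If `s ≡ t (mod 2)`, `∑ s² = 28` and `∑ t² = 20`, then two absolute values of `s` add up to at
least `4`: otherwise all entries of `s` but one are at most `1` in absolute value, hence bounded by
those of `t`. -/
lemma exists_large {s t : P1 → ℤ} (hs : ∑ ν, s ν ^ 2 = 28) (ht : ∑ ν, t ν ^ 2 = 20)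
    (hst : ∀ ν, 2 ∣ s ν - t ν) :
    ∃ ν₀ ν₁, ν₀ ≠ ν₁ ∧ s ν₀ ≠ 0 ∧ s ν₁ ≠ 0 ∧ 4 ≤ |s ν₀| + |s ν₁| := by
  by_contra! hc
  obtain ⟨ν', hν'⟩ : ∃ ν', ∀ ν, |s ν| ≤ |s ν'| := by
    obtain ⟨ν', -, h⟩ := Finset.exists_max_image Finset.univ (fun ν => |s ν|)
      ⟨none, Finset.mem_univ _⟩
    exact ⟨ν', fun ν => h ν (Finset.mem_univ ν)⟩
  rcases le_or_gt 3 |s ν'| with h3 | h3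
  · have h0 : ∀ ν, ν ≠ ν' → s ν = 0 := by
      intro ν hν
      by_contra h
      have := hc ν' ν hν.symm (by intro e; rw [e] at h3; simp at h3) h
      have := abs_pos.2 h
      omega
    rw [Finset.sum_eq_single ν' (fun ν _ hν => by rw [h0 ν hν]; rfl)
      (fun h => absurd (Finset.mem_univ _) h)] at hs
    rcases le_or_gt 6 |s ν'| with h | h
    · have := sq_abs (s ν'); nlinarith
    · rw [← sq_abs] at hs
      interval_cases |s ν'| <;> omega
  · have hle : ∀ ν, s ν ^ 2 ≤ t ν ^ 2 + if ν = ν' then 4 else 0 := by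
      intro ν
      have hm : |s ν| ≤ 2 := (hν' ν).trans (by omega)
      have key : |s ν| ≤ 1 → s ν ^ 2 ≤ t ν ^ 2 := by
        intro h1
        have h2 := hst ν
        rw [abs_le] at h1
        obtain ⟨h1, h1'⟩ := h1
        by_cases e : t ν = 0
        · have : s ν = 0 := by omega
          rw [this, e]
        · have := sq_pos_of_ne_zero e
          nlinarith
      split_ifs with e
      · have := sq_nonneg (t ν)
        rw [← sq_abs (s ν)]
        nlinarith [abs_nonneg (s ν)]
      · rw [add_zero]
        apply key
        by_contra h1
        have h2 := hν' ν
        have := hc ν ν' e (by intro h; rw [h] at h1; simp at h1)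
          (by intro h; rw [h, abs_zero] at h2; omega)
        omega
    have := Finset.sum_le_sum (fun ν (_ : ν ∈ Finset.univ) => hle ν)
    rw [Finset.sum_add_distrib, Finset.sum_ite_eq', hs, ht] at this
    simp at this

/-- There is no pair with `s ∈ Lam 7`, `t ∈ Lam 5`, `s ≡ t (mod 2)` and norms `28` and `20`. -/
lemma no_pair {s t : P1 → ℤ} (hs : Lam 7 s) (ht : Lam 5 t) (hst : ∀ ν, 2 ∣ s ν - t ν)
    (hs2 : ∑ ν, s ν ^ 2 = 28) (ht2 : ∑ ν, t ν ^ 2 = 20) : False := by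
  obtain ⟨ν₀, ν₁, h01, h0, h1, h4⟩ := exists_large hs2 ht2 hst
  obtain ⟨σ, ε, hA, p0, p1, hsum⟩ := exists_act s ν₀ ν₁ h01 h0 h1
  have hs' := act_lam hA hs
  have ht' := act_lam hA ht
  have hst' : ∀ ν, 2 ∣ act σ ε s ν - act σ ε t ν := by
    intro ν
    rw [act, act, ← mul_sub]
    exact Dvd.dvd.mul_left (hst _) _
  rw [← act_sq hA s] at hs2
  rw [← act_sq hA t] at ht2
  rw [← hsum] at h4
  generalize act σ ε s = s at *
  generalize act σ ε t = t at *
  obtain ⟨c, hc, hz⟩ := exists_pair (m := 4) (B := 28) (by norm_num) (by rw [hs2]; norm_num) p0 p1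
    h4
  refine no_long wS DS ET uS1 uS2 uT1 uT2 bS c (fun _ _ => rfl) (fun _ _ => rfl) (fun _ => rfl)
    (fun _ => rfl) (fun a t => List.take_append_drop _ _) (by decide +kernel) okS okT goodS goodS'
    goodT goodT' (zz s t) (zz_abs hs2.le (by rw [ht2]; norm_num)) (hz t).1 (hz t).2
    (by rw [sum_zz, hs2]; norm_num) (by rw [sum_zz_shift, ht2]; norm_num) (bS_dvd hs')
    (fun a b hb => bT_dvd hs' ht' hst' a b ?_) (fun a t => List.all_eq_true.1 (runT a t) c hc)
  rwa [ET, List.take_append_drop] at hb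

/-- The lattice statement behind the theorem: a pair `s ∈ Lam 7`, `t ∈ Lam 5` with `s ≡ t (mod 2)`
and `∑ s² / 14 + ∑ t² / 10 ≤ 4` vanishes. -/
lemma pair_zero {s t : P1 → ℤ} (hs : Lam 7 s) (ht : Lam 5 t) (hst : ∀ ν, 2 ∣ s ν - t ν)
    (h : 5 * ∑ ν, s ν ^ 2 + 7 * ∑ ν, t ν ^ 2 ≤ 280) : s = 0 ∧ t = 0 := by
  have hS : (0 : ℤ) ≤ ∑ ν, s ν ^ 2 := Finset.sum_nonneg (fun ν _ => sq_nonneg _)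
  have hT : (0 : ℤ) ≤ ∑ ν, t ν ^ 2 := Finset.sum_nonneg (fun ν _ => sq_nonneg _)
  obtain ⟨A, hA⟩ : (7 : ℤ) ∣ ∑ ν, s ν ^ 2 := by
    simpa only [pow_two] using Lam.dvd_sum (by norm_num) hs hs
  obtain ⟨B, hB⟩ : (5 : ℤ) ∣ ∑ ν, t ν ^ 2 := by
    simpa only [pow_two] using Lam.dvd_sum (by norm_num) ht ht
  have halve : ∀ {q : ℤ} {x : P1 → ℤ}, IsCoprime q 2 → Lam q x → (∀ ν, 2 ∣ x ν) →
      ∃ y, Lam q y ∧ ∀ ν, x ν = 2 * y ν := by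
    intro q x hq hx h2
    choose y hy using h2
    refine ⟨y, fun μ => ?_, hy⟩
    have h3 := hx μ
    have e : ∑ ν, C μ ν * x ν - 2 * x μ = 2 * (∑ ν, C μ ν * y ν - 2 * y μ) := by
      rw [mul_sub, Finset.mul_sum, hy μ]
      congr 1
      exact Finset.sum_congr rfl (fun ν _ => by rw [hy ν]; ring)
    rw [e] at h3
    exact hq.dvd_of_dvd_mul_left h3
  have hsum : ∀ {x y : P1 → ℤ}, (∀ ν, x ν = 2 * y ν) → ∑ ν, x ν ^ 2 = 4 * ∑ ν, y ν ^ 2 := by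
    intro x y hxy
    rw [Finset.mul_sum]
    exact Finset.sum_congr rfl (fun ν _ => by rw [hxy ν]; ring)
  by_cases hA3 : A ≤ 3
  · have s0 : s = 0 := min7 hs (by omega)
    refine ⟨s0, ?_⟩
    obtain ⟨y, hy, hty⟩ := halve (by norm_num) ht (fun ν => by
      have := hst ν; rw [s0, Pi.zero_apply, zero_sub, dvd_neg] at this; exact this)
    have := hsum hty
    have y0 : y = 0 := min5 hy (by omega)
    funext ν
    rw [hty, y0]; rfl
  by_cases hB3 : B ≤ 3
  · have t0 : t = 0 := min5 ht (by omega)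
    refine ⟨?_, t0⟩
    obtain ⟨y, hy, hsy⟩ := halve (by norm_num) hs (fun ν => by
      have := hst ν; rw [t0, Pi.zero_apply, sub_zero] at this; exact this)
    have := hsum hsy
    have y0 : y = 0 := min7 hy (by omega)
    funext ν
    rw [hsy, y0]; rfl
  exact absurd (no_pair hs ht hst (by omega) (by omega)) not_false

/-! ### From codewords to lattice vectors -/

lemma Lam.add {q : ℤ} {x y : P1 → ℤ} (hx : Lam q x) (hy : Lam q y) :
    Lam q (fun ν => x ν + y ν) := by
  intro μ
  have e : ∑ ν, C μ ν * (x ν + y ν) - 2 * (x μ + y μ) =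
      (∑ ν, C μ ν * x ν - 2 * x μ) + (∑ ν, C μ ν * y ν - 2 * y μ) := by
    simp only [mul_add, Finset.sum_add_distrib]; ring
  rw [e]
  exact dvd_add (hx μ) (hy μ)

lemma Lam.neg {q : ℤ} {x : P1 → ℤ} (hx : Lam q x) : Lam q (fun ν => -x ν) := by
  intro μ
  have e : ∑ ν, C μ ν * -x ν - 2 * -x μ = -(∑ ν, C μ ν * x ν - 2 * x μ) := by
    simp only [mul_neg, Finset.sum_neg_distrib]; ring
  rw [e]
  exact (dvd_neg).2 (hx μ)

lemma Lam.of_dvd {q : ℤ} {x : P1 → ℤ} (hx : ∀ ν, q ∣ x ν) : Lam q x := fun μ =>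
  dvd_sub (Finset.dvd_sum (fun ν _ => Dvd.dvd.mul_left (hx ν) _)) (Dvd.dvd.mul_left (hx μ) _)

lemma Lam.congr {q : ℤ} {x y : P1 → ℤ} (hx : Lam q x) (h : ∀ ν, q ∣ y ν - x ν) : Lam q y := by
  have := hx.add (Lam.of_dvd h)
  simpa only [add_sub_cancel] using this

/-- Integer representatives of the coordinates of `vgen μ`. -/
def gI (μ : ZMod 31) : P1 → ℤ
  | none => 2
  | some ν => if ν = μ then 1 else if chi (μ - ν) = 1 then 7 else 3

lemma gI_cast (μ : ZMod 31) (ν : P1) : ((gI μ ν : ℤ) : ZMod 35) = vgen μ ν := by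
  rcases ν with _ | ν
  · simp [gI, vgen]
  · by_cases h : ν = μ
    · simp [gI, vgen, h]
    · have h' : μ - ν ≠ 0 := fun e => h (sub_eq_zero.1 e).symm
      simp only [gI, vgen, h, if_false, chi_spec, h']
      by_cases hs : IsSquare (μ - ν)
      · simp [hs]
      · simp [hs]

/-- The sign at the point `∞` by which the residues modulo `5` of the code differ from `Lam 5`. -/
def sg : P1 → ℤ
  | none => -1
  | some _ => 1

lemma sg_sq : ∀ ν, sg ν * sg ν = 1 := by decide +kernel

lemma vec_map (f : P1 → ℤ) : vec ((List.range 32).map (fun i => f (pt i))) = f := by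
  funext ν
  have h := idx_lt ν
  simp [vec, h, pt_idx]

lemma gI_mem7 : ∀ μ, mem 7 ((List.range 32).map (fun i => gI μ (pt i))) = true := by
  decide +kernel

lemma gI_mem5 : ∀ μ, mem 5 ((List.range 32).map (fun i => sg (pt i) * gI μ (pt i))) = true := by
  decide +kernel

/-- Integer lifts of codewords lie in `Lam q`, up to fixed coordinate factors `δ`, as soon as this
holds for the generators. -/
lemma code_lam {q : ℤ} (hq : q ∣ 35) (δ : P1 → ℤ) (hg : ∀ μ, Lam q (fun ν => δ ν * gI μ ν))
    {w : P1 → ZMod 35} (hw : w ∈ Qcode) :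
    ∀ x : P1 → ℤ, (∀ ν, ((x ν : ℤ) : ZMod 35) = w ν) → Lam q (fun ν => δ ν * x ν) := by
  have hd : ∀ a b : ℤ, (a : ZMod 35) = (b : ZMod 35) → q ∣ a - b := by
    intro a b h
    rw [← sub_eq_zero, ← Int.cast_sub, ZMod.intCast_zmod_eq_zero_iff_dvd] at h
    exact hq.trans h
  induction hw using AddSubgroup.closure_induction with
  | mem w hw =>
    obtain ⟨μ, rfl⟩ := hw
    intro x hx
    refine (hg μ).congr (fun ν => ?_)
    rw [← mul_sub]
    exact Dvd.dvd.mul_left (hd _ _ (by rw [hx, gI_cast])) _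
  | zero =>
    intro x hx
    refine Lam.of_dvd (fun ν => Dvd.dvd.mul_left ?_ _)
    simpa using hd (x ν) 0 (by rw [hx]; simp)
  | add v w _ _ hv hw =>
    intro x hx
    choose y hy using fun ν => ZMod.intCast_surjective (v ν)
    refine ((hv y hy).add (hw (fun ν => x ν - y ν) (fun ν => ?_))).congr (fun ν => ?_)
    · rw [Int.cast_sub, hx, hy, Pi.add_apply, add_sub_cancel_left]
    · have e : δ ν * x ν - (δ ν * y ν + δ ν * (x ν - y ν)) = 0 := by ring
      rw [e]; exact dvd_zero q
  | neg w _ hw =>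
    intro x hx
    refine (hw (fun ν => -x ν) (fun ν => ?_)).neg.congr (fun ν => ?_)
    · rw [Int.cast_neg, hx, Pi.neg_apply, neg_neg]
    · have e : δ ν * x ν - -(δ ν * -x ν) = 0 := by ring
      rw [e]; exact dvd_zero q

/-- The two orthogonal coordinates `s = ⟨x, e₁ + e₂⟩` and `t = ⟨x, e₁ - e₂⟩` of a vector `x` of the
coset `n u + R`. -/
lemma exists_coords {n : ZMod 35} {c : ℚ} (h : c ∈ normSet n) :
    ∃ m s t : ℤ, (m : ZMod 35) = n ∧ c = (5 * s ^ 2 + 7 * t ^ 2) / 70 ∧ 2 ∣ s - t ∧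
      7 ∣ s - m ∧ 5 ∣ t + m := by
  obtain ⟨x, -, ⟨m, hm, hx⟩, rfl⟩ := h
  obtain ⟨k, hk⟩ := hx 0
  obtain ⟨l, hl⟩ := hx 1
  simp only [Pi.sub_apply, Pi.smul_apply, uvec, smul_eq_mul, Matrix.cons_val_zero,
    Matrix.cons_val_one] at hk hl
  refine ⟨m, 8 * m + 7 * k + 7 * l, 4 * m + 5 * k - 5 * l, hm, ?_, by omega, by omega, by omega⟩
  have e0 : x 0 = k + m * (34 / 35) := by linarith
  have e1 : x 1 = l + m * (6 / 35) := by linarith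
  rw [B2, e0, e1]
  push_cast
  ring

end QR31

/-- There is no nonzero codeword `w ∈ Q` with `Σ_{ν ∈ P¹(F₃₁)} λ(w(ν)) ≤ 4`, where
`λ(n) = min {⟨x,x⟩ : x ∈ R∨, x ≡ n·u (mod R)}`. -/
theorem stmt_9 (lam : ZMod 35 → ℚ) (hlam : ∀ n : ZMod 35, IsLeast (normSet n) (lam n)) :
    ¬ ∃ w ∈ Qcode, w ≠ 0 ∧ (∑ ν : P1, lam (w ν)) ≤ 4 := by
  rintro ⟨w, hw, hw0, hle⟩
  choose m s t hm hc hst hs ht using fun ν => QR31.exists_coords (hlam (w ν)).1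
  have lm7 : QR31.Lam 7 m := by
    have h := QR31.code_lam (q := 7) (by norm_num) (fun _ => 1)
      (fun μ => by
        simp only [one_mul]
        exact QR31.vec_map (QR31.gI μ) ▸ QR31.mem_lam (QR31.gI_mem7 μ)) hw m hm
    simpa only [one_mul] using h
  have lm5 : QR31.Lam 5 (fun ν => QR31.sg ν * m ν) :=
    QR31.code_lam (q := 5) (by norm_num) QR31.sg
      (fun μ => QR31.vec_map (fun ν => QR31.sg ν * QR31.gI μ ν) ▸
        QR31.mem_lam (QR31.gI_mem5 μ)) hw m hm
  have ls : QR31.Lam 7 s := lm7.congr hs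
  have lt : QR31.Lam 5 (fun ν => QR31.sg ν * t ν) := lm5.neg.congr (fun ν => by
    rw [sub_neg_eq_add, ← mul_add]; exact Dvd.dvd.mul_left (ht ν) _)
  have par : ∀ ν, 2 ∣ s ν - QR31.sg ν * t ν := by
    intro ν
    have h := hst ν
    rcases ν with _ | ν
    · change 2 ∣ s none - -1 * t none
      omega
    · change 2 ∣ s (some ν) - 1 * t (some ν)
      omega
  have hnorm : 5 * ∑ ν, s ν ^ 2 + 7 * ∑ ν, (QR31.sg ν * t ν) ^ 2 ≤ 280 := by
    have e : ∀ ν, (QR31.sg ν * t ν) ^ 2 = t ν ^ 2 := fun ν => by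
      rw [mul_pow, pow_two (QR31.sg ν), QR31.sg_sq, one_mul]
    simp only [e]
    simp only [hc, ← Finset.sum_div] at hle
    rw [div_le_iff₀ (by norm_num), Finset.sum_add_distrib, ← Finset.mul_sum, ← Finset.mul_sum] at hle
    norm_num at hle
    exact_mod_cast hle
  obtain ⟨s0, t0⟩ := QR31.pair_zero ls lt par hnorm
  apply hw0
  funext ν
  have h1 := hs ν
  have h2 := ht ν
  have h3 : t ν = 0 := by
    have := congrFun t0 ν
    simp only [Pi.zero_apply] at this
    rcases mul_eq_zero.1 this with h | h
    · have := QR31.sg_sq ν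
      rw [h] at this
      norm_num at this
    · exact h
  rw [s0, Pi.zero_apply] at h1
  rw [h3] at h2
  rw [← hm ν, Pi.zero_apply, ZMod.intCast_zmod_eq_zero_iff_dvd]
  push_cast
  omega
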